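/- arXiv:1609.07017 — 2 statements merged into one kernel-verified Lean document; each statement's English description precedes it below -/
import Mathlib

section
/- Let R be a regular Noetherian ring (every localization of R at a prime ideal is a regular local ring). Then for all finitely generated R-modules N ⊆ M, the robust closure of N in M equals N. -/
set_option synthInstance.maxHeartbeats 1000000
set_option maxHeartbeats 1000000
open scoped BigOperators ENNReal TensorProduct

universe u

/-- A filtration of `M` of length `h` whose factors are cyclic modules killed by `J`. -/
def HasQLFiltration (S : Type u) [CommRing S] (J : Ideal S)
    (M : Type u) [AddCommGroup M] [Module S M] (h : ℕ) : Prop :=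
  ∃ c : Fin (h + 1) → Submodule S M,
    Monotone c ∧ c 0 = ⊥ ∧ c (Fin.last h) = ⊤ ∧
    ∀ i : Fin h,
      (∃ m : M, c i.succ = c i.castSucc ⊔ Submodule.span S {m}) ∧
      ∀ a ∈ J, ∀ x ∈ c i.succ, a • x ∈ c i.castSucc

/-- The `J`-quasilength of `M`. -/
noncomputable def quasilength (S : Type u) [CommRing S] (J : Ideal S)
    (M : Type u) [AddCommGroup M] [Module S M] : ℕ∞ :=
  sInf {n : ℕ∞ | ∃ h : ℕ, n = (h : ℕ∞) ∧ HasQLFiltration S J M h}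

/-- `x₁, …, x_d` is a Q-sequence in `S`. -/
def IsQSequence {d : ℕ} {S : Type u} [CommRing S] (x : Fin d → S) : Prop :=
  Ideal.span (Set.range x) ≠ ⊤ ∧
  ∀ t : ℕ, 0 < t →
    ((t : ℕ∞) ^ d) ≤ quasilength S (Ideal.span (Set.range x))
      (S ⧸ Ideal.span (Set.range fun i => x i ^ t))

/-- `T` is a robust algebra over the (complete local domain) `D`: the image in `T`
of every system of parameters of `D` is a Q-sequence in `T`. -/
def IsRobustOver (D : Type u) [CommRing D] (T : Type u) [CommRing T] [Algebra D T] : Prop :=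
  ∀ (d : ℕ) (x : Fin d → D), ringKrullDim D = d →
    (Ideal.span (Set.range x)).radical.IsMaximal →
    IsQSequence (fun i => algebraMap D T (x i))

/-- `D` is a complete local domain of `R`, i.e. `D ≅ (R_m)^∧ / q` (compatibly with the
structure maps) for some maximal ideal `m` of `R` and minimal prime `q` of `(R_m)^∧`. -/
def IsCompleteLocalDomainOf (R : Type u) [CommRing R] (D : Type u) [CommRing D]
    [Algebra R D] : Prop :=
  ∃ (m : Ideal R) (hm : m.IsMaximal),
    haveI : m.IsPrime := hm.isPrime
    ∃ q ∈ minimalPrimes (AdicCompletion (IsLocalRing.maximalIdeal (Localization.AtPrime m))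
        (Localization.AtPrime m)),
      ∃ e : D ≃+* (AdicCompletion (IsLocalRing.maximalIdeal (Localization.AtPrime m))
          (Localization.AtPrime m) ⧸ q),
        ∀ r : R, e (algebraMap R D r) =
          Ideal.Quotient.mk q (algebraMap (Localization.AtPrime m)
            (AdicCompletion (IsLocalRing.maximalIdeal (Localization.AtPrime m))
              (Localization.AtPrime m)) (algebraMap R (Localization.AtPrime m) r))

/-- `T` is a robust `R`-algebra: `D ⊗_R T` is robust over `D` for every complete
local domain `D` of `R`. -/
def IsRobustAlgebra (R : Type u) [CommRing R] (T : Type u) [CommRing T] [Algebra R T] : Prop :=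
  ∀ (D : Type u) [CommRing D] [Algebra R D], IsCompleteLocalDomainOf R D →
    IsRobustOver D (D ⊗[R] T)

/-- `S` is a forcing algebra for `(M, N, u)`. -/
def IsForcingAlgebra (D : Type u) [CommRing D] (M : Type u) [AddCommGroup M] [Module D M]
    (N : Submodule D M) (u : M) (S : Type u) [CommRing S] [Algebra D S] : Prop :=
  (1 : S) ⊗ₜ[D] u ∈ N.baseChange S

/-- The immediate robust closure `N^▫` of `N` in `M` (over a complete local domain `D`):
the submodule generated by `N` and all `u` admitting a robust forcing algebra. -/
noncomputable def immediateRobustClosure (D : Type u) [CommRing D] (M : Type u)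
    [AddCommGroup M] [Module D M] (N : Submodule D M) : Submodule D M :=
  N ⊔ Submodule.span D {u : M |
    ∃ (S : Type u) (_ : CommRing S) (_ : Algebra D S),
      IsForcingAlgebra D M N u S ∧ IsRobustOver D S}

/-- The robust closure of `N` in `M` over a complete local domain `D`:
the (stabilizing) union of the iterated immediate robust closures `N^(j)`. -/
noncomputable def robustClosureCLD (D : Type u) [CommRing D] (M : Type u)
    [AddCommGroup M] [Module D M] (N : Submodule D M) : Submodule D M :=
  ⨆ j : ℕ, (immediateRobustClosure D M)^[j] N

/-- `u` lies in the robust closure of `N` in `M` over the Noetherian ring `R`: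
for every complete local domain `D` of `R`, the image of `u` in `D ⊗_R M` lies in the
robust closure, computed over `D`, of the image of `D ⊗_R N`. -/
def MemRobustClosure (R : Type u) [CommRing R] (M : Type u) [AddCommGroup M] [Module R M]
    (N : Submodule R M) (u : M) : Prop :=
  ∀ (D : Type u) [CommRing D] [Algebra R D], IsCompleteLocalDomainOf R D →
    (1 : D) ⊗ₜ[R] u ∈ robustClosureCLD D (D ⊗[R] M) (N.baseChange D)

/-! Let `D` be a regular local ring with regular system of parameters `x`. Each `D ⧸ (xᵢ ^ (k + 1))`
is self-injective with socle generated by the image of `∏ i, xᵢ ^ k`. A nonzero element `u` of a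
finitely generated `D`-module `Q` is nonzero in `Q ⧸ m ^ k Q` for some `k`, and self-injectivity
provides a map `Q → D ⧸ (xᵢ ^ (k + 1))` sending `u` to that socle generator. In a robust algebra `S`
the images of `x` form a Q-sequence, so `∏ i, xᵢ ^ k ∉ (xᵢ ^ (k + 1)) S`; therefore `1 ⊗ u ≠ 0` in
`S ⊗ Q`. For `Q = M ⧸ N` this says that no robust algebra forces an element outside `N` into `N`.
The general case follows because the completed localizations of a regular ring are regular local
domains, faithfully flat over the localizations. -/

section Quasilength

variable {S M : Type u} [CommRing S] [AddCommGroup M] [Module S M] {s : Set S}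

lemma HasQLFiltration.of_span_range_eq_top {h : ℕ} {v : Fin h → M}
    (hspan : Submodule.span S (Set.range v) = ⊤)
    (hv : ∀ a ∈ s, ∀ i, a • v i ∈ Submodule.span S (v '' Set.Iio i)) :
    HasQLFiltration S (Ideal.span s) M h := by
  let c (k : Fin (h + 1)) : Submodule S M := Submodule.span S (v '' {i | i.castSucc < k})
  have hsucc (i : Fin h) : {j : Fin h | j.castSucc < i.succ} =
      insert i {j | j.castSucc < i.castSucc} := by
    ext j; simp [le_iff_eq_or_lt]
  have hsmul (i : Fin h) : Ideal.span s • c i.succ ≤ c i.castSucc := by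
    rw [Ideal.span, Submodule.span_smul_span, Submodule.span_le]
    rintro _ ⟨a, ha, _, ⟨j, hj, rfl⟩, rfl⟩
    refine Submodule.span_mono (Set.image_mono fun l (hl : l < j) ↦ ?_) (hv a ha j)
    exact Fin.castSucc_lt_castSucc_iff.2 (hl.trans_le (Fin.castSucc_lt_succ_iff.1 hj))
  refine ⟨c, fun k l hkl ↦ ?_, by simp [c], by simpa [c, Fin.castSucc_lt_last] using hspan,
    fun i ↦ ⟨⟨v i, ?_⟩, fun a ha x hx ↦ hsmul i (Submodule.smul_mem_smul ha hx)⟩⟩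
  · exact Submodule.span_mono (Set.image_mono fun i hi ↦ lt_of_lt_of_le hi hkl)
  · simp only [c, hsucc i, Set.image_insert_eq, Submodule.span_insert, sup_comm]

variable {ι : Type*} [Fintype ι] [PartialOrder ι] {v : ι → M}

lemma quasilength_le_card (hspan : Submodule.span S (Set.range v) = ⊤)
    (hv : ∀ a ∈ s, ∀ i, a • v i ∈ Submodule.span S (v '' Set.Iio i)) :
    quasilength S (Ideal.span s) M ≤ Fintype.card ι := by
  let : Fintype (LinearExtension ι) := inferInstanceAs (Fintype ι)
  let e : Fin (Fintype.card ι) ≃o LinearExtension ι := Fintype.orderIsoFinOfCardEq _ rfl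
  let w : LinearExtension ι → M := v
  refine sInf_le ⟨Fintype.card ι, rfl, .of_span_range_eq_top (v := w ∘ e) ?_ fun a ha k ↦ ?_⟩
  · rwa [e.surjective.range_comp]
  · refine Submodule.span_mono ?_ (hv a ha (e k))
    rintro _ ⟨i, hi, rfl⟩
    have hlt : toLinearExtension i < e k :=
      (toLinearExtension.monotone hi.le).lt_of_ne hi.ne
    exact ⟨e.symm (toLinearExtension i), e.symm_apply_lt.2 hlt, congrArg w (e.apply_symm_apply _)⟩

lemma quasilength_lt_card_of_eq_zero (hspan : Submodule.span S (Set.range v) = ⊤)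
    (hv : ∀ a ∈ s, ∀ i, a • v i ∈ Submodule.span S (v '' Set.Iio i)) {i₀ : ι} (hi₀ : v i₀ = 0) :
    quasilength S (Ideal.span s) M < Fintype.card ι := by
  classical
  let w (i : {i // i ≠ i₀}) : M := v i
  have hmem (T : Set ι) :
      Submodule.span S (v '' T) ≤ Submodule.span S (w '' {i | (i : ι) ∈ T}) := by
    rw [Submodule.span_le]
    rintro _ ⟨i, hi, rfl⟩
    by_cases h : i = i₀
    · simp [h, hi₀]
    · exact Submodule.subset_span ⟨⟨i, h⟩, hi, rfl⟩
  have hw : Submodule.span S (Set.range w) = ⊤ := by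
    have := hmem Set.univ
    rw [Set.image_univ, hspan, top_le_iff] at this
    simpa using this
  have hle : quasilength S (Ideal.span s) M ≤ Fintype.card {i // i ≠ i₀} :=
    quasilength_le_card hw fun a ha i ↦ hmem (Set.Iio ↑i) (hv a ha i)
  have hlt : Fintype.card {i // i ≠ i₀} < Fintype.card ι :=
    Fintype.card_subtype_lt (x := i₀) (not_not.2 rfl)
  exact hle.trans_lt (Nat.cast_lt.2 hlt)

lemma prod_pow_eq_mul_prod_pow {R ι : Type*} [CommMonoid R] [Fintype ι] (x : ι → R)
    {e f : ι → ℕ} {j : ι} (hj : f j = e j + 1) (h : ∀ i, i ≠ j → f i = e i) :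
    ∏ i, x i ^ f i = x j * ∏ i, x i ^ e i := by
  classical
  rw [Fintype.prod_eq_mul_prod_compl j, Fintype.prod_eq_mul_prod_compl j, hj, pow_succ', mul_assoc]
  congr 2
  exact Finset.prod_congr rfl fun i hi ↦ by rw [h i (by simpa using hi)]

/-- If the monomial were in the ideal, the monomials `∏ i, x i ^ e i` with `e ≤ k`, which filter
`S ⧸ (x₁ ^ (k + 1), …)` by cyclic modules killed by `(x₁, …)`, would include a zero. -/
lemma IsQSequence.prod_pow_notMem {d : ℕ} {x : Fin d → S} (hx : IsQSequence x) (k : ℕ) :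
    ∏ i, x i ^ k ∉ Ideal.span (Set.range fun i ↦ x i ^ (k + 1)) := by
  intro hmem
  refine (hx.2 (k + 1) k.succ_pos).not_gt ?_
  set I := Ideal.span (Set.range fun i ↦ x i ^ (k + 1))
  let v (e : (Fin d → Fin (k + 1))ᵒᵈ) : S ⧸ I := Ideal.Quotient.mk I (∏ i, x i ^ (e.ofDual i : ℕ))
  have hspan : Submodule.span S (Set.range v) = ⊤ := by
    have hone : Submodule.span S {(1 : S ⧸ I)} = ⊤ := by
      rw [← Submodule.restrictScalars_span S (S ⧸ I) Ideal.Quotient.mk_surjective]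
      simp
    refine top_le_iff.1 (hone.symm.le.trans (Submodule.span_mono ?_))
    exact Set.singleton_subset_iff.2 ⟨OrderDual.toDual 0, by simp [v]⟩
  have hv : ∀ a ∈ Set.range x, ∀ e, a • v e ∈ Submodule.span S (v '' Set.Iio e) := by
    rintro _ ⟨j, rfl⟩ e
    have hsmul : x j • v e = Ideal.Quotient.mk I (x j * ∏ i, x i ^ (e.ofDual i : ℕ)) := rfl
    rcases (e.ofDual j).is_le.eq_or_lt with hj | hj
    · have hdvd : x j ^ (k + 1) ∣ x j * ∏ i, x i ^ (e.ofDual i : ℕ) := by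
        refine (pow_succ' (x j) k).dvd.trans (mul_dvd_mul_left _ ?_)
        exact (congrArg (x j ^ ·) hj.symm).dvd.trans
          (Finset.dvd_prod_of_mem (fun i ↦ x i ^ (e.ofDual i : ℕ)) (Finset.mem_univ j))
      have hzero : x j • v e = 0 :=
        Ideal.Quotient.eq_zero_iff_mem.2 (I.mem_of_dvd hdvd (Ideal.subset_span ⟨j, rfl⟩))
      exact hzero ▸ zero_mem _
    · let f : Fin d → Fin (k + 1) := Function.update e.ofDual j ⟨e.ofDual j + 1, by lia⟩
      have hlt : OrderDual.toDual f < e :=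
        OrderDual.toDual_lt.2 (lt_update_self_iff.2 (Fin.lt_def.2 (Nat.lt_succ_self _)))
      refine Submodule.subset_span ⟨OrderDual.toDual f, hlt, ?_⟩
      rw [hsmul, ← prod_pow_eq_mul_prod_pow x (j := j) (e := fun i ↦ e.ofDual i)
        (f := fun i ↦ f i) (by simp [f]) fun i hi ↦ by simp [f, hi]]
      rfl
  have hzero : v (OrderDual.toDual fun _ ↦ Fin.last k) = 0 :=
    Ideal.Quotient.eq_zero_iff_mem.2 hmem
  simpa using quasilength_lt_card_of_eq_zero hspan hv hzero

end Quasilength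

section RegularLocalRing

open IsLocalRing

variable {R ι : Type*} [CommRing R]

/-- `x` is a regular system of parameters of `R`: the ring `R` is local, and its maximal ideal is
generated by the finite family `x`, which has as many members as the dimension of `R`. -/
structure IsRegularSystemOfParameters (x : ι → R) : Prop where
  finite : Finite ι
  isLocalRing : IsLocalRing R
  span_range_eq : Ideal.span (Set.range x) = maximalIdeal R
  ringKrullDim_eq : ringKrullDim R = Nat.card ι

lemma spanFinrank_span_image_le_ncard [Finite ι] (x : ι → R) (T : Set ι) :
    (Ideal.span (x '' T)).spanFinrank ≤ T.ncard :=
  (Submodule.spanFinrank_span_le_ncard_of_finite (T.toFinite.image x)).trans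
    (Set.ncard_image_le T.toFinite)

lemma spanFinrank_span_range_le_card [Finite ι] (x : ι → R) :
    (Ideal.span (Set.range x)).spanFinrank ≤ Nat.card ι := by
  simpa using spanFinrank_span_image_le_ncard x Set.univ

lemma ringKrullDim_le_of_span_image_eq_maximalIdeal [Finite ι] [IsNoetherianRing R] [IsLocalRing R]
    {x : ι → R} {T : Set ι} (hx : Ideal.span (x '' T) = maximalIdeal R) :
    ringKrullDim R ≤ T.ncard :=
  (ringKrullDim_le_spanFinrank_maximalIdeal R).trans
    (Nat.cast_le.2 (hx ▸ spanFinrank_span_image_le_ncard x T))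

lemma isLocalRing_quotient [IsLocalRing R] {I : Ideal R} (hI : I ≤ maximalIdeal R) :
    IsLocalRing (R ⧸ I) :=
  have := Ideal.Quotient.nontrivial_iff.2 (ne_top_of_le_ne_top Ideal.IsPrime.ne_top' hI)
  .of_surjective' _ Ideal.Quotient.mk_surjective

lemma map_maximalIdeal_quotient [IsLocalRing R] (I : Ideal R) [IsLocalRing (R ⧸ I)] :
    (maximalIdeal R).map (Ideal.Quotient.mk I) = maximalIdeal (R ⧸ I) := by
  have hI : I ≤ maximalIdeal R := le_maximalIdeal (Ideal.Quotient.nontrivial_iff.1 inferInstance)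
  refine eq_maximalIdeal (Ideal.IsMaximal.map_of_surjective_of_ker_le
    Ideal.Quotient.mk_surjective ?_)
  rwa [Ideal.mk_ker]

lemma isDomain_of_isPrime_span_singleton [IsNoetherianRing R] [IsLocalRing R] {x : R}
    (hx : x ∈ maximalIdeal R) (hmin : ∀ q ∈ minimalPrimes R, x ∉ q)
    (hprime : (Ideal.span {x}).IsPrime) : IsDomain R := by
  obtain ⟨q, hq, hqx⟩ := Ideal.exists_minimalPrimes_le (bot_le : ⊥ ≤ Ideal.span {x})
  have hqprime : q.IsPrime := hq.1.1
  have hq0 : q = ⊥ := by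
    refine Submodule.eq_bot_of_le_smul_of_le_jacobson_bot (maximalIdeal R) q
      (IsNoetherian.noetherian _) (fun z hz ↦ ?_) (maximalIdeal_le_jacobson _)
    obtain ⟨w, rfl⟩ := Ideal.mem_span_singleton'.1 (hqx hz)
    have hw : w ∈ q := (hqprime.mem_or_mem hz).resolve_right (hmin q hq)
    exact mul_comm w x ▸ Submodule.smul_mem_smul hx hw
  exact IsDomain.of_bot_isPrime R (hbp := hq0 ▸ hqprime)

lemma exists_mem_maximalIdeal_notMem_sq_notMem_minimalPrimes [IsNoetherianRing R] [IsLocalRing R]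
    (hdim : ringKrullDim R ≠ 0) :
    ∃ x ∈ maximalIdeal R, x ∉ maximalIdeal R ^ 2 ∧ ∀ q ∈ minimalPrimes R, x ∉ q := by
  have hmin : ∀ q ∈ minimalPrimes R, ¬ maximalIdeal R ≤ q := by
    intro q hq hle
    have : q = maximalIdeal R := le_antisymm (le_maximalIdeal hq.1.1.ne_top) hle
    apply hdim
    rw [← maximalIdeal_height_eq_ringKrullDim, Ideal.height_eq_zero_iff.2 (this ▸ hq)]
    rfl
  have hsq : ¬ maximalIdeal R ≤ maximalIdeal R ^ 2 := by
    intro hle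
    have hbot : maximalIdeal R = ⊥ :=
      Submodule.eq_bot_of_le_smul_of_le_jacobson_bot (maximalIdeal R) _
        (IsNoetherian.noetherian _) (hle.trans (sq _).le) (maximalIdeal_le_jacobson _)
    obtain ⟨q, hq, -⟩ := Ideal.exists_minimalPrimes_le (bot_le : ⊥ ≤ maximalIdeal R)
    exact hmin q hq (hbot ▸ bot_le)
  by_contra! hcon
  have hfin := minimalPrimes.finite_of_isNoetherianRing R
  obtain ⟨I, hI, hle⟩ := (Ideal.subset_union_prime (I := maximalIdeal R) (f := id)
    (s := insert (maximalIdeal R ^ 2) hfin.toFinset) (maximalIdeal R ^ 2) (maximalIdeal R ^ 2)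
    fun q hq hne _ ↦ ((hfin.mem_toFinset.1 (Finset.mem_of_mem_insert_of_ne hq hne)).1.1)).1
    fun x hx ↦ by
      by_cases hx2 : x ∈ maximalIdeal R ^ 2
      · exact Set.mem_biUnion (Finset.mem_insert_self _ _) hx2
      · obtain ⟨q, hq, hxq⟩ := hcon x hx hx2
        exact Set.mem_biUnion (Finset.mem_insert_of_mem (hfin.mem_toFinset.2 hq)) hxq
  rcases Finset.mem_insert.1 hI with rfl | hI
  exacts [hsq hle, hmin I (hfin.mem_toFinset.1 hI) hle]

namespace IsRegularSystemOfParameters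

variable {x : ι → R} (hx : IsRegularSystemOfParameters x)
include hx

lemma mem_maximalIdeal (i : ι) : haveI := hx.isLocalRing; x i ∈ maximalIdeal R := by
  rw [← hx.span_range_eq]
  exact Ideal.subset_span ⟨i, rfl⟩

variable [IsNoetherianRing R]

lemma isRegularLocalRing : IsRegularLocalRing R := by
  have := hx.finite
  have := hx.isLocalRing
  refine .of_spanFinrank_maximalIdeal_le R ?_
  rw [hx.ringKrullDim_eq, ← hx.span_range_eq]
  exact Nat.cast_le.2 (spanFinrank_span_range_le_card x)

lemma ne_zero (i : ι) : x i ≠ 0 := by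
  intro hi
  have := hx.finite
  have := hx.isLocalRing
  have hle : Set.range x ⊆ insert 0 (x '' {i}ᶜ) := by
    rintro _ ⟨j, rfl⟩
    by_cases hj : j = i
    · exact Or.inl (hj ▸ hi)
    · exact Or.inr ⟨j, hj, rfl⟩
  have hspan : Ideal.span (x '' {i}ᶜ) = maximalIdeal R := by
    refine le_antisymm ?_ ?_ <;> rw [← hx.span_range_eq]
    · exact Ideal.span_mono (Set.image_subset_range _ _)
    · exact (Ideal.span_mono hle).trans Ideal.span_insert_zero.le
  have hdim := ringKrullDim_le_of_span_image_eq_maximalIdeal hspan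
  rw [hx.ringKrullDim_eq, Nat.cast_le, ← Set.ncard_add_ncard_compl {i}, Set.ncard_singleton] at hdim
  lia

lemma quotient (T : Set ι) : IsRegularSystemOfParameters
    fun i : ↥Tᶜ ↦ Ideal.Quotient.mk (Ideal.span (x '' T)) (x i) := by
  have := hx.finite
  have := hx.isLocalRing
  set I := Ideal.span (x '' T)
  have hI : I ≤ maximalIdeal R :=
    hx.span_range_eq ▸ Ideal.span_mono (Set.image_subset_range _ _)
  have := isLocalRing_quotient hI
  have hspan : Ideal.span (Set.range fun i : ↥Tᶜ ↦ Ideal.Quotient.mk I (x i)) =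
      maximalIdeal (R ⧸ I) := by
    refine le_antisymm ?_ ?_ <;>
      rw [← map_maximalIdeal_quotient, ← hx.span_range_eq, Ideal.map_span, ← Set.range_comp]
    · exact Ideal.span_mono (Set.range_subset_range_iff_exists_comp.2 ⟨_, rfl⟩)
    · rw [Ideal.span_le]
      rintro _ ⟨i, rfl⟩
      by_cases hi : i ∈ T
      · have : Ideal.Quotient.mk I (x i) = 0 :=
          Ideal.Quotient.eq_zero_iff_mem.2 (Ideal.subset_span ⟨i, hi, rfl⟩)
        simp [this]
      · exact Ideal.subset_span ⟨⟨i, hi⟩, rfl⟩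
  refine ⟨inferInstance, inferInstance, hspan, le_antisymm ?_ ?_⟩
  · refine (ringKrullDim_le_spanFinrank_maximalIdeal _).trans ?_
    exact Nat.cast_le.2 (hspan ▸ spanFinrank_span_range_le_card _)
  · rw [← ENat.WithBot.add_le_add_natCast_right_iff (c := T.ncard), ← Nat.cast_add,
      Nat.card_coe_set_eq, add_comm, Set.ncard_add_ncard_compl, ← hx.ringKrullDim_eq]
    refine (ringKrullDim_le_ringKrullDim_quotient_add_spanFinrank I ?_).trans ?_
    · rwa [ringJacobson_eq_maximalIdeal]
    · gcongr
      exact spanFinrank_span_image_le_ncard x T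

omit [IsNoetherianRing R] in
lemma update [DecidableEq ι] {y : R} (hy : haveI := hx.isLocalRing; y ∈ maximalIdeal R)
    (hy2 : haveI := hx.isLocalRing; y ∉ maximalIdeal R ^ 2) :
    ∃ i, IsRegularSystemOfParameters (Function.update x i y) := by
  have := hx.isLocalRing
  have := hx.finite
  have := Fintype.ofFinite ι
  obtain ⟨c, rfl⟩ := Ideal.mem_span_range_iff_exists_fun.1 (hx.span_range_eq.symm ▸ hy)
  obtain ⟨i, hi⟩ : ∃ i, IsUnit (c i) := by
    by_contra! hc
    exact hy2 (Ideal.sum_mem _ fun i _ ↦ sq (maximalIdeal R) ▸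
      Ideal.mul_mem_mul ((IsLocalRing.mem_maximalIdeal _).2 (hc i)) (hx.mem_maximalIdeal i))
  refine ⟨i, hx.finite, hx.isLocalRing, le_antisymm ?_ ?_, hx.ringKrullDim_eq⟩
  · rw [Ideal.span_le]
    rintro _ ⟨j, rfl⟩
    by_cases hj : j = i
    · simpa [hj] using hy
    · simpa [hj] using hx.mem_maximalIdeal j
  · set I := Ideal.span (Set.range (Function.update x i (∑ j, c j * x j)))
    have hsum : ∑ j, c j * x j ∈ I := Ideal.subset_span ⟨i, by simp⟩
    have hne : ∀ j ≠ i, x j ∈ I := fun j hj ↦ Ideal.subset_span ⟨j, by simp [hj]⟩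
    have hrest : ∑ j ∈ {i}ᶜ, c j * x j ∈ I :=
      Ideal.sum_mem _ fun j hj ↦ I.mul_mem_left _ (hne j (by simpa using hj))
    rw [Fintype.sum_eq_add_sum_compl i, Ideal.add_mem_iff_left _ hrest] at hsum
    rw [← hx.span_range_eq, Ideal.span_le]
    rintro _ ⟨j, rfl⟩
    by_cases hj : j = i
    · exact hj ▸ (Ideal.unit_mul_mem_iff_mem I hi).1 hsum
    · exact hne j hj

end IsRegularSystemOfParameters

lemma exists_isRegularSystemOfParameters (R : Type*) [CommRing R] [IsRegularLocalRing R] :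
    ∃ (n : ℕ) (x : Fin n → R), IsRegularSystemOfParameters x := by
  obtain ⟨s, hcard, hspan⟩ :=
    (IsNoetherian.noetherian (maximalIdeal R)).exists_span_set_encard_eq_spanFinrank
  have hs : s.Finite := Set.finite_of_encard_eq_coe hcard
  have := hs.to_subtype
  let e := (Finite.equivFin s).symm
  refine ⟨_, (↑) ∘ e, inferInstance, inferInstance, ?_, ?_⟩
  · rw [e.surjective.range_comp, Subtype.range_coe]
    exact hspan
  · rw [← IsRegularLocalRing.spanFinrank_maximalIdeal]
    have : s.ncard = (maximalIdeal R).spanFinrank := by rw [Set.ncard, hcard]; rfl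
    simp [← this]

lemma IsRegularSystemOfParameters.isDomain [IsNoetherianRing R] {x : ι → R}
    (hx : IsRegularSystemOfParameters x) : IsDomain R := by
  classical
  induction hn : Nat.card ι generalizing R ι with
  | zero =>
    have := hx.isLocalRing
    have := hx.finite
    have := Finite.card_eq_zero_iff.1 hn
    have hbot : maximalIdeal R = ⊥ := by simp [← hx.span_range_eq]
    exact (isField_iff_maximalIdeal_eq.2 hbot).isDomain
  | succ n ih =>
    have := hx.isLocalRing
    have hdim : ringKrullDim R ≠ 0 := by
      rw [hx.ringKrullDim_eq, hn]
      exact_mod_cast n.succ_ne_zero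
    obtain ⟨y, hy, hy2, hmin⟩ := exists_mem_maximalIdeal_notMem_sq_notMem_minimalPrimes hdim
    obtain ⟨i, hi⟩ := hx.update hy hy2
    refine isDomain_of_isPrime_span_singleton hy hmin ?_
    have hdom := ih (hi.quotient {i}) <| by
      have := hx.finite
      have := Set.ncard_add_ncard_compl {i}
      rw [Set.ncard_singleton] at this
      rw [Nat.card_coe_set_eq]
      lia
    rwa [Set.image_singleton, Function.update_self, Ideal.Quotient.isDomain_iff_prime] at hdom

lemma IsRegularSystemOfParameters.isPrime_span_image [IsNoetherianRing R] {x : ι → R}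
    (hx : IsRegularSystemOfParameters x) (T : Set ι) : (Ideal.span (x '' T)).IsPrime :=
  (Ideal.Quotient.isDomain_iff_prime _).1 (hx.quotient T).isDomain

end RegularLocalRing

section PermutablyRegular

variable {R ι : Type*} [CommRing R]

lemma isSMulRegular_quotient_sup_span_pow {J : Ideal R} {y z : R} (hz : IsSMulRegular (R ⧸ J) z)
    (hy : IsSMulRegular (R ⧸ J ⊔ Ideal.span {z}) y) (n : ℕ) :
    IsSMulRegular (R ⧸ J ⊔ Ideal.span {z ^ (n + 1)}) y := by
  induction n with
  | zero => rwa [zero_add, pow_one]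
  | succ n ih =>
    refine (isSMulRegular_quotient_iff_mem_of_smul_mem _ _).2 fun a ha ↦ ?_
    have hle : J ⊔ Ideal.span {z ^ (n + 2)} ≤ J ⊔ Ideal.span {z ^ (n + 1)} :=
      sup_le_sup_left (Ideal.span_singleton_le_span_singleton.2 (pow_dvd_pow z (n + 1).le_succ)) J
    obtain ⟨j, hj, b, hb, rfl⟩ := Submodule.mem_sup.1 <|
      mem_of_isSMulRegular_quotient_of_smul_mem ih (hle ha)
    obtain ⟨b, rfl⟩ := Ideal.mem_span_singleton.1 hb
    obtain ⟨j', hj', c, hc, hjc⟩ := Submodule.mem_sup.1 ha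
    obtain ⟨c, rfl⟩ := Ideal.mem_span_singleton.1 hc
    have hzJ : z ^ (n + 1) • (y * b - z * c) ∈ J := by
      have : z ^ (n + 1) • (y * b - z * c) = j' - y * j := by
        simp only [smul_eq_mul] at hjc ⊢
        linear_combination -hjc
      exact this ▸ sub_mem hj' (J.mul_mem_left y hj)
    have hyb : y • b ∈ J ⊔ Ideal.span {z} := by
      have := mem_of_isSMulRegular_quotient_of_smul_mem (hz.pow (n + 1)) hzJ
      exact Submodule.mem_sup.2
        ⟨_, this, _, Ideal.mem_span_singleton.2 ⟨c, rfl⟩, sub_add_cancel _ _⟩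
    obtain ⟨j'', hj'', d, hd, rfl⟩ := Submodule.mem_sup.1 <|
      mem_of_isSMulRegular_quotient_of_smul_mem hy hyb
    obtain ⟨d, rfl⟩ := Ideal.mem_span_singleton.1 hd
    refine Submodule.mem_sup.2 ⟨j + z ^ (n + 1) * j'', add_mem hj (J.mul_mem_left _ hj''),
      z ^ (n + 2) * d, Ideal.mem_span_singleton.2 ⟨d, rfl⟩, by ring⟩

/-- `x` is a permutably regular family: each member is a nonzerodivisor modulo every set of other
members, so that `x` is a (weakly) regular sequence in any order. -/
def IsPermutablyRegular (x : ι → R) : Prop :=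
  ∀ (T : Set ι) (i : ι), i ∉ T → IsSMulRegular (R ⧸ Ideal.span (x '' T)) (x i)

lemma IsRegularSystemOfParameters.isPermutablyRegular [IsNoetherianRing R] {x : ι → R}
    (hx : IsRegularSystemOfParameters x) : IsPermutablyRegular x := by
  refine fun T i hi ↦ (isSMulRegular_quotient_iff_mem_of_smul_mem _ _).2 fun a ha ↦ ?_
  refine ((hx.isPrime_span_image T).mem_or_mem ha).resolve_left fun hxi ↦ ?_
  exact (hx.quotient T).ne_zero ⟨i, hi⟩ (Ideal.Quotient.eq_zero_iff_mem.2 hxi)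

lemma IsPermutablyRegular.isSMulRegular_sup_span_pow {x : ι → R} (hx : IsPermutablyRegular x)
    (e : ι → ℕ) {A B : Set ι} (hB : B.Finite) (hAB : Disjoint A B) {i : ι} (hiA : i ∉ A)
    (hiB : i ∉ B) :
    IsSMulRegular (R ⧸ Ideal.span (x '' A) ⊔ Ideal.span ((fun j ↦ x j ^ (e j + 1)) '' B))
      (x i) := by
  induction B, hB using Set.Finite.induction_on generalizing A i with
  | empty =>
    rw [Set.image_empty, Ideal.span_empty, sup_bot_eq]
    exact hx A i hiA
  | @insert b B hbB _ ih =>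
    rw [Set.disjoint_insert_right] at hAB
    rw [Set.mem_insert_iff, not_or] at hiB
    have hb := ih hAB.2 hAB.1 hbB
    have hi := ih (A := insert b A) (Set.disjoint_insert_left.2 ⟨hbB, hAB.2⟩)
      (by simp [hiA, hiB.1]) hiB.2
    rw [Set.image_insert_eq, Ideal.span_insert, sup_comm (Ideal.span {x b}), sup_right_comm] at hi
    rw [Set.image_insert_eq, Ideal.span_insert, sup_comm (Ideal.span {_}), ← sup_assoc]
    exact isSMulRegular_quotient_sup_span_pow hb hi (e b)

variable [DecidableEq ι]

/-- The ideal `(x i ^ (eᵢ + 1) | i)`, where the exponents `e` are the multiplicities in `s`. The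
multiset `s` also stands for the monomial `(s.map x).prod = ∏ i, x i ^ eᵢ`, which generates the
socle modulo this ideal when `x` is permutably regular. -/
def powIdeal (x : ι → R) (s : Multiset ι) : Ideal R :=
  Ideal.span (Set.range fun i ↦ x i ^ (s.count i + 1))

variable {x : ι → R} {s : Multiset ι}

lemma pow_mem_powIdeal (i : ι) : x i ^ (s.count i + 1) ∈ powIdeal x s :=
  Ideal.subset_span ⟨i, rfl⟩

lemma powIdeal_eq_sup (k : ι) : powIdeal x s =
    Ideal.span ((fun i ↦ x i ^ (s.count i + 1)) '' {k}ᶜ) ⊔ Ideal.span {x k ^ (s.count k + 1)} := by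
  rw [powIdeal, ← Set.image_univ, ← Set.compl_union_self {k}, Set.image_union, Ideal.span_union,
    Set.image_singleton]

lemma powIdeal_cons (k : ι) (s : Multiset ι) : powIdeal x (k ::ₘ s) =
    Ideal.span ((fun i ↦ x i ^ (s.count i + 1)) '' {k}ᶜ) ⊔ Ideal.span {x k ^ (s.count k + 2)} := by
  rw [powIdeal_eq_sup k, Multiset.count_cons_self]
  congr 2
  exact Set.image_congr fun i hi ↦ by rw [Multiset.count_cons_of_ne hi]

lemma mul_mem_powIdeal_cons {k : ι} {a : R} (ha : a ∈ powIdeal x s) :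
    x k * a ∈ powIdeal x (k ::ₘ s) := by
  rw [powIdeal_eq_sup k] at ha
  obtain ⟨j, hj, b, hb, rfl⟩ := Submodule.mem_sup.1 ha
  obtain ⟨b, rfl⟩ := Ideal.mem_span_singleton.1 hb
  rw [powIdeal_cons]
  exact Submodule.mem_sup.2 ⟨x k * j, Ideal.mul_mem_left _ _ hj, x k ^ (s.count k + 2) * b,
    Ideal.mem_span_singleton.2 ⟨b, rfl⟩, by ring⟩

lemma mul_prod_mem_powIdeal (i : ι) : x i * (s.map x).prod ∈ powIdeal x s := by
  refine Ideal.mem_of_dvd _ ?_ (pow_mem_powIdeal i)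
  rw [pow_succ']
  refine mul_dvd_mul_left _ ?_
  rw [← Multiset.prod_replicate, ← Multiset.map_replicate]
  exact Multiset.prod_dvd_prod_of_le <|
    Multiset.map_le_map (Multiset.le_count_iff_replicate_le.1 le_rfl)

namespace IsPermutablyRegular

variable [Finite ι] (hx : IsPermutablyRegular x)
include hx

lemma mem_powIdeal_of_mul_mem_cons {k : ι} {a : R} (ha : x k * a ∈ powIdeal x (k ::ₘ s)) :
    a ∈ powIdeal x s := by
  have hreg := hx.isSMulRegular_sup_span_pow (s.count ·) (Set.toFinite {k}ᶜ) (Set.empty_disjoint _)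
    (Set.notMem_empty k) (Set.notMem_compl_iff.2 rfl)
  rw [Set.image_empty, Ideal.span_empty, bot_sup_eq] at hreg
  rw [powIdeal_cons] at ha
  obtain ⟨j, hj, c, hc, hjc⟩ := Submodule.mem_sup.1 ha
  obtain ⟨c, rfl⟩ := Ideal.mem_span_singleton.1 hc
  have hsub : x k • (a - x k ^ (s.count k + 1) * c) = j := by
    rw [smul_eq_mul]
    linear_combination -hjc
  have hmem := mem_of_isSMulRegular_quotient_of_smul_mem hreg (hsub ▸ hj)
  rw [powIdeal_eq_sup k]
  exact Submodule.mem_sup.2 ⟨_, hmem, _, Ideal.mem_span_singleton.2 ⟨c, rfl⟩, sub_add_cancel _ _⟩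

lemma mem_powIdeal_sup_span_prod {a : R} (ha : ∀ i, x i * a ∈ powIdeal x s) :
    a ∈ powIdeal x s ⊔ Ideal.span {(s.map x).prod} := by
  induction s using Multiset.induction generalizing a with
  | empty => simp
  | cons k s ih =>
    obtain ⟨j, hj, b, rfl⟩ : ∃ j ∈ powIdeal x (k ::ₘ s), ∃ b, j + x k * b = a := by
      have hak := hx.mem_powIdeal_of_mul_mem_cons (ha k)
      rw [powIdeal_eq_sup k] at hak
      obtain ⟨j, hj, b, hb, rfl⟩ := Submodule.mem_sup.1 hak
      obtain ⟨b, rfl⟩ := Ideal.mem_span_singleton.1 hb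
      exact ⟨j, powIdeal_cons (x := x) k s ▸ Ideal.mem_sup_left hj, x k ^ s.count k * b, by ring⟩
    have hb (i : ι) : x i * b ∈ powIdeal x s := by
      refine hx.mem_powIdeal_of_mul_mem_cons (k := k) ?_
      have := sub_mem (ha i) (Ideal.mul_mem_left _ (x i) hj)
      convert this using 1
      ring
    obtain ⟨c, hc, d, hd, rfl⟩ := Submodule.mem_sup.1 (ih hb)
    obtain ⟨d, rfl⟩ := Ideal.mem_span_singleton.1 hd
    refine Submodule.mem_sup.2 ⟨j + x k * c, add_mem hj (mul_mem_powIdeal_cons hc),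
      x k * ((s.map x).prod * d), Ideal.mem_span_singleton.2 ⟨d, ?_⟩, by ring⟩
    rw [Multiset.map_cons, Multiset.prod_cons, mul_assoc]

end IsPermutablyRegular

end PermutablyRegular

section SelfInjective

open IsLocalRing

lemma length_eq_add_length_range_of_exact {R X Y Z : Type*} [Ring R] [AddCommGroup X]
    [AddCommGroup Y] [AddCommGroup Z] [Module R X] [Module R Y] [Module R Z] {f : X →ₗ[R] Y}
    {g : Y →ₗ[R] Z} (hf : Function.Injective f) (hfg : Function.Exact f g) :
    Module.length R Y = Module.length R X + Module.length R g.range :=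
  Module.length_eq_add_of_exact f g.rangeRestrict hf g.surjective_rangeRestrict
    fun y ↦ by rw [← hfg y, Subtype.ext_iff]; rfl

lemma length_dual_eq_add {R : Type*} [CommRing R] {X Y Z : Type*} [AddCommGroup X]
    [AddCommGroup Y] [AddCommGroup Z] [Module R X] [Module R Y] [Module R Z] {f : X →ₗ[R] Y}
    {g : Y →ₗ[R] Z} (hfg : Function.Exact f g) (hg : Function.Surjective g) :
    Module.length R (Module.Dual R Y) =
      Module.length R (Module.Dual R Z) + Module.length R f.dualMap.range :=
  length_eq_add_length_range_of_exact (f := g.dualMap) (g := f.dualMap)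
    (LinearMap.lcomp_injective_of_surjective g hg)
    (LinearMap.exact_lcomp_of_exact_of_surjective R hfg hg)

variable {A : Type*} [CommRing A]

lemma length_dual_quotient_le {m : Ideal A} {s : A}
    (hs : ∀ a : A, (∀ y ∈ m, y * a = 0) ↔ a ∈ Ideal.span {s}) :
    Module.length A (Module.Dual A (A ⧸ m)) ≤ Module.length A (A ⧸ m) := by
  have hker : m ≤ (LinearMap.toSpanSingleton A A s).ker := fun y hy ↦
    (hs s).2 (Ideal.mem_span_singleton_self s) y hy
  let ev : Module.Dual A (A ⧸ m) →ₗ[A] A := LinearMap.applyₗ (1 : A ⧸ m)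
  have hev : Function.Injective ev := fun f g hfg ↦ Submodule.linearMap_qext _ <|
    LinearMap.ext_ring hfg
  have hrange : ev.range ≤ (m.liftQ (LinearMap.toSpanSingleton A A s) hker).range := by
    rw [Submodule.range_liftQ, LinearMap.range_toSpanSingleton]
    rintro _ ⟨f, rfl⟩
    refine (hs _).1 fun y hy ↦ ?_
    have hy0 : y • (1 : A ⧸ m) = 0 := by
      rw [Algebra.smul_def, mul_one]
      exact Ideal.Quotient.eq_zero_iff_mem.2 hy
    rw [← smul_eq_mul, LinearMap.applyₗ_apply_apply, ← map_smul, hy0, map_zero]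
  calc Module.length A (Module.Dual A (A ⧸ m)) = Module.length A ev.range :=
        (LinearEquiv.ofInjective ev hev).length_eq
    _ ≤ Module.length A (m.liftQ (LinearMap.toSpanSingleton A A s) hker).range :=
        Module.length_le_of_injective _ (Submodule.inclusion_injective hrange)
    _ ≤ Module.length A (A ⧸ m) :=
        Module.length_le_of_surjective _ (LinearMap.surjective_rangeRestrict _)

lemma exists_linearMap_apply_eq_of_baer [IsLocalRing A] (hA : Module.Baer A A) {s : A}
    (hs : ∀ y ∈ maximalIdeal A, y * s = 0) {W : Type*} [AddCommGroup W] [Module A W] {w : W}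
    (hw : w ≠ 0) : ∃ h : W →ₗ[A] A, h w = s := by
  have hws (a : A) (ha : a • w = 0) : a • s = 0 := by
    refine hs a ((mem_maximalIdeal a).2 fun ha' ↦ hw ?_)
    exact ha'.smul_eq_zero.1 ha
  let p : W →ₗ.[A] A := LinearPMap.mkSpanSingleton' w s hws
  have hp (hw : w ∈ p.domain) : p ⟨w, hw⟩ = s := LinearPMap.mkSpanSingleton'_apply_self w s hws hw
  obtain ⟨h, hh⟩ := hA.extension_property p.domain.subtype p.domain.subtype_injective p.toFun
  exact ⟨h, (LinearMap.congr_fun hh ⟨w, Submodule.mem_span_singleton_self w⟩).trans (hp _)⟩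

variable {A : Type u} [CommRing A] [IsArtinianRing A] [IsLocalRing A] {s : A}
  (hs : ∀ a : A, (∀ y ∈ maximalIdeal A, y * a = 0) ↔ a ∈ Ideal.span {s})
include hs

lemma length_dual_le (V : Type u) [AddCommGroup V] [Module A V] [hV : Module.Finite A V] :
    Module.length A (Module.Dual A V) ≤ Module.length A V := by
  induction hV using IsNoetherianRing.induction_on_isQuotientEquivQuotientPrime A with
  | subsingleton V => rw [Module.length_eq_zero]; exact zero_le
  | quotient V p e =>
    have hp : p.asIdeal = maximalIdeal A := eq_maximalIdeal inferInstance
    rw [hp] at e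
    rw [e.length_eq, e.symm.dualMap.length_eq]
    exact length_dual_quotient_le hs
  | exact V₁ V₂ V₃ f g hf hg hfg ih₁ ih₃ =>
    rw [Module.length_eq_add_of_exact f g hf hg hfg, length_dual_eq_add hfg hg, add_comm]
    gcongr
    exact (Module.length_le_of_injective _ (Submodule.subtype_injective _)).trans ih₁

/-- Dualizing `0 → I → A → A ⧸ I → 0` and counting lengths forces `Dual A A → Dual A I` to be onto:
`Dual A A ≃ A`, while the duals of `I` and `A ⧸ I` have at most the length of `I` and `A ⧸ I`. -/
lemma baer_self_of_socle_eq_span_singleton : Module.Baer A A := by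
  refine Module.Baer.iff_surjective.2 fun I ↦ ?_
  have hexact : Function.Exact I.subtype I.mkQ := LinearMap.exact_subtype_mkQ I
  have hdual := length_dual_eq_add hexact I.mkQ_surjective
  rw [(LinearMap.ringLmapEquivSelf A A A).length_eq,
    Module.length_eq_add_of_exact _ _ I.subtype_injective I.mkQ_surjective hexact] at hdual
  have hI := length_dual_le hs I
  have hfin : IsFiniteLength A (Module.Dual A I) :=
    Module.length_ne_top_iff.1 (ne_top_of_le_ne_top Module.length_ne_top hI)
  obtain ⟨_, _⟩ := isFiniteLength_iff_isNoetherian_isArtinian.1 hfin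
  rw [← LinearMap.range_eq_top]
  by_contra hne
  refine lt_irrefl (Module.length A I + Module.length A (A ⧸ I)) ?_
  calc _ = Module.length A (Module.Dual A (A ⧸ I)) + Module.length A I.subtype.dualMap.range :=
        hdual
    _ ≤ Module.length A (A ⧸ I) + Module.length A I.subtype.dualMap.range := by
        gcongr
        exact length_dual_le hs (A ⧸ I)
    _ < Module.length A (A ⧸ I) + Module.length A (Module.Dual A I) :=
        (ENat.add_lt_add_iff_left Module.length_ne_top).2 (Submodule.length_lt hne)
    _ ≤ _ := by rw [add_comm]; gcongr

end SelfInjective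

namespace IsRegularSystemOfParameters

open IsLocalRing

section Quotient

variable {D : Type u} {ι : Type*} [CommRing D] [IsNoetherianRing D] [IsLocalRing D] [DecidableEq ι]
  {x : ι → D} (hx : IsRegularSystemOfParameters x) (s : Multiset ι)
include hx

omit [IsNoetherianRing D] in
lemma powIdeal_le_maximalIdeal : powIdeal x s ≤ maximalIdeal D :=
  Ideal.span_le.2 <| Set.range_subset_iff.2 fun i ↦
    Ideal.pow_mem_of_mem _ (hx.mem_maximalIdeal i) _ (Nat.succ_pos _)

lemma isArtinianRing_quotient_powIdeal : IsArtinianRing (D ⧸ powIdeal x s) := by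
  have := isLocalRing_quotient (hx.powIdeal_le_maximalIdeal s)
  have hrad : maximalIdeal D ≤ (powIdeal x s).radical := by
    rw [← hx.span_range_eq, Ideal.span_le]
    rintro _ ⟨i, rfl⟩
    exact ⟨_, pow_mem_powIdeal i⟩
  obtain ⟨k, hk⟩ := Ideal.exists_pow_le_of_le_radical_of_fg hrad (IsNoetherian.noetherian _)
  refine isArtinianRing_iff_isNilpotent_maximalIdeal _ |>.2 ⟨k, ?_⟩
  rw [← map_maximalIdeal_quotient, ← Ideal.map_pow, Ideal.zero_eq_bot, Ideal.map_mk_eq_bot_of_le hk]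

omit [IsNoetherianRing D] [DecidableEq ι] in
lemma forall_mul_mem_iff {I : Ideal D} {a : D} :
    (∀ y ∈ maximalIdeal D, y * a ∈ I) ↔ ∀ i, x i * a ∈ I := by
  refine ⟨fun h i ↦ h _ (hx.mem_maximalIdeal i), fun h ↦ ?_⟩
  have hle : Ideal.span (Set.range x) ≤ I.colon {a} := by
    rw [Ideal.span_le]
    rintro _ ⟨i, rfl⟩
    exact Submodule.mem_colon_singleton.2 (h i)
  exact fun y hy ↦ Submodule.mem_colon_singleton.1 (hle (hx.span_range_eq.symm ▸ hy))

lemma mem_socle_quotient_powIdeal_iff [IsLocalRing (D ⧸ powIdeal x s)] (a : D ⧸ powIdeal x s) :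
    (∀ y ∈ maximalIdeal (D ⧸ powIdeal x s), y * a = 0) ↔
      a ∈ Ideal.span {Ideal.Quotient.mk (powIdeal x s) (s.map x).prod} := by
  have := hx.finite
  obtain ⟨a, rfl⟩ := Ideal.Quotient.mk_surjective a
  have hlift : (∀ y ∈ maximalIdeal (D ⧸ powIdeal x s), y * Ideal.Quotient.mk _ a = 0) ↔
      ∀ y ∈ maximalIdeal D, y * a ∈ powIdeal x s := by
    simp only [← map_maximalIdeal_quotient, Ideal.mem_map_iff_of_surjective _
      Ideal.Quotient.mk_surjective, forall_exists_index, and_imp, forall_apply_eq_imp_iff₂,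
      ← map_mul, Ideal.Quotient.eq_zero_iff_mem]
  rw [hlift, hx.forall_mul_mem_iff, ← Set.image_singleton, ← Ideal.map_span,
    Ideal.mem_quotient_iff_mem_sup, sup_comm]
  refine ⟨hx.isPermutablyRegular.mem_powIdeal_sup_span_prod, fun ha i ↦ ?_⟩
  obtain ⟨j, hj, b, hb, rfl⟩ := Submodule.mem_sup.1 ha
  obtain ⟨b, rfl⟩ := Ideal.mem_span_singleton.1 hb
  rw [mul_add, ← mul_assoc]
  exact add_mem (Ideal.mul_mem_left _ _ hj) (Ideal.mul_mem_right _ _ (mul_prod_mem_powIdeal i))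

lemma exists_linearMap_quotient_powIdeal {W : Type*} [AddCommGroup W] [Module D W]
    (hW : Module.IsTorsionBySet D W (powIdeal x s)) {w : W} (hw : w ≠ 0) :
    ∃ φ : W →ₗ[D] D ⧸ powIdeal x s, φ w = Ideal.Quotient.mk _ (s.map x).prod := by
  have := isLocalRing_quotient (hx.powIdeal_le_maximalIdeal s)
  have := hx.isArtinianRing_quotient_powIdeal s
  have hsocle := hx.mem_socle_quotient_powIdeal_iff s
  let _ : Module (D ⧸ powIdeal x s) W := hW.module
  have : IsScalarTower D (D ⧸ powIdeal x s) W := hW.isScalarTower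
  obtain ⟨φ, hφ⟩ := exists_linearMap_apply_eq_of_baer (baer_self_of_socle_eq_span_singleton hsocle)
    ((hsocle _).2 (Ideal.mem_span_singleton_self _)) hw
  exact ⟨φ.restrictScalars D, hφ⟩

end Quotient

variable {D : Type u} [CommRing D] [IsNoetherianRing D] {n : ℕ} {x : Fin n → D}

lemma exists_linearMap_apply_eq_prod_pow (hx : IsRegularSystemOfParameters x) {Q : Type*}
    [AddCommGroup Q] [Module D Q] [Module.Finite D Q] {u : Q} (hu : u ≠ 0) :
    ∃ (k : ℕ) (φ : Q →ₗ[D] D ⧸ Ideal.span (Set.range fun i ↦ x i ^ (k + 1))),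
      φ u = Ideal.Quotient.mk _ (∏ i, x i ^ k) := by
  have := hx.isLocalRing
  obtain ⟨k, hk⟩ : ∃ k, u ∉ (maximalIdeal D ^ k • ⊤ : Submodule D Q) := by
    by_contra! h
    exact hu <| (IsHausdorff.of_isLocalRing (maximalIdeal D) Q Ideal.IsPrime.ne_top').haus u
      fun k ↦ SModEq.zero.2 (h k)
  let s : Multiset (Fin n) := k • Finset.univ.val
  have hcount : powIdeal x s = Ideal.span (Set.range fun i ↦ x i ^ (k + 1)) := by
    simp [powIdeal, s]
  have hprod : (s.map x).prod = ∏ i, x i ^ k := by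
    rw [Multiset.map_nsmul, Multiset.prod_nsmul, Finset.prod_pow, Finset.prod_map_val]
  have hle : powIdeal x s ≤ maximalIdeal D ^ k := by
    rw [hcount, Ideal.span_le]
    rintro _ ⟨i, rfl⟩
    exact Ideal.pow_le_pow_right k.le_succ (Ideal.pow_mem_pow (hx.mem_maximalIdeal i) _)
  have hW : Module.IsTorsionBySet D (Q ⧸ (maximalIdeal D ^ k • ⊤ : Submodule D Q))
      (powIdeal x s) := by
    rintro w ⟨a, ha⟩
    obtain ⟨w, rfl⟩ := Submodule.mkQ_surjective _ w
    exact (Submodule.Quotient.mk_eq_zero _).2 (Submodule.smul_mem_smul (hle ha) trivial)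
  obtain ⟨φ, hφ⟩ := hx.exists_linearMap_quotient_powIdeal s hW
    ((Submodule.Quotient.mk_eq_zero _).not.2 hk)
  refine ⟨k, ?_⟩
  rw [← hcount, ← hprod]
  exact ⟨φ ∘ₗ Submodule.mkQ _, hφ⟩

end IsRegularSystemOfParameters

section RobustClosure

open IsLocalRing

namespace IsRobustOver

variable {D S : Type u} [CommRing D] [CommRing S] [Algebra D S]

lemma isQSequence (hS : IsRobustOver D S) {n : ℕ} {x : Fin n → D}
    (hx : IsRegularSystemOfParameters x) : IsQSequence fun i ↦ algebraMap D S (x i) := by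
  have := hx.isLocalRing
  refine hS n x (by simpa using hx.ringKrullDim_eq) ?_
  rw [hx.span_range_eq, Ideal.IsPrime.radical inferInstance]
  infer_instance

variable [IsRegularLocalRing D]

lemma eq_zero_of_one_tmul_eq_zero_of_finite (hS : IsRobustOver D S) {Q : Type*} [AddCommGroup Q]
    [Module D Q] [Module.Finite D Q] {u : Q} (hu : (1 : S) ⊗ₜ[D] u = 0) : u = 0 := by
  obtain ⟨n, x, hx⟩ := exists_isRegularSystemOfParameters D
  by_contra hu0
  obtain ⟨k, φ, hφ⟩ := hx.exists_linearMap_apply_eq_prod_pow hu0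
  set I := Ideal.span (Set.range fun i ↦ x i ^ (k + 1))
  have hprod : (1 : S) ⊗ₜ[D] Ideal.Quotient.mk I (∏ i, x i ^ k) = 0 := by
    rw [← hφ, ← LinearMap.lTensor_tmul, hu, map_zero]
  have hmem : algebraMap D S (∏ i, x i ^ k) ∈ I.map (algebraMap D S) := by
    rw [← Ideal.Quotient.eq_zero_iff_mem]
    have := congrArg (Algebra.TensorProduct.quotIdealMapEquivTensorQuot S I).symm hprod
    rwa [Algebra.TensorProduct.quotIdealMapEquivTensorQuot_symm_tmul, Algebra.smul_def, mul_one,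
      map_zero] at this
  refine (hS.isQSequence hx).prod_pow_notMem k ?_
  simpa [I, Ideal.map_span, ← Set.range_comp, Function.comp_def] using hmem

lemma eq_zero_of_one_tmul_eq_zero (hS : IsRobustOver D S) {Q : Type*} [AddCommGroup Q]
    [Module D Q] {u : Q} (hu : (1 : S) ⊗ₜ[D] u = 0) : u = 0 := by
  have hfg : (Submodule.span D {u}).FG := Submodule.fg_span_singleton u
  let v : Submodule.span D {u} := ⟨u, Submodule.mem_span_singleton_self u⟩
  have hv : (Submodule.span D {u}).subtype.rTensor S (v ⊗ₜ[D] (1 : S)) = 0 := by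
    simpa [v] using congrArg (TensorProduct.comm D S Q) hu
  obtain ⟨P, hP, hPfg, hP0⟩ := TensorProduct.eq_zero_of_fg_of_subtype_eq_zero hfg hv
  have := Module.Finite.iff_fg.2 hPfg
  have hP0' : (1 : S) ⊗ₜ[D] Submodule.inclusion hP v = 0 := by
    simpa using congrArg (TensorProduct.comm D P S) hP0
  exact congrArg Subtype.val (hS.eq_zero_of_one_tmul_eq_zero_of_finite hP0')

end IsRobustOver

lemma one_tmul_mk_eq_zero_of_mem_baseChange {R S M : Type*} [CommRing R] [CommRing S] [Algebra R S]
    [AddCommGroup M] [Module R M] {N : Submodule R M} {u : M}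
    (hu : (1 : S) ⊗ₜ[R] u ∈ N.baseChange S) :
    (1 : S) ⊗ₜ[R] (Submodule.Quotient.mk u : M ⧸ N) = 0 := by
  have hle : N.baseChange S ≤ (N.mkQ.baseChange S).ker := by
    rw [Submodule.baseChange_eq_span, Submodule.span_le]
    rintro _ ⟨v, hv, rfl⟩
    change N.mkQ.baseChange S (1 ⊗ₜ v) = 0
    rw [LinearMap.baseChange_tmul, Submodule.mkQ_apply, (Submodule.Quotient.mk_eq_zero N).2 hv,
      TensorProduct.tmul_zero]
  exact hle hu

variable {D : Type u} [CommRing D] [IsRegularLocalRing D] {M : Type u} [AddCommGroup M] [Module D M]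

lemma immediateRobustClosure_eq_self (N : Submodule D M) : immediateRobustClosure D M N = N := by
  rw [immediateRobustClosure, sup_eq_left, Submodule.span_le]
  rintro u ⟨S, _, _, hforcing, hrobust⟩
  exact (Submodule.Quotient.mk_eq_zero N).1 <|
    hrobust.eq_zero_of_one_tmul_eq_zero (one_tmul_mk_eq_zero_of_mem_baseChange hforcing)

lemma robustClosureCLD_eq_self (N : Submodule D M) : robustClosureCLD D M N = N := by
  simp only [robustClosureCLD, Function.iterate_fixed (immediateRobustClosure_eq_self N),
    ciSup_const]

end RobustClosure

section Completion

open IsLocalRing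

variable {P R : Type*} [CommRing P] [CommRing R]

/-- The ring homomorphism from the `I`-adic completion of `P` to `R ⧸ (I R) ^ k` induced by
`φ : P →+* R`; these are the components of `adicCompletionMap φ I`. -/
noncomputable def adicCompletionToQuotient (φ : P →+* R) (I : Ideal P) (k : ℕ) :
    AdicCompletion I P →+* R ⧸ I.map φ ^ k :=
  (Ideal.quotientMap (I.map φ ^ k) φ (Ideal.map_le_iff_le_comap.1 (Ideal.map_pow φ I k).le)).comp
    (AdicCompletion.evalₐ I k).toRingHom

lemma factorPow_comp_adicCompletionToQuotient (φ : P →+* R) (I : Ideal P) {j k : ℕ} (hjk : j ≤ k) :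
    (Ideal.Quotient.factorPow (I.map φ) hjk).comp (adicCompletionToQuotient φ I k) =
      adicCompletionToQuotient φ I j := by
  ext y
  obtain ⟨y, rfl⟩ := AdicCompletion.mk_surjective I P y
  simpa [adicCompletionToQuotient] using congrArg (Ideal.quotientMap (I.map φ ^ j) φ
    (Ideal.map_le_iff_le_comap.1 (Ideal.map_pow φ I j).le))
    (AdicCompletion.Ideal.mk_eq_mk I hjk y)

/-- The ring homomorphism between adic completions induced by a ring homomorphism. -/
noncomputable def adicCompletionMap (φ : P →+* R) (I : Ideal P) :
    AdicCompletion I P →+* AdicCompletion (I.map φ) R :=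
  AdicCompletion.liftRingHom (I.map φ) (adicCompletionToQuotient φ I)
    (factorPow_comp_adicCompletionToQuotient φ I)

lemma adicCompletionMap_algebraMap (φ : P →+* R) (I : Ideal P) (p : P) :
    adicCompletionMap φ I (algebraMap P _ p) = algebraMap R _ (φ p) := by
  refine AdicCompletion.ext_evalₐ fun k ↦ ?_
  rw [adicCompletionMap,
    AdicCompletion.evalₐ_liftRingHom _ _ (factorPow_comp_adicCompletionToQuotient φ I)]
  simp [adicCompletionToQuotient]

lemma adicCompletionMap_surjective {φ : P →+* R} (hφ : Function.Surjective φ) {I : Ideal P}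
    (hI : I.FG) : Function.Surjective (adicCompletionMap φ I) := by
  have hcomp : (adicCompletionMap φ I).comp (algebraMap P _) = (algebraMap R _).comp φ :=
    RingHom.ext (adicCompletionMap_algebraMap φ I)
  have hmap : (I.map (algebraMap P (AdicCompletion I P))).map (adicCompletionMap φ I) =
      (I.map φ).map (algebraMap R _) := by
    rw [Ideal.map_map, hcomp, Ideal.map_map]
  have := AdicCompletion.isAdicComplete_self I hI
  have := AdicCompletion.isAdicComplete_self (I.map φ) (hI.map φ)
  have : IsHausdorff ((I.map (algebraMap P (AdicCompletion I P))).map (adicCompletionMap φ I))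
      (AdicCompletion (I.map φ) R) := hmap ▸ inferInstance
  refine surjective_of_mk_map_comp_surjective (adicCompletionMap φ I)
    (I := I.map (algebraMap P (AdicCompletion I P))) fun y ↦ ?_
  obtain ⟨y, rfl⟩ := Ideal.Quotient.mk_surjective y
  obtain ⟨r, hr⟩ := Ideal.Quotient.mk_surjective (AdicCompletion.evalOneₐ _ y)
  obtain ⟨p, rfl⟩ := hφ r
  refine ⟨algebraMap P _ p, ?_⟩
  rw [RingHom.comp_apply, adicCompletionMap_algebraMap, Ideal.Quotient.eq, hmap,
    ← AdicCompletion.ker_evalOneₐ_eq_map (I.map φ) (hI.map φ), RingHom.mem_ker, map_sub,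
    sub_eq_zero]
  exact (AdicCompletion.evalOneₐ_of _ _).trans hr

lemma isNoetherianRing_adicCompletion [IsNoetherianRing R] (m : Ideal R) :
    IsNoetherianRing (AdicCompletion m R) := by
  obtain ⟨n, x, rfl⟩ := Submodule.fg_iff_exists_fin_generating_family.1 (IsNoetherian.noetherian m)
  let φ : MvPolynomial (Fin n) R →+* R := MvPolynomial.eval x
  have hφ : Function.Surjective φ := fun r ↦ ⟨MvPolynomial.C r, MvPolynomial.eval_C r⟩
  have hmap : (MvPolynomial.idealOfVars (Fin n) R).map φ = Ideal.span (Set.range x) := by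
    rw [Ideal.map_span, ← Set.range_comp]
    congr 2
    ext i
    simp [φ]
  have := isNoetherianRing_of_ringEquiv _
    (MvPowerSeries.toAdicCompletionAlgEquiv (Fin n) R).toRingEquiv
  have := isNoetherianRing_of_surjective _ _ _
    (adicCompletionMap_surjective hφ (MvPolynomial.idealOfVars_fg (Fin n) R))
  rwa [hmap] at this

lemma ringKrullDim_le_ringKrullDim_adicCompletion [IsNoetherianRing R] [IsLocalRing R] :
    ringKrullDim R ≤ ringKrullDim (AdicCompletion (maximalIdeal R) R) := by
  have := isNoetherianRing_adicCompletion (maximalIdeal R)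
  have : (maximalIdeal (AdicCompletion (maximalIdeal R) R)).LiesOver (maximalIdeal R) :=
    ⟨(maximalIdeal_comap _).symm⟩
  have := Algebra.HasGoingDown.of_flat (R := R) (S := AdicCompletion (maximalIdeal R) R)
  rw [← maximalIdeal_height_eq_ringKrullDim, ← maximalIdeal_height_eq_ringKrullDim,
    Ideal.height_eq_height_add_of_liesOver_of_hasGoingDown (maximalIdeal R)
      (maximalIdeal (AdicCompletion (maximalIdeal R) R))]
  exact_mod_cast le_self_add

lemma isRegularLocalRing_adicCompletion (R : Type*) [CommRing R] [IsRegularLocalRing R] :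
    IsRegularLocalRing (AdicCompletion (maximalIdeal R) R) := by
  have := isNoetherianRing_adicCompletion (maximalIdeal R)
  refine .of_spanFinrank_maximalIdeal_le _ ?_
  rw [AdicCompletion.spanFinrank_maximalIdeal_eq, IsRegularLocalRing.spanFinrank_maximalIdeal]
  exact ringKrullDim_le_ringKrullDim_adicCompletion

end Completion

section Globalization

open IsLocalRing

lemma isCompleteLocalDomainOf_adicCompletion_atPrime (R : Type u) [CommRing R] (m : Ideal R)
    [m.IsMaximal] [IsDomain (AdicCompletion (maximalIdeal (Localization.AtPrime m))
      (Localization.AtPrime m))] :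
    IsCompleteLocalDomainOf R (AdicCompletion (maximalIdeal (Localization.AtPrime m))
      (Localization.AtPrime m)) := by
  refine ⟨m, inferInstance, ⊥, ?_, (RingEquiv.quotientBot _).symm, fun r ↦ ?_⟩
  · rw [IsDomain.minimalPrimes_eq_singleton_bot]
    exact Set.mem_singleton _
  · rw [IsScalarTower.algebraMap_apply R (Localization.AtPrime m)]
    rfl

lemma one_tmul_eq_zero_of_faithfullyFlat {R A B Q : Type*} [CommRing R] [CommRing A] [CommRing B]
    [Algebra R A] [Algebra R B] [Algebra A B] [IsScalarTower R A B] [Module.FaithfullyFlat A B]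
    [AddCommGroup Q] [Module R Q] {v : Q} (hv : (1 : B) ⊗ₜ[R] v = 0) : (1 : A) ⊗ₜ[R] v = 0 := by
  apply Module.FaithfullyFlat.tensorProduct_mk_injective (A := A) (B := B)
  apply (TensorProduct.AlgebraTensorModule.cancelBaseChange R A B B Q).injective
  simpa using hv

theorem robustClosure_eq_self_of_regular_general (R : Type u) [CommRing R]
    (hreg : ∀ (m : Ideal R) [m.IsMaximal], IsRegularLocalRing (Localization.AtPrime m))
    (M : Type u) [AddCommGroup M] [Module R M] (N : Submodule R M) (u : M) :
    MemRobustClosure R M N u ↔ u ∈ N := by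
  refine ⟨fun hu ↦ ?_, fun hu D _ _ _ ↦
    Submodule.mem_iSup_of_mem 0 (Submodule.tmul_mem_baseChange_of_mem 1 hu)⟩
  rw [← Submodule.Quotient.mk_eq_zero]
  refine Module.eq_zero_of_localization_maximal (fun m _ ↦ Localization.AtPrime m ⊗[R] (M ⧸ N))
    (fun m _ ↦ TensorProduct.mk R (Localization.AtPrime m) (M ⧸ N) 1) _ fun m _ ↦ ?_
  have := hreg m
  let D := AdicCompletion (maximalIdeal (Localization.AtPrime m)) (Localization.AtPrime m)
  have : IsRegularLocalRing D := isRegularLocalRing_adicCompletion (Localization.AtPrime m)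
  obtain ⟨n, x, hx⟩ := exists_isRegularSystemOfParameters D
  have : IsDomain D := hx.isDomain
  have hD : 1 ⊗ₜ u ∈ N.baseChange D := by
    rw [← robustClosureCLD_eq_self (N.baseChange D)]
    exact hu D (isCompleteLocalDomainOf_adicCompletion_atPrime R m)
  have : Module.FaithfullyFlat (Localization.AtPrime m) D :=
    Module.FaithfullyFlat.of_flat_of_isLocalHom
  exact one_tmul_eq_zero_of_faithfullyFlat (one_tmul_mk_eq_zero_of_mem_baseChange hD)

end Globalization

/-- If `R` is a regular Noetherian ring (every localization at a
prime is a regular local ring, i.e. the maximal ideal of the localization is generated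
by `dim` many elements), then every finitely generated submodule `N ⊆ M` is robustly
closed: the robust closure of `N` in `M` equals `N`. -/
theorem robustClosure_eq_self_of_regular
    (R : Type u) [CommRing R] [IsNoetherianRing R]
    (hreg : ∀ (p : Ideal R) (hp : p.IsPrime),
      haveI : p.IsPrime := hp
      ∃ (n : ℕ) (x : Fin n → Localization.AtPrime p),
        Ideal.span (Set.range x) = IsLocalRing.maximalIdeal (Localization.AtPrime p) ∧
        ringKrullDim (Localization.AtPrime p) = n)
    (M : Type u) [AddCommGroup M] [Module R M] [Module.Finite R M]
    (N : Submodule R M) :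
    ∀ u : M, MemRobustClosure R M N u ↔ u ∈ N := by
  refine robustClosure_eq_self_of_regular_general R (fun m _ ↦ ?_) M N
  obtain ⟨n, x, hspan, hdim⟩ := hreg m inferInstance
  have hx : IsRegularSystemOfParameters x :=
    ⟨inferInstance, inferInstance, hspan, by simpa using hdim⟩
  exact hx.isRegularLocalRing
end

section
/- Let (R,m) be a d-dimensional Noetherian complete local domain of prime characteristic p > 0, let I = (g_1,…,g_n) be an ideal of R, let u ∈ R, and let S = R[Z_1,…,Z_n]/(u − Σ_{l=1}^n Z_l g_l) be the generic forcing algebra. Then H^d_m(S) ≠ 0 (where S is regarded as an R-module) if and only if the image in S of every system of parameters of R forms a Q-sequence in S. -/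
set_option synthInstance.maxHeartbeats 1000000
set_option maxHeartbeats 1000000
open scoped BigOperators ENNReal TensorProduct

universe u

/-! The top local cohomology module `H^d_m(S)` is computed by Čech classes in a system of parameters
`x`, and in characteristic `p` it is nonzero exactly when no power `(x₁ ⋯ x_d) ^ l` lies in
`(x₁ ^ (l + 1), …, x_d ^ (l + 1)) S`: this is the monomial property of `x` in `S`. If it fails, then
`S ⧸ (x₁ ^ (l + 1), …, x_d ^ (l + 1)) S` is filtered by its monomials with fewer than `(l + 1) ^ d`
cyclic factors, so `x` is not a Q-sequence.

Conversely, assume the monomial property. By Cohen's structure theorem `R` is finite over a power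
series ring in `x` over a field, and Čech duality over that ring gives an `R`-linear map `f : S → R`
with `c = f 1 ≠ 0`. Since `u ∈ I S`, applying `f` to `u ^ q ∈ I ^ [q] S` shows that
`c * u ^ q ∈ I ^ [q]` for every power `q` of `p`. Hence the Frobenius powers `r ↦ (r ^ q)_q` extend
to a ring homomorphism from `S` to `(∏_q R)[1/c]`. A filtration of `S ⧸ (x₁ ^ t, …, x_d ^ t) S` with
`h` cyclic factors maps to one over this ring; clearing denominators by `C = c ^ N`, it bounds the
length of `R ⧸ (x₁ ^ (t * q), …, x_d ^ (t * q))` by `h` times that of `R ⧸ (x₁ ^ q, …, x_d ^ q)`, up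
to lengths of quotients of `R ⧸ C`, which are `O(q ^ (d - 1))`. As the former lengths grow like a
positive multiple of `(t * q) ^ d` and `q ^ d`, it follows that `t ^ d ≤ h`. -/

namespace ForcingAlgebra

/-! ### Ext and its comparison maps -/

section ExtComparison

open CategoryTheory CategoryTheory.Limits Opposite HomologicalComplex

variable {R : Type*} [CommRing R] {C : Type*} [Category C] [Abelian C] [Linear R C]
  {X X' M : C}

/-- The cochain map `Hom(P, M) ⟶ Hom(P', M)` induced by a chain map `P' ⟶ P`. -/
noncomputable def linearYonedaMap {P P' : ChainComplex C ℕ} (φ : P' ⟶ P) (M : C) :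
    P.linearYonedaObj R M ⟶ P'.linearYonedaObj R M :=
  (unopFunctor _ _).map
    ((((linearYoneda R C).obj M).rightOp.mapHomologicalComplex _).map φ).op

variable [EnoughProjectives C]

lemma isoExt_hom_naturality {P : ProjectiveResolution X} {P' : ProjectiveResolution X'}
    {f : X' ⟶ X} {φ : P'.complex ⟶ P.complex} (hφ : φ.f 0 ≫ P.π.f 0 = P'.π.f 0 ≫ f)
    (n : ℕ) (M : C) :
    ((Ext R C n).map f.op).app M ≫ (P'.isoExt n M).hom =
      (P.isoExt n M).hom ≫ homologyMap (linearYonedaMap (R := R) φ M) n := by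
  let F := ((linearYoneda R C).obj M).rightOp
  let e := (P.complex.linearYonedaObj R M).homologyOp n
  let e' := (P'.complex.linearYonedaObj R M).homologyOp n
  have leftDerived_sq : CommSq (P.isoLeftDerivedObj F n).inv.unop ((F.leftDerived n).map f).unop
      ((F.mapHomologicalComplex _ ⋙ homologyFunctor _ _ n).map φ).unop
      (P'.isoLeftDerivedObj F n).inv.unop :=
    ⟨congrArg Quiver.Hom.unop (P'.isoLeftDerivedObj_inv_naturality f P φ hφ F n).symm⟩
  have homology_sq : CommSq (homologyMap (linearYonedaMap φ M) n).op e'.inv e.inv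
      (homologyMap ((opFunctor _ _).map (linearYonedaMap (R := R) φ M).op) n) :=
    .vert_inv ⟨homologyOp_hom_naturality (linearYonedaMap (R := R) φ M) n⟩
  exact (leftDerived_sq.horiz_comp homology_sq.unop.flip).w.symm

/-- The cocycle `c : P.X n ⟶ M` represents the class `ξ` of the derived functor `Ext R C n`. -/
def Represents {n : ℕ} (P : ProjectiveResolution X) (c : P.complex.X n ⟶ M)
    (ξ : ((Ext R C n).obj (op X)).obj M) : Prop :=
  ∃ z : (P.complex.linearYonedaObj R M).cycles n,
    ((P.complex.linearYonedaObj R M).iCycles n).hom z = c ∧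
    ((P.complex.linearYonedaObj R M).homologyπ n).hom z = (P.isoExt n M).hom.hom ξ

namespace Represents

variable {n : ℕ} {P : ProjectiveResolution X} {c : P.complex.X n ⟶ M}
  {ξ : ((Ext R C n).obj (op X)).obj M}

variable (P ξ) in
lemma exists_cocycle : ∃ c : P.complex.X n ⟶ M, Represents P c ξ :=
  let ⟨z, hz⟩ := (ModuleCat.epi_iff_surjective _).mp
    (inferInstance : Epi ((P.complex.linearYonedaObj R M).homologyπ n)) ((P.isoExt n M).hom.hom ξ)
  ⟨_, z, rfl, hz⟩

lemma d_comp_eq_zero (h : Represents P c ξ) : P.complex.d (n + 1) n ≫ c = 0 := by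
  obtain ⟨z, rfl, -⟩ := h
  exact ConcreteCategory.congr_hom ((P.complex.linearYonedaObj R M).iCycles_d n (n + 1)) z

variable (R) in
lemma exists_of_d_comp_eq_zero (hc : P.complex.d (n + 1) n ≫ c = 0) :
    ∃ ξ : ((Ext R C n).obj (op X)).obj M, Represents P c ξ := by
  let K := P.complex.linearYonedaObj R M
  have cycles_exact := (ShortComplex.moduleCat_exact_iff _).mp <|
    ShortComplex.exact_of_f_is_kernel (.mk (K.iCycles n) (K.d n (n + 1)) (by simp))
      (K.cyclesIsKernel n (n + 1) (by simp))
  obtain ⟨z, hz⟩ := cycles_exact c hc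
  exact ⟨(P.isoExt n M).inv.hom ((K.homologyπ n).hom z), z, hz,
    ((P.isoExt n M).toLinearEquiv.apply_symm_apply _).symm⟩

lemma map {P' : ProjectiveResolution X'} {f : X' ⟶ X} {φ : P'.complex ⟶ P.complex}
    (hφ : φ.f 0 ≫ P.π.f 0 = P'.π.f 0 ≫ f) (h : Represents P c ξ) :
    Represents P' (φ.f n ≫ c) ((((Ext R C n).map f.op).app M).hom ξ) := by
  obtain ⟨z, rfl, hz⟩ := h
  refine ⟨(cyclesMap (linearYonedaMap φ M) n).hom z,
    ConcreteCategory.congr_hom (cyclesMap_i (linearYonedaMap (R := R) φ M) n) z, ?_⟩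
  let K := P.complex.linearYonedaObj R M
  calc _ = (homologyMap (linearYonedaMap φ M) n).hom ((K.homologyπ n).hom z) :=
        (ConcreteCategory.congr_hom (homologyπ_naturality (linearYonedaMap φ M) n) z).symm
    _ = (homologyMap (linearYonedaMap φ M) n).hom ((P.isoExt n M).hom.hom ξ) :=
        congrArg _ hz
    _ = _ := (ConcreteCategory.congr_hom (isoExt_hom_naturality hφ n M) ξ).symm

lemma eq_zero_iff (h : Represents P c ξ) :
    ξ = 0 ↔ ∃ b : P.complex.X (n - 1) ⟶ M, P.complex.d n (n - 1) ≫ b = c := by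
  obtain ⟨z, rfl, hz⟩ := h
  let K := P.complex.linearYonedaObj R M
  have homology_exact := (ShortComplex.moduleCat_exact_iff _).mp <|
    ShortComplex.exact_of_g_is_cokernel (.mk (K.toCycles (n - 1) n) (K.homologyπ n) (by simp))
      (K.homologyIsCokernel (n - 1) n (by cases n <;> simp))
  have toCycles_iCycles (b : P.complex.X (n - 1) ⟶ M) :
      (K.iCycles n).hom ((K.toCycles (n - 1) n).hom b) = P.complex.d n (n - 1) ≫ b :=
    ConcreteCategory.congr_hom (K.toCycles_i (n - 1) n) b
  rw [← (P.isoExt n M).toLinearEquiv.map_eq_zero_iff]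
  constructor
  · intro hξ
    obtain ⟨b, hb⟩ := homology_exact z (hz.trans hξ)
    exact ⟨b, (toCycles_iCycles b).symm.trans (congrArg _ hb)⟩
  · rintro ⟨b, hb⟩
    have hbz : (K.toCycles (n - 1) n).hom b = z :=
      (ModuleCat.mono_iff_injective (K.iCycles n)).mp inferInstance ((toCycles_iCycles b).trans hb)
    refine hz.symm.trans ?_
    rw [← hbz]
    exact ConcreteCategory.congr_hom (K.toCycles_comp_homologyπ (n - 1) n) b

end Represents

end ExtComparison

section ExtVanishing

open CategoryTheory CategoryTheory.Limits Opposite CochainComplex HomComplex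

variable {C : Type*} [Category C] [Abelian C] [HasExt C] {X M : C}

lemma projective_extMk_zero_eq_zero_iff (P : ProjectiveResolution X) (f : P.complex.X 0 ⟶ M)
    (hf : P.complex.d 1 0 ≫ f = 0) : P.extMk f 1 rfl hf = 0 ↔ f = 0 := by
  have hP : IsZero (P.cochainComplex.X 1) := P.cochainComplex.isZero_of_isStrictlyLE 0 1 (by simp)
  simp only [← P.extEquivCohomologyClass.apply_eq_iff_eq,
    ProjectiveResolution.extEquivCohomologyClass_extMk,
    ProjectiveResolution.extEquivCohomologyClass_zero, CohomologyClass.mk_eq_zero_iff]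
  rw [Cocycle.toSingleMk_mem_coboundaries_iff _ _ _ _ _ 1 (by simp)]
  constructor
  · rintro ⟨b, hb⟩
    rwa [hP.eq_of_src b 0, comp_zero, eq_comm, Preadditive.IsIso.comp_left_eq_zero] at hb
  · rintro rfl
    exact ⟨0, by simp⟩

lemma injective_extMk_zero_eq_zero_iff (I : InjectiveResolution M) (f : X ⟶ I.cocomplex.X 0)
    (hf : f ≫ I.cocomplex.d 0 1 = 0) : I.extMk f 1 rfl hf = 0 ↔ f = 0 := by
  have hI : IsZero (I.cochainComplex.X (-1)) :=
    I.cochainComplex.isZero_of_isStrictlyGE 0 (-1) (by simp)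
  simp only [← I.extEquivCohomologyClass.apply_eq_iff_eq,
    InjectiveResolution.extEquivCohomologyClass_extMk,
    InjectiveResolution.extEquivCohomologyClass_zero, CohomologyClass.mk_eq_zero_iff]
  rw [Cocycle.fromSingleMk_mem_coboundaries_iff _ _ _ _ _ (-1) (by simp)]
  constructor
  · rintro ⟨b, hb⟩
    rwa [hI.eq_of_tgt b 0, zero_comp, eq_comm, Preadditive.IsIso.comp_right_eq_zero] at hb
  · rintro rfl
    exact ⟨0, by simp⟩

lemma projective_extMk_eq_zero_iff {n : ℕ} (P : ProjectiveResolution X) (f : P.complex.X n ⟶ M)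
    (hf : P.complex.d (n + 1) n ≫ f = 0) :
    P.extMk f (n + 1) rfl hf = 0 ↔
      ∃ b : P.complex.X (n - 1) ⟶ M, P.complex.d n (n - 1) ≫ b = f := by
  cases n with
  | zero => exact (projective_extMk_zero_eq_zero_iff P f hf).trans (by simp [eq_comm])
  | succ n => exact P.extMk_eq_zero_iff f _ rfl hf n rfl

lemma injective_extMk_eq_zero_iff {n : ℕ} (I : InjectiveResolution M) (f : X ⟶ I.cocomplex.X n)
    (hf : f ≫ I.cocomplex.d n (n + 1) = 0) :
    I.extMk f (n + 1) rfl hf = 0 ↔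
      ∃ b : X ⟶ I.cocomplex.X (n - 1), b ≫ I.cocomplex.d (n - 1) n = f := by
  cases n with
  | zero => exact (injective_extMk_zero_eq_zero_iff I f hf).trans (by simp [eq_comm])
  | succ n => exact I.extMk_eq_zero_iff f _ rfl hf n rfl

end ExtVanishing

section LocalCohomology

open CategoryTheory CategoryTheory.Limits Opposite

variable {R : Type u} [CommRing R] {J : Ideal R} {n : ℕ}

variable (J) in
/-- The projection `R ⧸ J ^ l ⟶ R ⧸ J ^ k` for `k ≤ l`, a transition map of the inverse system
defining local cohomology. -/
noncomputable def quotientPowProj {k l : ℕ} (h : k ≤ l) :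
    ModuleCat.of R (R ⧸ J ^ l) ⟶ ModuleCat.of R (R ⧸ J ^ k) :=
  ModuleCat.ofHom (Submodule.factor (Ideal.pow_le_pow_right h))

lemma subsingleton_localCohomology_iff_Ext (M : ModuleCat.{u} R) :
    Subsingleton ((localCohomology J n).obj M) ↔
      ∀ (k : ℕ) (ξ : ((Ext R (ModuleCat R) n).obj (op (.of R (R ⧸ J ^ k)))).obj M),
        ∃ (l : ℕ) (h : k ≤ l),
          (((Ext R (ModuleCat R) n).map (quotientPowProj J h).op).app M).hom ξ = 0 := by
  have := localCohomology.hasColimitDiagram.{u, 0} (localCohomology.idealPowersDiagram J) n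
  let F : (ℕᵒᵖ)ᵒᵖ ⥤ ModuleCat.{u} R :=
    localCohomology.diagram (localCohomology.idealPowersDiagram J) n ⋙ (evaluation _ _).obj M
  let c : Cocone F := ((evaluation _ _).obj M).mapCocone (colimit.cocone _)
  have : PreservesFilteredColimitsOfSize.{0, 0} (forget (ModuleCat.{u} R)) :=
    preservesFilteredColimitsOfSize_shrink.{0, u, 0, u} _
  have : PreservesColimitsOfShape (ℕᵒᵖ)ᵒᵖ (forget (ModuleCat.{u} R)) :=
    PreservesFilteredColimitsOfSize.preserves_filtered_colimits _
  have hc : IsColimit c := isColimitOfPreserves _ (colimit.isColimit _)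
  change Subsingleton c.pt ↔ _
  constructor
  · intro _ k ξ
    obtain ⟨l, i, j, hij⟩ := Concrete.isColimit_exists_of_rep_eq F hc (i := op (op k))
      (ξ : F.obj (op (op k))) (0 : F.obj (op (op k))) (Subsingleton.elim (α := c.pt) _ _)
    exact ⟨l.unop.unop, i.unop.unop.le, hij.trans (map_zero (F.map j).hom)⟩
  · intro H
    refine subsingleton_of_forall_eq 0 fun a => ?_
    obtain ⟨k, ξ, rfl⟩ := Concrete.isColimit_exists_rep F hc a
    obtain ⟨l, h, hξ⟩ := H k.unop.unop ξ
    have hξ' : (F.map (homOfLE h).op.op).hom ξ = 0 := hξ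
    rw [← c.w (homOfLE h).op.op]
    change (c.ι.app _).hom ((F.map (homOfLE h).op.op).hom ξ) = 0
    rw [hξ', map_zero]

lemma Represents.map_quotientPowProj_eq_zero_iff {M : ModuleCat.{u} R} {k l : ℕ} (h : k ≤ l)
    {P : ProjectiveResolution (ModuleCat.of R (R ⧸ J ^ k))} {c : P.complex.X n ⟶ M}
    (hc : P.complex.d (n + 1) n ≫ c = 0)
    {ξ : ((Ext R (ModuleCat R) n).obj (op (.of R (R ⧸ J ^ k)))).obj M} (hξ : Represents P c ξ) :
    (((Ext R (ModuleCat R) n).map (quotientPowProj J h).op).app M).hom ξ = 0 ↔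
      (Abelian.Ext.mk₀ (quotientPowProj J h)).comp (P.extMk c (n + 1) rfl hc) (zero_add n) = 0 := by
  let P' := ProjectiveResolution.of (ModuleCat.of R (R ⧸ J ^ l))
  have lift_comm := ProjectiveResolution.lift_commutes_zero (quotientPowProj J h) P' P
  let φ : ProjectiveResolution.Hom P' P (quotientPowProj J h) :=
    { hom := ProjectiveResolution.lift _ P' P
      hom_f_zero_comp_π_f_zero := by rw [lift_comm, ChainComplex.single₀_map_f_zero]; rfl }
  rw [(hξ.map lift_comm).eq_zero_iff, ProjectiveResolution.mk₀_comp_extMk c _ rfl hc φ,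
    projective_extMk_eq_zero_iff]

lemma subsingleton_localCohomology_iff_abelianExt (M : ModuleCat.{u} R) :
    Subsingleton ((localCohomology J n).obj M) ↔
      ∀ (k : ℕ) (ξ : Abelian.Ext (ModuleCat.of R (R ⧸ J ^ k)) M n),
        ∃ (l : ℕ) (h : k ≤ l),
          (Abelian.Ext.mk₀ (quotientPowProj J h)).comp ξ (zero_add n) = 0 := by
  rw [subsingleton_localCohomology_iff_Ext]
  refine forall_congr' fun k => ?_
  let P := ProjectiveResolution.of (ModuleCat.of R (R ⧸ J ^ k))
  constructor
  · intro H ξ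
    obtain ⟨c, hc, rfl⟩ := P.extMk_surjective ξ (n + 1) rfl
    obtain ⟨ξ', hξ'⟩ := Represents.exists_of_d_comp_eq_zero R hc
    obtain ⟨l, h, h0⟩ := H ξ'
    exact ⟨l, h, (hξ'.map_quotientPowProj_eq_zero_iff h hc).mp h0⟩
  · intro H ξ
    obtain ⟨c, hξ⟩ := Represents.exists_cocycle P ξ
    obtain ⟨l, h, h0⟩ := H (P.extMk c (n + 1) rfl hξ.d_comp_eq_zero)
    exact ⟨l, h, (hξ.map_quotientPowProj_eq_zero_iff h hξ.d_comp_eq_zero).mpr h0⟩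

lemma smul_hom_mk_one_eq_zero {J : Ideal R} {N : ModuleCat.{u} R}
    (f : ModuleCat.of R (R ⧸ J) ⟶ N) {r : R} (hr : r ∈ J) :
    r • f.hom (Ideal.Quotient.mk J 1) = 0 := by
  rw [← map_smul, ← Ideal.Quotient.mkₐ_eq_mk R, ← map_smul, smul_eq_mul, mul_one,
    Ideal.Quotient.mkₐ_eq_mk, Ideal.Quotient.eq_zero_iff_mem.mpr hr, map_zero]

lemma exists_hom_mk_one_eq {J : Ideal R} {N : ModuleCat.{u} R} {z : N}
    (hz : ∀ r ∈ J, r • z = 0) :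
    ∃ f : ModuleCat.of R (R ⧸ J) ⟶ N, f.hom (Ideal.Quotient.mk J 1) = z :=
  ⟨ModuleCat.ofHom (Submodule.liftQ J (LinearMap.toSpanSingleton R N z) hz), one_smul R z⟩

lemma hom_ext_mk_one {J : Ideal R} {N : ModuleCat.{u} R} {f f' : ModuleCat.of R (R ⧸ J) ⟶ N}
    (h : f.hom (Ideal.Quotient.mk J 1) = f'.hom (Ideal.Quotient.mk J 1)) : f = f' :=
  ModuleCat.hom_ext <| Submodule.linearMap_qext _ <| LinearMap.ext_ring h

lemma subsingleton_localCohomology_iff {M : ModuleCat.{u} R} (I : InjectiveResolution M) :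
    Subsingleton ((localCohomology J n).obj M) ↔
      ∀ (k : ℕ) (z : I.cocomplex.X n), (I.cocomplex.d n (n + 1)).hom z = 0 →
        (∀ r ∈ J ^ k, r • z = 0) →
        ∃ (l : ℕ) (y : I.cocomplex.X (n - 1)),
          (∀ r ∈ J ^ l, r • y = 0) ∧ (I.cocomplex.d (n - 1) n).hom y = z := by
  rw [subsingleton_localCohomology_iff_abelianExt]
  refine forall_congr' fun k => ?_
  constructor
  · intro H z hdz hz
    obtain ⟨f, rfl⟩ := exists_hom_mk_one_eq hz
    have hf : f ≫ I.cocomplex.d n (n + 1) = 0 := hom_ext_mk_one hdz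
    obtain ⟨l, h, h0⟩ := H (I.extMk f (n + 1) rfl hf)
    rw [InjectiveResolution.mk₀_comp_extMk, injective_extMk_eq_zero_iff] at h0
    obtain ⟨b, hb⟩ := h0
    exact ⟨l, _, fun r hr => smul_hom_mk_one_eq_zero b hr,
      ConcreteCategory.congr_hom hb (Ideal.Quotient.mk _ 1)⟩
  · intro H ξ
    obtain ⟨f, hf, rfl⟩ := I.extMk_surjective ξ (n + 1) rfl
    obtain ⟨l, y, hy, hyf⟩ := H _ (ConcreteCategory.congr_hom hf (Ideal.Quotient.mk _ 1))
      fun r hr => smul_hom_mk_one_eq_zero f hr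
    refine ⟨max k l, le_max_left k l, ?_⟩
    obtain ⟨b, rfl⟩ := exists_hom_mk_one_eq (J := J ^ max k l)
      fun r hr => hy r (Ideal.pow_le_pow_right (le_max_right k l) hr)
    rw [InjectiveResolution.mk₀_comp_extMk, injective_extMk_eq_zero_iff]
    exact ⟨b, hom_ext_mk_one hyf⟩

end LocalCohomology

/-! ### Powers of a sequence and torsion -/

section PowersIdeal

variable {R : Type*} [CommRing R] {ι : Type*}

/-- The ideal generated by the `k`-th powers of the terms of a sequence. -/
def powersIdeal (x : ι → R) (k : ℕ) : Ideal R :=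
  Ideal.span (Set.range fun i => x i ^ k)

lemma pow_mem_powersIdeal (x : ι → R) (i : ι) (k : ℕ) : x i ^ k ∈ powersIdeal x k :=
  Ideal.subset_span ⟨i, rfl⟩

lemma prod_pow_mul_mem_powersIdeal [Fintype ι] {x : ι → R} {k : ℕ} {a : R}
    (ha : a ∈ powersIdeal x k) (l : ℕ) : (∏ i, x i) ^ l * a ∈ powersIdeal x (k + l) := by
  refine Submodule.span_le (p := Submodule.comap
    (LinearMap.mulLeft R ((∏ i, x i) ^ l)) (powersIdeal x (k + l))) |>.mpr ?_ ha
  rintro _ ⟨i, rfl⟩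
  obtain ⟨y, hy⟩ := Finset.dvd_prod_of_mem x (Finset.mem_univ i)
  change (∏ i, x i) ^ l * x i ^ k ∈ powersIdeal x (k + l)
  rw [hy, show (x i * y) ^ l * x i ^ k = y ^ l * x i ^ (k + l) by ring]
  exact Ideal.mul_mem_left _ _ (pow_mem_powersIdeal x i _)

/-- The first `i` terms of a sequence. -/
abbrev initialSegment (x : ℕ → R) (i : ℕ) : Fin i → R := fun j => x j

lemma powersIdeal_initialSegment_succ (x : ℕ → R) (i k : ℕ) :
    powersIdeal (initialSegment x (i + 1)) k =
      Ideal.span {x i ^ k} ⊔ powersIdeal (initialSegment x i) k := by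
  rw [powersIdeal, powersIdeal, ← Ideal.span_union, Set.singleton_union, ← Fin.range_snoc]
  congr 2
  ext j
  induction j using Fin.lastCases <;> simp [initialSegment]

variable {M : Type*} [AddCommGroup M] [Module R M]

lemma prod_pow_smul_mem_powersIdeal_smul [Fintype ι] {x : ι → R} {k : ℕ} {N : Submodule R M}
    {m : M} (hm : m ∈ powersIdeal x k • N) (l : ℕ) :
    (∏ i, x i) ^ l • m ∈ powersIdeal x (k + l) • N := by
  refine Submodule.smul_le (P := (powersIdeal x (k + l) • N).comap
    (LinearMap.lsmul R M ((∏ i, x i) ^ l))) |>.mpr (fun a ha b hb => ?_) hm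
  rw [Submodule.mem_comap, LinearMap.lsmul_apply, smul_smul]
  exact Submodule.smul_mem_smul (prod_pow_mul_mem_powersIdeal ha l) hb

lemma mem_powersIdeal_initialSegment_succ_smul_top {x : ℕ → R} {i k : ℕ} {m : M} :
    m ∈ powersIdeal (initialSegment x (i + 1)) k • (⊤ : Submodule R M) ↔
      ∃ b : M, ∃ a ∈ powersIdeal (initialSegment x i) k • (⊤ : Submodule R M),
        x i ^ k • b + a = m := by
  rw [powersIdeal_initialSegment_succ, Submodule.sup_smul, Submodule.ideal_span_singleton_smul,
    Submodule.mem_sup]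
  simp [Submodule.mem_smul_pointwise_iff_exists]

end PowersIdeal

section PowerTorsion

variable {R : Type*} [CommRing R] {ι : Type*} {N N' : Type*} [AddCommGroup N] [Module R N]
  [AddCommGroup N'] [Module R N']

variable (N) in
/-- The elements of `N` killed by a power of each term of the sequence `x`, that is, the sections
supported on the vanishing locus of `x`. -/
def powerTorsion (x : ι → R) : Submodule R N :=
  ⨅ i, Submodule.torsion' R N (Submonoid.powers (x i))

lemma mem_powerTorsion {x : ι → R} {v : N} :
    v ∈ powerTorsion N x ↔ ∀ i, ∃ k : ℕ, x i ^ k • v = 0 := by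
  simp [powerTorsion, Submonoid.mem_powers_iff, Submonoid.smul_def]

lemma map_mem_powerTorsion {x : ι → R} {v : N} (hv : v ∈ powerTorsion N x) (f : N →ₗ[R] N') :
    f v ∈ powerTorsion N' x :=
  mem_powerTorsion.mpr fun i =>
    let ⟨k, hk⟩ := mem_powerTorsion.mp hv i
    ⟨k, by rw [← map_smul, hk, map_zero]⟩

lemma mem_powerTorsion_initialSegment_succ {x : ℕ → R} {i : ℕ} {v : N} :
    v ∈ powerTorsion N (initialSegment x (i + 1)) ↔
      v ∈ powerTorsion N (initialSegment x i) ∧ ∃ k : ℕ, x i ^ k • v = 0 := by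
  simp [mem_powerTorsion, Fin.forall_fin_succ', initialSegment]

lemma mem_powerTorsion_iff_exists_pow [IsNoetherianRing R] {x : ι → R} {J : Ideal R}
    (hJ : (Ideal.span (Set.range x)).radical = J) {v : N} :
    v ∈ powerTorsion N x ↔ ∃ k : ℕ, ∀ r ∈ J ^ k, r • v = 0 := by
  rw [mem_powerTorsion]
  constructor
  · intro hv
    have hJv : J ≤ Ideal.radical (LinearMap.ker (LinearMap.toSpanSingleton R N v)) := by
      rw [← hJ, Ideal.radical_le_radical_iff, Ideal.span_le]
      rintro _ ⟨i, rfl⟩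
      exact hv i
    exact Ideal.exists_pow_le_of_le_radical_of_fg hJv (IsNoetherian.noetherian J)
  · rintro ⟨k, hk⟩ i
    have hi : x i ∈ J := hJ ▸ Ideal.le_radical (Ideal.subset_span ⟨i, rfl⟩)
    exact ⟨k, hk _ (Ideal.pow_mem_pow hi k)⟩

lemma exists_pow_mul_mem_imp [IsNoetherianRing R] (a : Ideal R) (r : R) (k : ℕ) :
    ∃ l : ℕ, ∀ s, r ^ (k + l) * s ∈ a → r ^ l * s ∈ a := by
  let colon : ℕ →o Ideal R :=
    { toFun := fun l => Submodule.comap (LinearMap.mulLeft R (r ^ l)) a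
      monotone' := monotone_nat_of_le_succ fun l s hs => by
        simpa [pow_succ', mul_assoc] using a.mul_mem_left r hs }
  obtain ⟨l, hl⟩ := monotone_stabilizes_iff_noetherian.mpr (inferInstance : IsNoetherian R R) colon
  exact ⟨l, fun s hs => (hl (k + l) (Nat.le_add_left l k)).symm.le hs⟩

end PowerTorsion

section Injective

variable {R N : Type u} [CommRing R] [AddCommGroup N] [Module R N] [Module.Injective R N]

lemma exists_smul_eq_of_injective {a : Ideal R} {r : R} {v : N}
    (hv : ∀ s, r * s ∈ a → s • v = 0) : ∃ w : N, (∀ s ∈ a, s • w = 0) ∧ r • w = v := by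
  let b : Ideal R := Submodule.comap (LinearMap.mulLeft R r) a
  let mul_r : R ⧸ b →ₗ[R] R ⧸ a := Submodule.mapQ b a (LinearMap.mulLeft R r) le_rfl
  have mul_r_injective : Function.Injective mul_r :=
    LinearMap.ker_eq_bot.mp (Submodule.ker_liftQ_eq_bot _ _ _ fun _ hs =>
      (Submodule.Quotient.mk_eq_zero a).mp hs)
  obtain ⟨G, hG⟩ := Module.Injective.out mul_r mul_r_injective
    (b.liftQ (LinearMap.toSpanSingleton R N v) hv)
  have smul_G (s : R) : s • G (Submodule.Quotient.mk 1) = G (Submodule.Quotient.mk s) := by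
    rw [← map_smul, ← Submodule.Quotient.mk_smul, smul_eq_mul, mul_one]
  refine ⟨G (Submodule.Quotient.mk 1), fun s hs => ?_, ?_⟩
  · rw [smul_G, (Submodule.Quotient.mk_eq_zero a).mpr hs, map_zero]
  · have mul_r_one : mul_r (Submodule.Quotient.mk 1) = Submodule.Quotient.mk r :=
      congrArg Submodule.Quotient.mk (mul_one r)
    rw [smul_G, ← mul_r_one, hG]
    exact one_smul R v

variable [IsNoetherianRing R] {ι : Type*}

lemma exists_mem_powerTorsion_pow_smul_eq {x : ι → R} {v : N} (hv : v ∈ powerTorsion N x)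
    (r : R) (k : ℕ) : ∃ l : ℕ, ∃ w ∈ powerTorsion N x, r ^ (k + l) • w = r ^ l • v := by
  let a : Ideal R := LinearMap.ker (LinearMap.toSpanSingleton R N v)
  obtain ⟨l, hl⟩ := exists_pow_mul_mem_imp a r k
  obtain ⟨w, haw, hw⟩ := exists_smul_eq_of_injective (a := a) (r := r ^ (k + l)) (v := r ^ l • v)
    fun s hs => by simpa [a, mul_comm, mul_smul] using hl s hs
  refine ⟨l, w, mem_powerTorsion.mpr fun i => ?_, hw⟩
  obtain ⟨e, he⟩ := mem_powerTorsion.mp hv i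
  exact ⟨e, haw _ he⟩

end Injective

/-! ### Čech classes in top local cohomology -/

section CechSymbols

open CategoryTheory CategoryTheory.Limits

variable {R : Type u} [CommRing R] {M : ModuleCat.{u} R} (I : InjectiveResolution M)

/-- The differential of an injective resolution, as a linear map. -/
noncomputable abbrev coboundary (i : ℕ) : I.cocomplex.X i →ₗ[R] I.cocomplex.X (i + 1) :=
  (I.cocomplex.d i (i + 1)).hom

/-- The augmentation of an injective resolution, as a linear map. -/
noncomputable abbrev augmentation : M →ₗ[R] I.cocomplex.X 0 :=
  (I.ι.f 0).hom

instance (i : ℕ) : Module.Injective R (I.cocomplex.X i) :=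
  have := I.injective i
  Module.injective_module_of_injective_object R _

lemma coboundary_coboundary {i : ℕ} (y : I.cocomplex.X i) :
    coboundary I (i + 1) (coboundary I i y) = 0 :=
  ConcreteCategory.congr_hom (I.cocomplex.d_comp_d i (i + 1) (i + 2)) y

lemma coboundary_augmentation (m : M) : coboundary I 0 (augmentation I m) = 0 :=
  ConcreteCategory.congr_hom I.ι_f_zero_comp_complex_d m

lemma augmentation_injective : Function.Injective (augmentation I) :=
  (ModuleCat.mono_iff_injective (I.ι.f 0)).mp inferInstance

variable {I} {x : ℕ → R} {i k : ℕ}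

lemma exists_coboundary_eq {z : I.cocomplex.X (i + 1)} (hz : coboundary I (i + 1) z = 0) :
    ∃ y, coboundary I i y = z :=
  (ShortComplex.moduleCat_exact_iff _).mp (I.exact_succ i) z hz

lemma exists_augmentation_eq {z : I.cocomplex.X 0} (hz : coboundary I 0 z = 0) :
    ∃ m, augmentation I m = z :=
  (ShortComplex.moduleCat_exact_iff _).mp I.exact₀ z hz

lemma exists_mem_powerTorsion_coboundary_eq [IsNoetherianRing R] {j : ℕ} (hij : i ≤ j)
    {z : I.cocomplex.X (j + 1)} (hz : coboundary I (j + 1) z = 0)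
    (hzt : z ∈ powerTorsion _ (initialSegment x i)) :
    ∃ y ∈ powerTorsion _ (initialSegment x i), coboundary I j y = z := by
  induction i generalizing j with
  | zero =>
    obtain ⟨y, hy⟩ := exists_coboundary_eq hz
    exact ⟨y, mem_powerTorsion.mpr fun a => a.elim0, hy⟩
  | succ i ih =>
    obtain ⟨hzt, k, hk⟩ := mem_powerTorsion_initialSegment_succ.mp hzt
    obtain ⟨y, hyt, rfl⟩ := ih (Nat.le_of_succ_le hij) hz hzt
    obtain ⟨j, rfl⟩ := Nat.exists_eq_succ_of_ne_zero (Nat.ne_zero_of_lt hij)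
    obtain ⟨v, hvt, hv⟩ := ih (j := j) (z := x i ^ k • y) (Nat.le_of_succ_le_succ hij)
      (by rw [map_smul, hk]) (Submodule.smul_mem _ _ hyt)
    obtain ⟨l, w, hwt, hw⟩ := exists_mem_powerTorsion_pow_smul_eq hvt (x i) k
    refine ⟨y - coboundary I j w, mem_powerTorsion_initialSegment_succ.mpr
      ⟨Submodule.sub_mem _ hyt (map_mem_powerTorsion hwt _), k + l, ?_⟩, ?_⟩
    · rw [smul_sub, ← map_smul, hw, map_smul, hv, smul_smul, ← pow_add, add_comm l k, sub_self]
    · rw [map_sub, coboundary_coboundary, sub_zero]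

variable (I x) in
/-- The coboundaries of the subcomplex of sections of `I` supported on the vanishing locus of the
first `i` terms of `x`, in degree `i`. -/
noncomputable def torsionCoboundaries : ∀ i : ℕ, Submodule R (I.cocomplex.X i)
  | 0 => ⊥
  | i + 1 => (powerTorsion _ (initialSegment x (i + 1))).map (coboundary I i)

lemma mem_powerTorsion_of_mem_torsionCoboundaries {z : I.cocomplex.X i}
    (hz : z ∈ torsionCoboundaries I x i) : z ∈ powerTorsion _ (initialSegment x i) := by
  cases i with
  | zero => exact mem_powerTorsion.mpr fun a => a.elim0
  | succ i =>
    obtain ⟨v, hv, rfl⟩ := hz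
    exact map_mem_powerTorsion hv _

lemma coboundary_eq_zero_of_mem_torsionCoboundaries {z : I.cocomplex.X i}
    (hz : z ∈ torsionCoboundaries I x i) : coboundary I i z = 0 := by
  cases i with
  | zero => rw [(Submodule.mem_bot R).mp hz, map_zero]
  | succ i =>
    obtain ⟨v, -, rfl⟩ := hz
    exact coboundary_coboundary I v

lemma exists_mem_torsionCoboundaries_pow_smul_eq [IsNoetherianRing R] {z : I.cocomplex.X i}
    (hz : z ∈ torsionCoboundaries I x i) (k : ℕ) :
    ∃ l : ℕ, ∃ w ∈ torsionCoboundaries I x i, x i ^ (k + l) • w = x i ^ l • z := by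
  cases i with
  | zero => exact ⟨0, 0, Submodule.zero_mem _, by simp [(Submodule.mem_bot R).mp hz]⟩
  | succ i =>
    obtain ⟨v, hv, rfl⟩ := hz
    obtain ⟨l, w, hw, hwv⟩ := exists_mem_powerTorsion_pow_smul_eq hv (x (i + 1)) k
    exact ⟨l, _, Submodule.mem_map_of_mem hw, by rw [← map_smul, hwv, map_smul]⟩

variable (I x k) in
/-- The pairs `(m, z)` such that the cocycle `z` represents the Čech class
`[m / (x₀ ⋯ x_{i-1}) ^ k]` in the `i`-th local cohomology with support in `(x₀, …, x_{i-1})`. The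
recursion is the connecting homomorphism for inverting one more element. -/
noncomputable def cechSymbols : ∀ i : ℕ, Submodule R (M × I.cocomplex.X i)
  | 0 => LinearMap.graph (augmentation I)
  | i + 1 =>
    ((cechSymbols i).comap (LinearMap.id.prodMap (LinearMap.lsmul R _ (x i ^ k))) ⊓
      (powerTorsion _ (initialSegment x i)).comap (LinearMap.snd R M _)).map
        (LinearMap.id.prodMap (coboundary I i))

lemma mem_cechSymbols_zero {m : M} {z : I.cocomplex.X 0} :
    (m, z) ∈ cechSymbols I x k 0 ↔ z = augmentation I m :=
  Iff.rfl

lemma mem_cechSymbols_succ {m : M} {z : I.cocomplex.X (i + 1)} :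
    (m, z) ∈ cechSymbols I x k (i + 1) ↔ ∃ y ∈ powerTorsion _ (initialSegment x i),
      (m, x i ^ k • y) ∈ cechSymbols I x k i ∧ coboundary I i y = z := by
  constructor
  · rintro ⟨⟨m, y⟩, ⟨hmy, hy⟩, h⟩
    obtain ⟨rfl, rfl⟩ := Prod.mk.inj h
    exact ⟨y, hy, hmy, rfl⟩
  · rintro ⟨y, hy, hmy, rfl⟩
    exact ⟨(m, y), ⟨hmy, hy⟩, rfl⟩

lemma coboundary_eq_zero_of_mem_cechSymbols {m : M} {z : I.cocomplex.X i}
    (h : (m, z) ∈ cechSymbols I x k i) : coboundary I i z = 0 := by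
  cases i with
  | zero => rw [mem_cechSymbols_zero.mp h, coboundary_augmentation]
  | succ i =>
    obtain ⟨y, -, -, rfl⟩ := mem_cechSymbols_succ.mp h
    exact coboundary_coboundary I y

lemma mem_powerTorsion_of_mem_cechSymbols {m : M} {z : I.cocomplex.X i}
    (h : (m, z) ∈ cechSymbols I x k i) : z ∈ powerTorsion _ (initialSegment x i) := by
  cases i with
  | zero => exact mem_powerTorsion.mpr fun a => a.elim0
  | succ i =>
    obtain ⟨y, hy, hmy, rfl⟩ := mem_cechSymbols_succ.mp h
    exact mem_powerTorsion_initialSegment_succ.mpr ⟨map_mem_powerTorsion hy _, k,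
      by rw [← map_smul, coboundary_eq_zero_of_mem_cechSymbols hmy]⟩

lemma prod_initialSegment_succ_pow (x : ℕ → R) (i l : ℕ) :
    (∏ j, initialSegment x (i + 1) j) ^ l = x i ^ l * (∏ j, initialSegment x i j) ^ l := by
  rw [Fin.prod_univ_castSucc, mul_pow, mul_comm]
  rfl

lemma prod_pow_smul_mem_cechSymbols {m : M} {z : I.cocomplex.X i}
    (h : (m, z) ∈ cechSymbols I x k i) (l : ℕ) :
    ((∏ j, initialSegment x i j) ^ l • m, z) ∈ cechSymbols I x (k + l) i := by
  induction i generalizing m with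
  | zero => simpa [mem_cechSymbols_zero] using h
  | succ i ih =>
    obtain ⟨y, hy, hmy, rfl⟩ := mem_cechSymbols_succ.mp h
    refine mem_cechSymbols_succ.mpr ⟨y, hy, ?_, rfl⟩
    rw [prod_initialSegment_succ_pow, mul_smul, add_comm k l, pow_add, mul_smul, add_comm l k]
    exact Submodule.smul_mem _ (x i ^ l) (ih hmy)

variable [IsNoetherianRing R]

variable (I x) in
lemma exists_mem_cechSymbols (i k : ℕ) (m : M) : ∃ l : ℕ, ∃ z : I.cocomplex.X i,
    ((∏ j, initialSegment x i j) ^ l • m, z) ∈ cechSymbols I x (k + l) i := by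
  induction i with
  | zero => exact ⟨0, augmentation I m, by simp [mem_cechSymbols_zero]⟩
  | succ i ih =>
    obtain ⟨l, z, hz⟩ := ih
    obtain ⟨l', y, hy, hyz⟩ := exists_mem_powerTorsion_pow_smul_eq
      (mem_powerTorsion_of_mem_cechSymbols hz) (x i) (k + l)
    refine ⟨l + l', _, mem_cechSymbols_succ.mpr
      ⟨x i ^ l • y, Submodule.smul_mem _ _ hy, ?_, rfl⟩⟩
    have h := Submodule.smul_mem _ (x i ^ (l + l')) (prod_pow_smul_mem_cechSymbols hz l')
    rw [Prod.smul_mk] at h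
    convert h using 2
    · exact (add_assoc k l l').symm
    · rw [prod_initialSegment_succ_pow, mul_smul, smul_smul (_ ^ l'), ← pow_add, add_comm l' l]
    · rw [← add_assoc, smul_comm, hyz, smul_smul, ← pow_add, add_comm l l']

lemma exists_mem_cechSymbols_of_mem_powerTorsion {z : I.cocomplex.X i}
    (hz : coboundary I i z = 0) (hzt : z ∈ powerTorsion _ (initialSegment x i)) :
    ∃ (k : ℕ) (m : M), (m, z) ∈ cechSymbols I x k i := by
  induction i with
  | zero =>
    obtain ⟨m, rfl⟩ := exists_augmentation_eq hz
    exact ⟨0, m, mem_cechSymbols_zero.mpr rfl⟩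
  | succ i ih =>
    obtain ⟨hzt, k, hk⟩ := mem_powerTorsion_initialSegment_succ.mp hzt
    obtain ⟨y, hy, rfl⟩ := exists_mem_powerTorsion_coboundary_eq le_rfl hz hzt
    obtain ⟨l, m, hm⟩ := ih (z := x i ^ k • y) (by rw [map_smul, hk]) (Submodule.smul_mem _ _ hy)
    refine ⟨l + k, x i ^ l • (∏ j, initialSegment x i j) ^ k • m,
      mem_cechSymbols_succ.mpr ⟨y, hy, ?_, rfl⟩⟩
    rw [pow_add, mul_smul]
    exact Submodule.smul_mem _ (x i ^ l) (prod_pow_smul_mem_cechSymbols hm k)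

lemma mem_torsionCoboundaries_of_mem_powersIdeal_smul {m : M} {z : I.cocomplex.X i}
    (h : (m, z) ∈ cechSymbols I x k i)
    (hm : m ∈ powersIdeal (initialSegment x i) k • (⊤ : Submodule R M)) :
    z ∈ torsionCoboundaries I x i := by
  induction i generalizing k m with
  | zero =>
    have hm : m = 0 := by simpa [powersIdeal] using hm
    rw [mem_cechSymbols_zero.mp h, hm, map_zero]
    exact Submodule.zero_mem _
  | succ i ih =>
    obtain ⟨y, hy, hmy, rfl⟩ := mem_cechSymbols_succ.mp h
    obtain ⟨b, a, ha, rfl⟩ := mem_powersIdeal_initialSegment_succ_smul_top.mp hm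
    obtain ⟨l, z', hz'⟩ := exists_mem_cechSymbols I x i k b
    have hsub : ((∏ j, initialSegment x i j) ^ l • a, x i ^ k • y - x i ^ k • z') ∈
        cechSymbols I x (k + l) i := by
      convert Submodule.sub_mem _ (prod_pow_smul_mem_cechSymbols hmy l)
        (Submodule.smul_mem _ (x i ^ k) hz') using 2
      · simp [smul_comm (x i ^ k)]
      · rfl
    obtain ⟨l', w, hw, hwz⟩ := exists_mem_torsionCoboundaries_pow_smul_eq
      (ih hsub (prod_pow_smul_mem_powersIdeal_smul ha l)) k
    refine ⟨y - z' - w, mem_powerTorsion_initialSegment_succ.mpr ⟨Submodule.sub_mem _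
      (Submodule.sub_mem _ hy (mem_powerTorsion_of_mem_cechSymbols hz'))
      (mem_powerTorsion_of_mem_torsionCoboundaries hw), k + l', ?_⟩, ?_⟩
    · rw [smul_sub, hwz, ← smul_sub, smul_smul, ← pow_add, add_comm l' k, sub_self]
    · rw [map_sub, map_sub, coboundary_eq_zero_of_mem_cechSymbols hz',
        coboundary_eq_zero_of_mem_torsionCoboundaries hw, sub_zero, sub_zero]

lemma exists_mem_powersIdeal_smul_of_mem_torsionCoboundaries {m : M} {z : I.cocomplex.X i}
    (h : (m, z) ∈ cechSymbols I x k i) (hz : z ∈ torsionCoboundaries I x i) :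
    ∃ l : ℕ, (∏ j, initialSegment x i j) ^ l • m ∈
      powersIdeal (initialSegment x i) (k + l) • (⊤ : Submodule R M) := by
  induction i generalizing k m with
  | zero =>
    have hm : augmentation I m = augmentation I 0 := by
      rw [← mem_cechSymbols_zero.mp h, (Submodule.mem_bot R).mp hz, map_zero]
    exact ⟨0, by rw [augmentation_injective I hm, smul_zero]; exact Submodule.zero_mem _⟩
  | succ i ih =>
    obtain ⟨y, hy, hmy, rfl⟩ := mem_cechSymbols_succ.mp h
    obtain ⟨v, hv, hvy⟩ := hz
    obtain ⟨hvt, l, hl⟩ := mem_powerTorsion_initialSegment_succ.mp hv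
    obtain ⟨k', m', hm'⟩ := exists_mem_cechSymbols_of_mem_powerTorsion (x := x) (z := y - v)
      (by rw [map_sub, hvy, sub_self]) (Submodule.sub_mem _ hy hvt)
    let W := ∏ j, initialSegment x i j
    have hzero : (x i ^ l • W ^ k' • m - x i ^ (k + l) • W ^ k • m', 0) ∈
        cechSymbols I x (k + k') i := by
      convert Submodule.sub_mem _
        (Submodule.smul_mem _ (x i ^ l) (prod_pow_smul_mem_cechSymbols hmy k'))
        (Submodule.smul_mem _ (x i ^ (k + l))
          (add_comm k' k ▸ prod_pow_smul_mem_cechSymbols hm' k)) using 2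
      · rfl
      · rw [Prod.snd_sub, Prod.smul_snd, Prod.smul_snd, smul_sub, pow_add, mul_smul _ _ v, hl,
          smul_zero, sub_zero, smul_smul, mul_comm, sub_self]
    obtain ⟨l', hl'⟩ := ih hzero (Submodule.zero_mem _)
    refine ⟨k' + l' + l, mem_powersIdeal_initialSegment_succ_smul_top.mpr
      ⟨W ^ (l + l' + k) • m', x i ^ (k' + l') • W ^ l • W ^ l' • (x i ^ l • W ^ k' • m -
        x i ^ (k + l) • W ^ k • m'), Submodule.smul_mem _ _ ?_, ?_⟩⟩
    · convert prod_pow_smul_mem_powersIdeal_smul hl' l using 3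
      ring
    · rw [prod_initialSegment_succ_pow]
      change _ = (x i ^ (k' + l' + l) * W ^ (k' + l' + l)) • m
      module

end CechSymbols

section TopLocalCohomology

open CategoryTheory

variable {R : Type u} [CommRing R] {J : Ideal R} {d : ℕ}

lemma mem_torsionCoboundaries_iff {M : ModuleCat.{u} R} {I : InjectiveResolution M} {x : ℕ → R}
    {z : I.cocomplex.X d} : z ∈ torsionCoboundaries I x d ↔
      ∃ y ∈ powerTorsion _ (initialSegment x d), (I.cocomplex.d (d - 1) d).hom y = z := by
  cases d with
  | zero =>
    have hd : I.cocomplex.d (0 - 1) 0 = 0 := I.cocomplex.shape _ _ (by simp)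
    rw [hd]
    constructor
    · intro hz
      exact ⟨0, Submodule.zero_mem _, ((Submodule.mem_bot R).mp hz).symm⟩
    · rintro ⟨y, -, rfl⟩
      exact Submodule.zero_mem _
  | succ d => exact Iff.rfl

variable [IsNoetherianRing R]

lemma subsingleton_localCohomology_iff_torsionCoboundaries {M : ModuleCat.{u} R}
    (I : InjectiveResolution M) {x : ℕ → R}
    (hx : (Ideal.span (Set.range (initialSegment x d))).radical = J) :
    Subsingleton ((localCohomology J d).obj M) ↔
      ∀ z ∈ powerTorsion (I.cocomplex.X d) (initialSegment x d), coboundary I d z = 0 →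
        z ∈ torsionCoboundaries I x d := by
  simp only [subsingleton_localCohomology_iff I, mem_torsionCoboundaries_iff,
    mem_powerTorsion_iff_exists_pow hx]
  exact ⟨fun H z ⟨k, hk⟩ hz => let ⟨l, y, hy, hyz⟩ := H k z hz hk; ⟨y, ⟨l, hy⟩, hyz⟩,
    fun H k z hz hk => let ⟨y, ⟨l, hy⟩, hyz⟩ := H z ⟨k, hk⟩ hz; ⟨l, y, hy, hyz⟩⟩

lemma subsingleton_localCohomology_iff_forall_prod_pow_smul_mem {x : Fin d → R}
    (hx : (Ideal.span (Set.range x)).radical = J) (M : ModuleCat.{u} R) :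
    Subsingleton ((localCohomology J d).obj M) ↔
      ∀ (k : ℕ) (m : M), ∃ l : ℕ, (∏ i, x i) ^ l • m ∈ powersIdeal x (k + l) •
        (⊤ : Submodule R M) := by
  let I := InjectiveResolution.of M
  obtain ⟨x, rfl⟩ : ∃ x' : ℕ → R, initialSegment x' d = x :=
    ⟨fun j => if h : j < d then x ⟨j, h⟩ else 0, by ext; simp [initialSegment]⟩
  rw [subsingleton_localCohomology_iff_torsionCoboundaries I hx]
  constructor
  · intro H k m
    obtain ⟨l, z, hz⟩ := exists_mem_cechSymbols I x d k m
    obtain ⟨l', hl'⟩ := exists_mem_powersIdeal_smul_of_mem_torsionCoboundaries hz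
      (H z (mem_powerTorsion_of_mem_cechSymbols hz) (coboundary_eq_zero_of_mem_cechSymbols hz))
    exact ⟨l' + l, by rwa [pow_add, mul_smul, add_comm l' l, ← add_assoc]⟩
  · intro H z hzt hz
    obtain ⟨k, m, hm⟩ := exists_mem_cechSymbols_of_mem_powerTorsion hz hzt
    obtain ⟨l, hl⟩ := H k m
    exact mem_torsionCoboundaries_of_mem_powersIdeal_smul (prod_pow_smul_mem_cechSymbols hm l) hl

end TopLocalCohomology

section MonomialProperty

variable {R S : Type*} [CommRing R] [CommRing S] {ι : Type*}

lemma map_powersIdeal (f : R →+* S) (x : ι → R) (k : ℕ) :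
    (powersIdeal x k).map f = powersIdeal (fun i => f (x i)) k := by
  simp only [powersIdeal, Ideal.map_span, ← Set.range_comp, Function.comp_def, map_pow]

lemma mem_powersIdeal_smul_top [Algebra R S] {x : ι → R} {k : ℕ} {s : S} :
    s ∈ powersIdeal x k • (⊤ : Submodule R S) ↔
      s ∈ powersIdeal (fun i => algebraMap R S (x i)) k := by
  rw [Ideal.smul_top_eq_map, Submodule.restrictScalars_mem, map_powersIdeal]

lemma pow_expChar_pow_mem_powersIdeal (p : ℕ) [ExpChar R p] {x : ι → R} {k : ℕ} {a : R}
    (ha : a ∈ powersIdeal x k) (e : ℕ) : a ^ p ^ e ∈ powersIdeal x (k * p ^ e) := by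
  have h := Ideal.mem_map_of_mem (iterateFrobenius R p e) ha
  rw [map_powersIdeal] at h
  simpa only [powersIdeal, iterateFrobenius_def, ← pow_mul, mul_comm] using h

lemma powersIdeal_anti (x : ι → R) : Antitone (powersIdeal x) := by
  intro k l hkl
  rw [powersIdeal, Ideal.span_le]
  rintro _ ⟨i, rfl⟩
  exact Ideal.mem_of_dvd _ (pow_dvd_pow _ hkl) (pow_mem_powersIdeal x i k)

variable [Fintype ι]

/-- The conclusion of Hochster's monomial conjecture for the sequence `x`. -/
def MonomialProperty (x : ι → R) : Prop :=
  ∀ l : ℕ, (∏ i, x i) ^ l ∉ powersIdeal x (l + 1)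

lemma MonomialProperty.of_map {f : R →+* S} {x : ι → R}
    (hx : MonomialProperty fun i => f (x i)) : MonomialProperty x := fun l hl => hx l <| by
  simpa only [map_powersIdeal, map_pow, map_prod] using Ideal.mem_map_of_mem f hl

lemma MonomialProperty.span_ne_top {x : ι → R} (hx : MonomialProperty x) :
    Ideal.span (Set.range x) ≠ ⊤ := fun h => hx 0 <| by
  simpa only [powersIdeal, zero_add, pow_one, h] using Submodule.mem_top

end MonomialProperty

section MonomialPropertyLocalCohomology

variable {R S : Type u} [CommRing R] [IsNoetherianRing R] [CommRing S] [Algebra R S] {J : Ideal R}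
  {d : ℕ} {x : Fin d → R}

lemma nontrivial_localCohomology_of_monomialProperty
    (hx : (Ideal.span (Set.range x)).radical = J)
    (h : MonomialProperty fun i => algebraMap R S (x i)) :
    Nontrivial ((localCohomology J d).obj (ModuleCat.of R S)) := by
  by_contra H
  rw [not_nontrivial_iff_subsingleton,
    subsingleton_localCohomology_iff_forall_prod_pow_smul_mem hx] at H
  obtain ⟨l, hl⟩ := H 1 (1 : S)
  refine h l ?_
  rw [add_comm, ← mem_powersIdeal_smul_top]
  simpa only [Algebra.smul_def, map_pow, map_prod, mul_one] using hl

/-- If the monomial property fails, then the Frobenius powers of a witness show that every class in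
the top local cohomology vanishes. -/
lemma monomialProperty_of_nontrivial_localCohomology (p : ℕ) [Fact p.Prime] [CharP S p]
    (hx : (Ideal.span (Set.range x)).radical = J)
    (H : Nontrivial ((localCohomology J d).obj (ModuleCat.of R S))) :
    MonomialProperty fun i => algebraMap R S (x i) := by
  intro l hl
  rw [← not_subsingleton_iff_nontrivial,
    subsingleton_localCohomology_iff_forall_prod_pow_smul_mem hx] at H
  refine H fun k (m : S) => ?_
  obtain ⟨e, he⟩ : ∃ e, k ≤ p ^ e := ⟨k, (Nat.lt_pow_self (Fact.out : p.Prime).one_lt).le⟩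
  have hle : k + l * p ^ e ≤ (l + 1) * p ^ e := by lia
  have hmem := powersIdeal_anti _ hle (pow_expChar_pow_mem_powersIdeal p hl e)
  refine ⟨l * p ^ e, mem_powersIdeal_smul_top.mpr ?_⟩
  rw [Algebra.smul_def, map_pow, map_prod, pow_mul]
  exact Ideal.mul_mem_right m _ hmem

end MonomialPropertyLocalCohomology

/-! ### Quasilength and chains of cyclic factors -/

section CyclicChains

variable {S : Type*} [CommRing S] {J K : Ideal S} {m : ℕ → S} {h i j : ℕ}

/-- The ideal generated by `K` and the first `j` terms of the sequence `m`. -/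
def partialSpan (K : Ideal S) (m : ℕ → S) : ℕ → Ideal S
  | 0 => K
  | j + 1 => partialSpan K m j ⊔ Ideal.span {m j}

lemma partialSpan_zero : partialSpan K m 0 = K := rfl

lemma partialSpan_succ : partialSpan K m (j + 1) = partialSpan K m j ⊔ Ideal.span {m j} := rfl

lemma partialSpan_mono : Monotone (partialSpan K m) :=
  monotone_nat_of_le_succ fun _ => le_sup_left

lemma le_partialSpan : K ≤ partialSpan K m j :=
  partialSpan_mono (Nat.zero_le j)

lemma mem_partialSpan_succ : m j ∈ partialSpan K m (j + 1) :=
  Ideal.mem_sup_right (Ideal.mem_span_singleton_self _)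

lemma mem_partialSpan (hij : i < j) : m i ∈ partialSpan K m j :=
  partialSpan_mono (Nat.succ_le_of_lt hij) mem_partialSpan_succ

lemma partialSpan_le {I : Ideal S} (hK : K ≤ I) (hm : ∀ i < j, m i ∈ I) :
    partialSpan K m j ≤ I := by
  induction j with
  | zero => exact hK
  | succ j ih =>
    exact sup_le (ih fun i hi => hm i (Nat.lt_succ_of_lt hi))
      ((Ideal.span_singleton_le_iff_mem I).mpr (hm j (Nat.lt_succ_self j)))

lemma partialSpan_mono_left {K' : Ideal S} (hK : K ≤ K') : partialSpan K m j ≤ partialSpan K' m j :=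
  partialSpan_le (hK.trans le_partialSpan) fun _ hi => mem_partialSpan hi

/-- The sequence `m` of length `h` generates `S` modulo `K`, and each of its terms is killed by `J`
modulo `K` and the preceding terms. This is a filtration of `S ⧸ K` with `h` cyclic factors killed
by `J`, presented by lifts to `S` of generators of the factors. -/
structure IsCyclicChain (J K : Ideal S) (m : ℕ → S) (h : ℕ) : Prop where
  le_colon : ∀ j < h, J ≤ (partialSpan K m j).colon {m j}
  partialSpan_eq_top : partialSpan K m h = ⊤

lemma le_colon_partialSpan : K ≤ (partialSpan K m j).colon {m j} :=
  le_partialSpan.trans Ideal.le_colon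

lemma IsCyclicChain.tail (H : IsCyclicChain J K m (h + 1)) (hm : m 0 ∈ K) :
    IsCyclicChain J K (fun j => m (j + 1)) h := by
  have partialSpan_tail (j : ℕ) :
      partialSpan K (fun j => m (j + 1)) j = partialSpan K m (j + 1) := by
    induction j with
    | zero => exact (sup_eq_left.mpr ((Ideal.span_singleton_le_iff_mem K).mpr hm)).symm
    | succ j ih => rw [partialSpan_succ, ih, ← partialSpan_succ]
  constructor
  · intro j hj
    rw [partialSpan_tail]
    exact H.le_colon (j + 1) (Nat.succ_lt_succ hj)
  · rw [partialSpan_tail, H.partialSpan_eq_top]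

end CyclicChains

section Quasilength

variable {S : Type u} [CommRing S] {J K : Ideal S} {m : ℕ → S} {h j : ℕ}

lemma mkQ_mem_map_mkQ_partialSpan {a : S} :
    K.mkQ a ∈ Submodule.map K.mkQ (partialSpan K m j) ↔ a ∈ partialSpan K m j := by
  rw [← Submodule.mem_comap, Submodule.comap_map_mkQ, sup_eq_right.mpr le_partialSpan]

lemma map_mkQ_partialSpan_succ : Submodule.map K.mkQ (partialSpan K m (j + 1)) =
    Submodule.map K.mkQ (partialSpan K m j) ⊔ Submodule.span S {K.mkQ (m j)} := by
  rw [partialSpan_succ, Submodule.map_sup, Ideal.span, Submodule.map_span, Set.image_singleton]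

lemma map_mkQ_partialSpan_eq_top_iff :
    Submodule.map K.mkQ (partialSpan K m j) = ⊤ ↔ partialSpan K m j = ⊤ := by
  rw [Ideal.eq_top_iff_one, ← mkQ_mem_map_mkQ_partialSpan]
  constructor
  · exact fun H => H ▸ Submodule.mem_top
  · intro H
    rw [mkQ_mem_map_mkQ_partialSpan, ← Ideal.eq_top_iff_one] at H
    rw [H, Submodule.map_top, Submodule.range_mkQ]

lemma IsCyclicChain.hasQLFiltration (H : IsCyclicChain J K m h) :
    HasQLFiltration S J (S ⧸ K) h := by
  refine ⟨fun i => Submodule.map K.mkQ (partialSpan K m i),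
    fun i j hij => Submodule.map_mono (partialSpan_mono hij), Submodule.mkQ_map_self K,
    map_mkQ_partialSpan_eq_top_iff.mpr H.partialSpan_eq_top,
    fun i => ⟨⟨_, map_mkQ_partialSpan_succ⟩, fun a ha => ?_⟩⟩
  rintro _ ⟨b, hb, rfl⟩
  rw [← map_smul]
  refine mkQ_mem_map_mkQ_partialSpan.mpr (sup_le (a := partialSpan K m i)
    (c := Submodule.comap (LinearMap.mulLeft S a) (partialSpan K m i))
    (fun c hc => Ideal.mul_mem_left _ a hc) ?_ hb)
  rw [Ideal.span_singleton_le_iff_mem]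
  exact Submodule.mem_colon_singleton.mp (H.le_colon i i.isLt ha)

lemma exists_isCyclicChain (H : HasQLFiltration S J (S ⧸ K) h) :
    ∃ m : ℕ → S, IsCyclicChain J K m h := by
  obtain ⟨c, -, hbot, htop, hc⟩ := H
  choose gen hgen using fun i => (hc i).1
  choose lift hlift using fun i => K.mkQ_surjective (gen i)
  let m (j : ℕ) : S := if hj : j < h then lift ⟨j, hj⟩ else 0
  have map_partialSpan (i : Fin (h + 1)) : Submodule.map K.mkQ (partialSpan K m i) = c i := by
    induction i using Fin.induction with
    | zero => exact (Submodule.mkQ_map_self K).trans hbot.symm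
    | succ i ih =>
      rw [Fin.val_succ, map_mkQ_partialSpan_succ, hgen, ← ih, ← hlift]
      simp [m]
  refine ⟨m, fun j hj a ha => Submodule.mem_colon_singleton.mpr ?_, ?_⟩
  · rw [← mkQ_mem_map_mkQ_partialSpan, map_smul]
    refine (map_partialSpan (Fin.castSucc ⟨j, hj⟩)).symm ▸ (hc ⟨j, hj⟩).2 a ha _ ?_
    rw [← map_partialSpan]
    exact mkQ_mem_map_mkQ_partialSpan.mpr mem_partialSpan_succ
  · rw [← map_mkQ_partialSpan_eq_top_iff]
    exact (map_partialSpan (Fin.last h)).trans htop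

lemma hasQLFiltration_quotient_iff :
    HasQLFiltration S J (S ⧸ K) h ↔ ∃ m : ℕ → S, IsCyclicChain J K m h :=
  ⟨exists_isCyclicChain, fun ⟨_, H⟩ => H.hasQLFiltration⟩

lemma le_quasilength_quotient_iff {n : ℕ} :
    (n : ℕ∞) ≤ quasilength S J (S ⧸ K) ↔ ∀ (h : ℕ) (m : ℕ → S), IsCyclicChain J K m h → n ≤ h := by
  simp only [quasilength, le_sInf_iff, Set.mem_ofPred_eq, hasQLFiltration_quotient_iff]
  constructor
  · exact fun H h m hm => Nat.cast_le.mp (H h ⟨h, rfl, m, hm⟩)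
  · rintro H _ ⟨h, rfl, m, hm⟩
    exact Nat.cast_le.mpr (H h m hm)

end Quasilength

section Monomials

variable {S : Type*} [CommRing S] {d t j : ℕ} {x : Fin d → S}

/-- The monomials in `x` with all exponents less than `t`, listed in descending lexicographic order
with the last variable dominant: the exponents of the `j`-th one are the base-`t` digits of
`t ^ d - 1 - j`. -/
def descendingMonomial (x : Fin d → S) (t j : ℕ) : S :=
  ∏ i, x i ^ ((t ^ d - 1 - j) / t ^ (i : ℕ) % t)

lemma descendingMonomial_eq_prod_pow (x : Fin d → S) {α : Fin d → ℕ} (hα : ∀ i, α i < t)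
    (hj : ∑ i, α i * t ^ (i : ℕ) + j + 1 = t ^ d) :
    descendingMonomial x t j = ∏ i, x i ^ α i := by
  let a (i : Fin d) : Fin t := ⟨α i, hα i⟩
  have number_eq : t ^ d - 1 - j = (finFunctionFinEquiv a : ℕ) := by
    simp only [finFunctionFinEquiv_apply, a]
    omega
  refine Finset.prod_congr rfl fun i _ => ?_
  rw [number_eq, ← finFunctionFinEquiv_symm_apply_val, Equiv.symm_apply_apply]

lemma exists_exponents_of_lt (hj : j < t ^ d) :
    ∃ α : Fin d → ℕ, (∀ i, α i < t) ∧ ∑ i, α i * t ^ (i : ℕ) + j + 1 = t ^ d := by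
  let N : Fin (t ^ d) := ⟨t ^ d - 1 - j, by omega⟩
  refine ⟨fun i => finFunctionFinEquiv.symm N i, fun i => (finFunctionFinEquiv.symm N i).isLt, ?_⟩
  rw [← finFunctionFinEquiv_apply, Equiv.apply_symm_apply]
  simp only [N]
  omega

lemma descendingMonomial_zero (x : Fin d → S) (ht : 0 < t) :
    descendingMonomial x t 0 = (∏ i, x i) ^ (t - 1) := by
  rw [← Finset.prod_pow]
  refine descendingMonomial_eq_prod_pow x (fun _ => Nat.sub_lt ht one_pos) ?_
  rw [← Finset.mul_sum, Fin.sum_univ_eq_sum_range fun i => t ^ i, add_zero, mul_comm]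
  obtain ⟨t, rfl⟩ := Nat.exists_eq_add_of_lt ht
  rw [zero_add, Nat.add_sub_cancel, geom_sum_mul_add]

lemma prod_pow_mem_partialSpan (x : Fin d → S) {α : Fin d → ℕ}
    (hα : t ^ d ≤ ∑ i, α i * t ^ (i : ℕ) + j) :
    ∏ i, x i ^ α i ∈ partialSpan (powersIdeal x t) (descendingMonomial x t) j := by
  by_cases h : ∃ i, t ≤ α i
  · obtain ⟨i, hi⟩ := h
    exact le_partialSpan (Ideal.mem_of_dvd _
      ((pow_dvd_pow _ hi).trans (Finset.dvd_prod_of_mem _ (Finset.mem_univ i)))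
      (pow_mem_powersIdeal x i t))
  · push Not at h
    have sum_lt : ∑ i, α i * t ^ (i : ℕ) < t ^ d := by
      simpa only [finFunctionFinEquiv_apply] using
        (finFunctionFinEquiv fun i => (⟨α i, h i⟩ : Fin t)).isLt
    obtain ⟨k, hk⟩ := Nat.exists_eq_add_of_lt sum_lt
    rw [← descendingMonomial_eq_prod_pow x h hk.symm]
    exact mem_partialSpan (by omega)

lemma isCyclicChain_descendingMonomial (x : Fin d → S) (ht : 0 < t) :
    IsCyclicChain (Ideal.span (Set.range x)) (powersIdeal x t) (descendingMonomial x t)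
      (t ^ d) where
  le_colon j hj := by
    obtain ⟨α, hα, hsum⟩ := exists_exponents_of_lt hj
    rw [Ideal.span_le]
    rintro _ ⟨i, rfl⟩
    have mul_eq : x i * ∏ l, x l ^ α l = ∏ l, x l ^ (α + Pi.single i 1 : Fin d → ℕ) l := by
      have prod_single : ∏ l, x l ^ (Pi.single i 1 : Fin d → ℕ) l = x i := by
        simp [Pi.single_apply]
      simp only [Pi.add_apply, pow_add, Finset.prod_mul_distrib, prod_single, mul_comm]
    rw [SetLike.mem_coe, Submodule.mem_colon_singleton, smul_eq_mul,
      descendingMonomial_eq_prod_pow x hα hsum, mul_eq]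
    refine prod_pow_mem_partialSpan x ?_
    simp only [Pi.add_apply, add_mul, Finset.sum_add_distrib]
    have := Finset.single_le_sum (f := fun l => (Pi.single i 1 : Fin d → ℕ) l * t ^ (l : ℕ))
      (fun _ _ => Nat.zero_le _) (Finset.mem_univ i)
    have := Nat.pow_pos (n := i) ht
    simp only [Pi.single_eq_same, one_mul] at *
    omega
  partialSpan_eq_top := by
    rw [Ideal.eq_top_iff_one]
    simpa using prod_pow_mem_partialSpan x (α := 0) (j := t ^ d) (t := t) (Nat.le_add_left _ _)

lemma exists_lt_of_sum_mul_lt {α β : Fin d → ℕ}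
    (h : ∑ i, α i * t ^ (i : ℕ) < ∑ i, β i * t ^ (i : ℕ)) : ∃ i, α i < β i := by
  by_contra! hβ
  exact h.not_ge (Finset.sum_le_sum fun i _ => Nat.mul_le_mul_right _ (hβ i))

lemma descendingMonomial_notMem_partialSpan (h : (∏ i, x i) ^ (t - 1) ∉ powersIdeal x t)
    (hj : j < t ^ d) :
    descendingMonomial x t j ∉
      partialSpan (powersIdeal x t) (descendingMonomial x t) j := by
  intro hmem
  obtain ⟨α, hα, hαj⟩ := exists_exponents_of_lt hj
  let c : S := ∏ i, x i ^ (t - 1 - α i)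
  have mul_c (β : Fin d → ℕ) :
      c * ∏ i, x i ^ β i = ∏ i, x i ^ (t - 1 - α i + β i) := by
    simp only [c, pow_add, Finset.prod_mul_distrib]
  have partialSpan_le_colon : partialSpan (powersIdeal x t) (descendingMonomial x t) j ≤
      (powersIdeal x t).colon {c} := by
    refine partialSpan_le Ideal.le_colon fun k hk => ?_
    obtain ⟨β, hβ, hβk⟩ := exists_exponents_of_lt (hk.trans hj)
    obtain ⟨i, hi⟩ : ∃ i, α i < β i := exists_lt_of_sum_mul_lt (t := t) (by omega)
    rw [Submodule.mem_colon_singleton, descendingMonomial_eq_prod_pow x hβ hβk, smul_eq_mul,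
      mul_comm, mul_c]
    refine Ideal.mem_of_dvd _ ((pow_dvd_pow (x i) ?_).trans
      (Finset.dvd_prod_of_mem _ (Finset.mem_univ i))) (pow_mem_powersIdeal x i t)
    have := hα i
    omega
  refine h ?_
  have mul_mem := Submodule.mem_colon_singleton.mp (partialSpan_le_colon hmem)
  rw [descendingMonomial_eq_prod_pow x hα hαj, smul_eq_mul, mul_comm, mul_c] at mul_mem
  rw [← Finset.prod_pow]
  convert mul_mem using 3 with i
  have := hα i
  omega

end Monomials

section QSequence

variable {S : Type u} [CommRing S] {d : ℕ} {x : Fin d → S}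

lemma IsQSequence.monomialProperty (h : IsQSequence x) : MonomialProperty x := by
  intro l hl
  have chain := isCyclicChain_descendingMonomial x l.succ_pos
  obtain ⟨k, hk⟩ := Nat.exists_eq_succ_of_ne_zero (pow_pos l.succ_pos d).ne'
  rw [hk] at chain
  have le_quasilength : ((l + 1) ^ d : ℕ) ≤ quasilength S (Ideal.span (Set.range x))
      (S ⧸ powersIdeal x (l + 1)) := by exact_mod_cast h.2 (l + 1) l.succ_pos
  have le_k := le_quasilength_quotient_iff.mp le_quasilength k _ (chain.tail
    (by rwa [descendingMonomial_zero x l.succ_pos]))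
  rw [hk] at le_k
  exact Nat.not_succ_le_self k le_k

end QSequence

/-! ### Colengths of powers of a system of parameters -/

section Colength

variable {R : Type*} [CommRing R] {I K L : Ideal R} {m : ℕ → R} {h : ℕ}

/-- The length of the `R`-module `R ⧸ I`. -/
noncomputable def colength (I : Ideal R) : ℕ∞ := Module.length R (R ⧸ I)

lemma colength_eq_coheight (I : Ideal R) : colength I = Order.coheight I :=
  Module.length_quotient

lemma colength_anti : Antitone (colength (R := R)) := fun I J h => by
  simpa only [colength_eq_coheight] using Order.coheight_anti h

lemma colength_top : colength (⊤ : Ideal R) = 0 := by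
  rw [colength_eq_coheight, Order.coheight_top]

lemma colength_eq_add_colon (L : Ideal R) (a : R) :
    colength L = colength (L.colon {a}) + colength (L ⊔ Ideal.span {a}) := by
  let f := LinearMap.toSpanSingleton R R a
  have colon_eq : L.colon {a} = Submodule.comap f L := by
    ext r
    rw [Submodule.mem_colon_singleton, Submodule.mem_comap, LinearMap.toSpanSingleton_apply]
  refine Module.length_eq_add_of_exact (Submodule.mapQ _ L f colon_eq.le)
    (Submodule.factor le_sup_left) ?_ (Submodule.factor_surjective _)
    (LinearMap.exact_iff.mpr ?_)
  · rw [← LinearMap.ker_eq_bot, Submodule.ker_mapQ, ← colon_eq, Submodule.mkQ_map_self]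
  · rw [Submodule.factor, Submodule.ker_mapQ, Submodule.range_mapQ, Submodule.comap_id,
      Submodule.map_sup, Submodule.mkQ_map_self, bot_sup_eq, LinearMap.range_toSpanSingleton,
      Ideal.span]

lemma colength_le_add_partialSpan {b : Ideal R}
    (H : ∀ j < h, b ≤ (partialSpan K m j).colon {m j}) :
    colength K ≤ h * colength b + colength (partialSpan K m h) := by
  induction h with
  | zero => simp [partialSpan_zero]
  | succ h ih =>
    calc colength K ≤ h * colength b + colength (partialSpan K m h) :=
          ih fun j hj => H j (Nat.lt_succ_of_lt hj)
      _ ≤ h * colength b + (colength b + colength (partialSpan K m (h + 1))) := by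
        rw [colength_eq_add_colon (partialSpan K m h) (m h), ← partialSpan_succ]
        gcongr
        exact colength_anti (H h (Nat.lt_succ_self h))
      _ = _ := by push_cast; ring

lemma add_colength_partialSpan_le (H : ∀ j < h, m j ∉ partialSpan K m j) :
    h + colength (partialSpan K m h) ≤ colength K := by
  induction h with
  | zero => simp [partialSpan_zero]
  | succ h ih =>
    have partialSpan_lt : partialSpan K m h < partialSpan K m (h + 1) :=
      (partialSpan_mono (Nat.le_succ h)).lt_of_not_ge
        fun hle => H h (Nat.lt_succ_self h) (hle mem_partialSpan_succ)
    calc ((h + 1 : ℕ) : ℕ∞) + colength (partialSpan K m (h + 1))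
        = h + (colength (partialSpan K m (h + 1)) + 1) := by push_cast; ring
      _ ≤ h + colength (partialSpan K m h) := by
        gcongr
        simpa only [colength_eq_coheight] using Order.coheight_add_one_le partialSpan_lt
      _ ≤ colength K := ih fun j hj => H j (Nat.lt_succ_of_lt hj)

end Colength

section ColengthPowersIdeal

variable {R : Type*} [CommRing R] {d : ℕ}

lemma colength_powersIdeal_sup_le (x : Fin d → R) (L : Ideal R) {s : ℕ} (hs : 0 < s) :
    colength (powersIdeal x s ⊔ L) ≤ (s ^ d : ℕ) * colength (Ideal.span (Set.range x) ⊔ L) := by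
  have chain := isCyclicChain_descendingMonomial x hs
  have partialSpan_eq_top :
      partialSpan (powersIdeal x s ⊔ L) (descendingMonomial x s) (s ^ d) = ⊤ :=
    top_le_iff.mp (chain.partialSpan_eq_top.symm.le.trans (partialSpan_mono_left le_sup_left))
  have span_le_colon (j : ℕ) (hj : j < s ^ d) : Ideal.span (Set.range x) ⊔ L ≤
      (partialSpan (powersIdeal x s ⊔ L) (descendingMonomial x s) j).colon
        {descendingMonomial x s j} :=
    sup_le ((chain.le_colon j hj).trans
      (Submodule.colon_mono (partialSpan_mono_left le_sup_left) subset_rfl))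
      (le_sup_right.trans le_colon_partialSpan)
  simpa only [partialSpan_eq_top, colength_top, add_zero] using
    colength_le_add_partialSpan span_le_colon

lemma colength_powersIdeal_mul_le (x : Fin d → R) (k : ℕ) {s : ℕ} (hs : 0 < s) :
    colength (powersIdeal x (k * s)) ≤ (s ^ d : ℕ) * colength (powersIdeal x k) := by
  simpa only [powersIdeal, pow_mul, sup_bot_eq] using
    colength_powersIdeal_sup_le (fun i => x i ^ k) ⊥ hs

lemma MonomialProperty.pow_le_colength {x : Fin d → R} (h : MonomialProperty x) {t : ℕ}
    (ht : 0 < t) : (t ^ d : ℕ) ≤ colength (powersIdeal x t) := by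
  refine le_self_add.trans (add_colength_partialSpan_le fun j hj =>
    descendingMonomial_notMem_partialSpan (fun hmem => h (t - 1) ?_) hj)
  rwa [Nat.sub_add_cancel ht]

lemma colength_powersIdeal_le_of_partialSpan (x : Fin d → R) (q T : ℕ) {c : R} {m : ℕ → R} {h : ℕ}
    (H : ∀ j < h, ∀ i, c * x i ^ q * m j ∈ partialSpan (powersIdeal x T) m j)
    (hc : c ∈ partialSpan (powersIdeal x T) m h) :
    colength (powersIdeal x T) ≤
      h * (d * colength (powersIdeal x T ⊔ Ideal.span {c}) + colength (powersIdeal x q)) +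
        colength (powersIdeal x T ⊔ Ideal.span {c}) := by
  let b : Ideal R := powersIdeal x T ⊔ Ideal.span (Set.range fun i => c * x i ^ q)
  have colength_le : colength (powersIdeal x T) ≤
      h * colength b + colength (partialSpan (powersIdeal x T) m h) := by
    refine colength_le_add_partialSpan fun j hj =>
      sup_le le_colon_partialSpan (Ideal.span_le.mpr ?_)
    rintro _ ⟨i, rfl⟩
    exact Submodule.mem_colon_singleton.mpr (H j hj i)
  let y (j : ℕ) : R := if hj : j < d then x ⟨j, hj⟩ ^ q else 0
  have y_eq (i : Fin d) : y i = x i ^ q := dif_pos i.isLt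
  have colength_b_le : colength b ≤
      d * colength (powersIdeal x T ⊔ Ideal.span {c}) + colength (partialSpan b y d) := by
    refine colength_le_add_partialSpan fun j hj =>
      sup_le (le_sup_left.trans le_colon_partialSpan) ?_
    rw [Ideal.span_singleton_le_iff_mem, Submodule.mem_colon_singleton]
    exact le_partialSpan (Ideal.mem_sup_right (Ideal.subset_span
      ⟨⟨j, hj⟩, congrArg (c * ·) (y_eq ⟨j, hj⟩).symm⟩))
  have powersIdeal_le : powersIdeal x q ≤ partialSpan b y d := by
    rw [powersIdeal, Ideal.span_le]
    rintro _ ⟨i, rfl⟩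
    change x i ^ q ∈ partialSpan b y d
    rw [← y_eq]
    exact mem_partialSpan i.isLt
  calc colength (powersIdeal x T)
      ≤ h * colength b + colength (partialSpan (powersIdeal x T) m h) := colength_le
    _ ≤ _ := by
      gcongr
      · exact colength_b_le.trans (by gcongr; exact colength_anti powersIdeal_le)
      · exact colength_anti (sup_le le_partialSpan ((Ideal.span_singleton_le_iff_mem _).mpr hc))

end ColengthPowersIdeal

section SystemsOfParameters

variable {R : Type*} [CommRing R] {d : ℕ} {x : Fin d → R}

lemma radical_powersIdeal (x : Fin d → R) {k : ℕ} (hk : 0 < k) :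
    (powersIdeal x k).radical = (Ideal.span (Set.range x)).radical := by
  apply le_antisymm
  · refine Ideal.radical_mono (Ideal.span_le.mpr ?_)
    rintro _ ⟨i, rfl⟩
    exact Ideal.pow_mem_of_mem _ (Ideal.subset_span (Set.mem_range_self i)) k hk
  · rw [Ideal.radical_le_radical_iff, Ideal.span_le]
    rintro _ ⟨i, rfl⟩
    exact ⟨k, pow_mem_powersIdeal x i k⟩

lemma pow_mem_powersIdeal_of_mem_span {a : R} (ha : a ∈ Ideal.span (Set.range x)) {k : ℕ}
    (hk : 0 < k) : a ^ ((d + 1) * k) ∈ powersIdeal x k := by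
  obtain ⟨c, rfl⟩ := Ideal.mem_span_range_iff_exists_fun.mp ha
  have sum_pow_mem := Ideal.sum_pow_mem_span_pow Finset.univ (fun i => c i * x i) (k - 1)
  rw [Finset.card_univ, Fintype.card_fin, Nat.sub_add_cancel hk] at sum_pow_mem
  have le_exponent : d * (k - 1) + 1 ≤ (d + 1) * k := by
    rw [add_mul, one_mul]
    exact add_le_add (Nat.mul_le_mul_left d (Nat.sub_le k 1)) hk
  refine Ideal.mem_of_dvd _ (pow_dvd_pow _ le_exponent) (Ideal.span_le.mpr ?_ sum_pow_mem)
  rintro _ ⟨i, -, rfl⟩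
  simp only [mul_pow]
  exact Ideal.mul_mem_left _ _ (pow_mem_powersIdeal x i k)

lemma exists_powersIdeal_mul_le {e : ℕ} {y : Fin e → R}
    (hy : Ideal.span (Set.range y) ≤ (Ideal.span (Set.range x)).radical) :
    ∃ r, 0 < r ∧ ∀ k, 0 < k → powersIdeal y (r * k) ≤ powersIdeal x k := by
  obtain ⟨N, hN⟩ := Ideal.exists_pow_le_of_le_radical_of_fg hy
    (Submodule.fg_span (Set.finite_range y))
  refine ⟨(N + 1) * (d + 1), by positivity, fun k hk => Ideal.span_le.mpr ?_⟩
  rintro _ ⟨i, rfl⟩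
  have pow_mem : y i ^ (N + 1) ∈ Ideal.span (Set.range x) :=
    Ideal.pow_le_pow_right N.le_succ |>.trans hN <|
      Ideal.pow_mem_pow (Ideal.subset_span (Set.mem_range_self i)) _
  simp only [mul_assoc, pow_mul (y i) (N + 1)]
  exact pow_mem_powersIdeal_of_mem_span pow_mem hk

variable [IsNoetherianRing R] [IsLocalRing R]

lemma exists_radical_span_eq_maximalIdeal (hd : ringKrullDim R = d) :
    ∃ x : Fin d → R, (Ideal.span (Set.range x)).radical = IsLocalRing.maximalIdeal R := by
  obtain ⟨s, hs, hcard⟩ := Ideal.exists_finset_card_eq_height_of_isNoetherianRing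
    (IsLocalRing.maximalIdeal R)
  have card_eq : s.card = d := by
    have := IsLocalRing.maximalIdeal_height_eq_ringKrullDim (R := R)
    rw [hd, ← hcard] at this
    exact_mod_cast this
  let e := (s.equivFinOfCardEq card_eq).symm
  refine ⟨fun i => e i, ?_⟩
  rw [show (fun i => (e i : R)) = Subtype.val ∘ e from rfl, e.surjective.range_comp,
    Subtype.range_coe_subtype, Finset.setOfPred_mem]
  refine le_antisymm (hs.1.1.radical_le_iff.mpr hs.1.2) ?_
  rw [Ideal.radical_eq_sInf]
  exact le_sInf fun q ⟨hsq, hq⟩ => hs.2 ⟨hq, hsq⟩ (IsLocalRing.le_maximalIdeal hq.ne_top)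

lemma exists_radical_span_sup_eq_maximalIdeal (hd : ringKrullDim R = d) {c : R}
    (hc : c ∈ nonZeroDivisors R) (hcm : c ∈ IsLocalRing.maximalIdeal R) :
    ∃ e < d, ∃ y : Fin e → R,
      (Ideal.span (Set.range y) ⊔ Ideal.span {c}).radical = IsLocalRing.maximalIdeal R := by
  let π := Ideal.Quotient.mk (Ideal.span {c})
  have π_surjective : Function.Surjective π := Ideal.Quotient.mk_surjective
  have : Nontrivial (R ⧸ Ideal.span {c}) :=
    Ideal.Quotient.nontrivial_iff.mpr (Ideal.span_singleton_ne_top hcm)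
  have : IsLocalRing (R ⧸ Ideal.span {c}) := IsLocalRing.of_surjective' π π_surjective
  have dim_eq := IsLocalRing.maximalIdeal_height_eq_ringKrullDim (R := R ⧸ Ideal.span {c})
  obtain ⟨e, he⟩ := ENat.ne_top_iff_exists.mp (Ideal.height_ne_top
    (I := IsLocalRing.maximalIdeal (R ⧸ Ideal.span {c})) Ideal.IsPrime.ne_top')
  rw [← he] at dim_eq
  have e_lt : e + 1 ≤ d := by
    have := ringKrullDim_quotient_succ_le_of_nonZeroDivisor hc
    rw [← dim_eq, hd] at this
    exact_mod_cast this
  obtain ⟨y', hy'⟩ := exists_radical_span_eq_maximalIdeal dim_eq.symm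
  choose y hy using fun i => π_surjective (y' i)
  obtain rfl : (fun i => π (y i)) = y' := funext hy
  refine ⟨e, e_lt, y, ?_⟩
  have sup_eq : Ideal.span (Set.range y) ⊔ Ideal.span {c} =
      (Ideal.span (Set.range fun i => π (y i))).comap π := by
    rw [show (fun i => π (y i)) = π ∘ y from rfl, Set.range_comp, ← Ideal.map_span,
      Ideal.comap_map_of_surjective _ π_surjective, ← RingHom.ker_eq_comap_bot, Ideal.mk_ker]
  rw [sup_eq, ← Ideal.comap_radical, hy']
  exact IsLocalRing.eq_maximalIdeal (Ideal.comap_isMaximal_of_surjective _ π_surjective)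

lemma colength_ne_top_of_radical_eq {I : Ideal R}
    (hI : I.radical = IsLocalRing.maximalIdeal R) : colength I ≠ ⊤ := by
  have : IsArtinianRing (R ⧸ I) :=
    IsLocalRing.quotient_artinian_of_mem_minimalPrimes_of_isLocalRing I (by
      rw [← Ideal.radical_minimalPrimes, hI, Ideal.minimalPrimes_eq_subsingleton_self]
      rfl)
  rw [colength, Module.length_eq_of_surjective (R := R ⧸ I) (S := R) Ideal.Quotient.mk_surjective]
  exact Module.length_ne_top

lemma exists_colength_sup_mul_le (hd : ringKrullDim R = d)
    (hx : (Ideal.span (Set.range x)).radical = IsLocalRing.maximalIdeal R)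
    {c : R} (hc : c ∈ nonZeroDivisors R) :
    ∃ B : ℕ, ∀ k, 0 < k →
      colength (powersIdeal x k ⊔ Ideal.span {c}) * k ≤ (B * k ^ d : ℕ) := by
  by_cases hcm : c ∈ IsLocalRing.maximalIdeal R
  · obtain ⟨e, he, y, hy⟩ := exists_radical_span_sup_eq_maximalIdeal hd hc hcm
    obtain ⟨A, hA⟩ := ENat.ne_top_iff_exists.mp (colength_ne_top_of_radical_eq hy)
    obtain ⟨r, hr, powersIdeal_le⟩ := exists_powersIdeal_mul_le (x := x) (y := y)
      (by rw [hx, ← hy]; exact le_sup_left.trans Ideal.le_radical)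
    refine ⟨r ^ e * A, fun k hk => ?_⟩
    have colength_le : colength (powersIdeal x k ⊔ Ideal.span {c}) ≤ ((r * k) ^ e * A : ℕ) := by
      rw [Nat.cast_mul, hA]
      exact (colength_anti (sup_le_sup_right (powersIdeal_le k hk) _)).trans
        (colength_powersIdeal_sup_le y _ (Nat.mul_pos hr hk))
    calc colength (powersIdeal x k ⊔ Ideal.span {c}) * k ≤ ((r * k) ^ e * A : ℕ) * k := by gcongr
      _ = (r ^ e * A * k ^ (e + 1) : ℕ) := by
        push_cast
        ring
      _ ≤ (r ^ e * A * k ^ d : ℕ) := by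
        gcongr
        exact he
  · refine ⟨0, fun k _ => ?_⟩
    rw [Ideal.span_singleton_eq_top.mpr (not_not.mp hcm), sup_top_eq, colength_top]
    simp

end SystemsOfParameters

section Asymptotics

open Filter Topology

lemma div_pow_le_one_add_div_pow_mul {a : ℕ → ℝ} {d : ℕ} (mono : Monotone a)
    (mul_le : ∀ k s, 0 < s → a (k * s) ≤ s ^ d * a k) {k n : ℕ} (ha : 0 ≤ a k) (hk : 0 < k)
    (hn : 0 < n) : a n / n ^ d ≤ (1 + k / n) ^ d * (a k / k ^ d) := by
  have le_mul : n ≤ k * (n / k + 1) := (Nat.lt_mul_div_succ n hk).le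
  have cast_le : ((n / k + 1 : ℕ) : ℝ) ≤ n * (1 + k / n) / k := by
    rw [mul_add, mul_div_cancel₀ _ (by positivity), add_div, mul_one, div_self (by positivity)]
    push_cast
    gcongr
    exact Nat.cast_div_le
  rw [div_le_iff₀ (by positivity)]
  calc a n ≤ (n / k + 1 : ℕ) ^ d * a k := (mono le_mul).trans (mul_le k _ (Nat.succ_pos _))
    _ ≤ (n * (1 + k / n) / k) ^ d * a k := by gcongr
    _ = (1 + k / n) ^ d * (a k / k ^ d) * n ^ d := by
      rw [div_pow, mul_pow]
      ring

/-- A multiplicative analogue of Fekete's lemma: the limit is the infimum of the quotients. -/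
lemma exists_tendsto_div_pow {a : ℕ → ℝ} {d : ℕ} (nonneg : ∀ n, 0 ≤ a n) (mono : Monotone a)
    (mul_le : ∀ k s, 0 < s → a (k * s) ≤ s ^ d * a k) :
    ∃ β, Tendsto (fun n => a n / n ^ d) atTop (𝓝 β) := by
  let values : Set ℝ := (fun n : ℕ => a n / n ^ d) '' Set.Ioi 0
  have bddBelow : BddBelow values :=
    ⟨0, by rintro _ ⟨n, -, rfl⟩; exact div_nonneg (nonneg n) (by positivity)⟩
  refine ⟨sInf values, tendsto_order.mpr ⟨fun b hb => ?_, fun b hb => ?_⟩⟩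
  · filter_upwards [eventually_gt_atTop 0] with n hn
    exact hb.trans_le (csInf_le bddBelow ⟨n, hn, rfl⟩)
  · obtain ⟨_, ⟨k, hk, rfl⟩, hkb⟩ := exists_lt_of_csInf_lt (Set.nonempty_Ioi.image _) hb
    have tendsto_bound : Tendsto (fun n : ℕ => (1 + k / n : ℝ) ^ d * (a k / k ^ d)) atTop
        (𝓝 ((1 + 0) ^ d * (a k / k ^ d))) :=
      ((tendsto_const_nhds.add (tendsto_const_div_atTop_nhds_zero_nat (k : ℝ))).pow d).mul_const _
    rw [add_zero, one_pow, one_mul] at tendsto_bound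
    filter_upwards [eventually_gt_atTop 0, tendsto_bound.eventually_lt_const hkb] with n hn hnb
    exact (div_pow_le_one_add_div_pow_mul mono mul_le (nonneg k) hk hn).trans_lt hnb

lemma tendsto_mul_left_div_pow {a : ℕ → ℝ} {d t : ℕ} {β : ℝ} (ht : 0 < t)
    (h : Tendsto (fun n => a n / n ^ d) atTop (𝓝 β)) :
    Tendsto (fun n => a (t * n) / n ^ d) atTop (𝓝 (t ^ d * β)) := by
  have tendsto_comp := (h.comp (tendsto_id.const_mul_atTop' ht)).const_mul ((t : ℝ) ^ d)
  refine tendsto_comp.congr fun n => ?_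
  have ht' : (t : ℝ) ^ d ≠ 0 := by positivity
  simp only [Function.comp_apply, id_eq, Nat.cast_mul, mul_pow]
  rw [← mul_div_assoc, mul_div_mul_left _ _ ht']

variable {R : Type*} [CommRing R] [IsNoetherianRing R] [IsLocalRing R] {d : ℕ} {x : Fin d → R}

lemma colength_powersIdeal_ne_top
    (hx : (Ideal.span (Set.range x)).radical = IsLocalRing.maximalIdeal R) (k : ℕ) :
    colength (powersIdeal x k) ≠ ⊤ :=
  ne_top_of_le_ne_top
    (colength_ne_top_of_radical_eq ((radical_powersIdeal x k.succ_pos).trans hx))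
    (colength_anti (powersIdeal_anti x k.le_succ))

lemma exists_tendsto_colength_div_pow
    (hx : (Ideal.span (Set.range x)).radical = IsLocalRing.maximalIdeal R)
    (h : MonomialProperty x) :
    ∃ β : ℝ, 0 < β ∧
      Tendsto (fun n : ℕ => ((colength (powersIdeal x n)).toNat : ℝ) / n ^ d) atTop (𝓝 β) := by
  have ne_top := colength_powersIdeal_ne_top hx
  obtain ⟨β, hβ⟩ := exists_tendsto_div_pow (a := fun n => ((colength (powersIdeal x n)).toNat : ℝ))
    (d := d) (fun n => Nat.cast_nonneg _)
    (fun k l hkl => Nat.cast_le.mpr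
      (ENat.toNat_le_toNat (colength_anti (powersIdeal_anti x hkl)) (ne_top l)))
    (fun k s hs => by
      have := ENat.toNat_le_toNat (colength_powersIdeal_mul_le x k hs)
        (WithTop.mul_ne_top (ENat.natCast_ne_top _) (ne_top k))
      rw [ENat.toNat_mul, ENat.toNat_natCast] at this
      exact_mod_cast this)
  refine ⟨β, zero_lt_one.trans_le (ge_of_tendsto hβ ?_), hβ⟩
  filter_upwards [eventually_gt_atTop 0] with n hn
  rw [one_le_div₀ (by positivity)]
  have := ENat.toNat_le_toNat (h.pow_le_colength hn) (ne_top n)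
  rw [ENat.toNat_natCast] at this
  exact_mod_cast this

lemma tendsto_colength_sup_div_pow (hd : ringKrullDim R = d)
    (hx : (Ideal.span (Set.range x)).radical = IsLocalRing.maximalIdeal R)
    {c : R} (hc : c ∈ nonZeroDivisors R) :
    Tendsto (fun n : ℕ => ((colength (powersIdeal x n ⊔ Ideal.span {c})).toNat : ℝ) / n ^ d) atTop
      (𝓝 0) := by
  obtain ⟨B, hB⟩ := exists_colength_sup_mul_le hd hx hc
  refine squeeze_zero' (Eventually.of_forall fun n => by positivity) ?_
    (tendsto_const_div_atTop_nhds_zero_nat (B : ℝ))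
  filter_upwards [eventually_gt_atTop 0] with n hn
  have := ENat.toNat_le_toNat (hB n hn) (ENat.natCast_ne_top _)
  rw [ENat.toNat_mul, ENat.toNat_natCast, ENat.toNat_natCast] at this
  rw [div_le_div_iff₀ (by positivity) (by positivity)]
  exact_mod_cast this

lemma pow_le_of_frequently_mem_partialSpan (hd : ringKrullDim R = d)
    (hx : (Ideal.span (Set.range x)).radical = IsLocalRing.maximalIdeal R)
    (hmon : MonomialProperty x) {c : R} (hc : c ∈ nonZeroDivisors R) {t h : ℕ} (ht : 0 < t)
    (H : ∃ᶠ q in atTop, ∃ m : ℕ → R,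
      (∀ j < h, ∀ i, c * x i ^ q * m j ∈ partialSpan (powersIdeal x (t * q)) m j) ∧
        c ∈ partialSpan (powersIdeal x (t * q)) m h) :
    t ^ d ≤ h := by
  let a (n : ℕ) : ℕ := (colength (powersIdeal x n)).toNat
  let b (n : ℕ) : ℕ := (colength (powersIdeal x n ⊔ Ideal.span {c})).toNat
  obtain ⟨β, hβ, tendsto_a⟩ := exists_tendsto_colength_div_pow hx hmon
  have tendsto_b := tendsto_mul_left_div_pow ht (tendsto_colength_sup_div_pow hd hx hc)
  have tendsto_rhs := (((tendsto_b.const_mul (d : ℝ)).add tendsto_a).const_mul (h : ℝ)).add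
    tendsto_b
  have le_frequently : ∃ᶠ q : ℕ in atTop, (a (t * q) / q ^ d : ℝ) ≤
      h * (d * (b (t * q) / q ^ d) + a q / q ^ d) + b (t * q) / q ^ d := by
    refine H.mono fun q ⟨m, hm, hcm⟩ => ?_
    have a_ne_top := colength_powersIdeal_ne_top hx
    have b_ne_top := ne_top_of_le_ne_top (a_ne_top (t * q))
      (colength_anti (le_sup_left (b := Ideal.span {c})))
    have a_le := colength_powersIdeal_le_of_partialSpan x q (t * q) hm hcm
    rw [← ENat.natCast_toNat (a_ne_top _), ← ENat.natCast_toNat (a_ne_top q),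
      ← ENat.natCast_toNat b_ne_top] at a_le
    have a_le_real : (a (t * q) : ℝ) ≤ h * (d * b (t * q) + a q) + b (t * q) := by
      exact_mod_cast a_le
    simp only [← mul_div_assoc, ← add_div]
    gcongr
  have le_limit := le_of_tendsto_of_tendsto_of_frequently
    (tendsto_mul_left_div_pow ht tendsto_a) tendsto_rhs le_frequently
  rw [mul_zero, mul_zero, zero_add, add_zero] at le_limit
  exact_mod_cast le_of_mul_le_mul_right le_limit hβ

end Asymptotics

/-! ### The multiplier argument -/

section ChainTransport

variable {S T : Type*} [CommRing S] [CommRing T] {J K : Ideal S} {m : ℕ → S} {h : ℕ}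

lemma map_partialSpan (f : S →+* T) (K : Ideal S) (m : ℕ → S) (j : ℕ) :
    (partialSpan K m j).map f = partialSpan (K.map f) (fun i => f (m i)) j := by
  induction j with
  | zero => rfl
  | succ j ih =>
    rw [partialSpan_succ, Ideal.map_sup, ih, Ideal.map_span, Set.image_singleton, partialSpan_succ]

lemma IsCyclicChain.map (H : IsCyclicChain J K m h) (f : S →+* T) :
    IsCyclicChain (J.map f) (K.map f) (fun j => f (m j)) h where
  le_colon j hj := by
    rw [Ideal.map_le_iff_le_comap, ← map_partialSpan]
    intro a ha
    rw [Ideal.mem_comap, Submodule.mem_colon_singleton, smul_eq_mul, ← map_mul]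
    exact Ideal.mem_map_of_mem f (Submodule.mem_colon_singleton.mp (H.le_colon j hj ha))
  partialSpan_eq_top := by rw [← map_partialSpan, H.partialSpan_eq_top, Ideal.map_top]

lemma partialSpan_mul_isUnit (K : Ideal S) (m : ℕ → S) {v : ℕ → S} (hv : ∀ i, IsUnit (v i))
    (j : ℕ) : partialSpan K (fun i => m i * v i) j = partialSpan K m j := by
  induction j with
  | zero => rfl
  | succ j ih => rw [partialSpan_succ, ih, Ideal.span_singleton_mul_right_unit (hv j),
      partialSpan_succ]

lemma IsCyclicChain.mul_isUnit (H : IsCyclicChain J K m h) {v : ℕ → S} (hv : ∀ i, IsUnit (v i)) :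
    IsCyclicChain J K (fun i => m i * v i) h where
  le_colon j hj := by
    rw [partialSpan_mul_isUnit K m hv]
    intro a ha
    rw [Submodule.mem_colon_singleton, smul_eq_mul, ← mul_assoc]
    exact Ideal.mul_mem_right _ _ (Submodule.mem_colon_singleton.mp (H.le_colon j hj ha))
  partialSpan_eq_top := by rw [partialSpan_mul_isUnit K m hv, H.partialSpan_eq_top]

variable {B C : Type*} [CommRing B] [CommRing C] [Algebra B C] {c : B} [IsLocalization.Away c C]

lemma exists_pow_mul_mem_of_algebraMap_mem_map {I : Ideal B} {a : B}
    (ha : algebraMap B C a ∈ I.map (algebraMap B C)) : ∃ N, c ^ N * a ∈ I := by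
  rw [IsLocalization.algebraMap_mem_map_algebraMap_iff (Submonoid.powers c)] at ha
  obtain ⟨_, ⟨N, rfl⟩, hN⟩ := ha
  exact ⟨N, hN⟩

lemma IsCyclicChain.exists_pow_mul_mem_partialSpan {ι : Type*} [Finite ι] {y : ι → B} {K : Ideal B}
    {m : ℕ → C} (H : IsCyclicChain (Ideal.span (Set.range fun i => algebraMap B C (y i)))
      (K.map (algebraMap B C)) m h) :
    ∃ (N : ℕ) (M : ℕ → B), (∀ j < h, ∀ i, c ^ N * y i * M j ∈ partialSpan K M j) ∧
      c ^ N ∈ partialSpan K M h := by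
  cases nonempty_fintype ι
  choose a ha using fun j => IsLocalization.surj (Submonoid.powers c) (m j)
  have H' := H.mul_isUnit fun j => IsLocalization.map_units C (a j).2
  simp only [ha] at H'
  have colon_le : ∀ j i, ∃ N, j < h →
      c ^ N * (y i * (a j).1) ∈ partialSpan K (fun j => (a j).1) j := by
    intro j i
    by_cases hj : j < h
    · have mem := Submodule.mem_colon_singleton.mp
        (H'.le_colon j hj (Ideal.subset_span (Set.mem_range_self i)))
      rw [smul_eq_mul, ← map_mul, ← map_partialSpan] at mem
      obtain ⟨N, hN⟩ := exists_pow_mul_mem_of_algebraMap_mem_map (c := c) mem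
      exact ⟨N, fun _ => hN⟩
    · exact ⟨0, fun hj' => absurd hj' hj⟩
  have one_mem : algebraMap B C 1 ∈ (partialSpan K (fun j => (a j).1) h).map (algebraMap B C) := by
    rw [map_partialSpan, H'.partialSpan_eq_top]
    exact Submodule.mem_top
  choose N hN using colon_le
  obtain ⟨N', hN'⟩ := exists_pow_mul_mem_of_algebraMap_mem_map (c := c) one_mem
  let L := N' + ∑ j ∈ Finset.range h, ∑ i, N j i
  refine ⟨L, fun j => (a j).1, fun j hj i => ?_, ?_⟩
  · have le : N j i ≤ L := calc
      N j i ≤ ∑ i, N j i := Finset.single_le_sum (fun _ _ => Nat.zero_le _) (Finset.mem_univ i)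
      _ ≤ ∑ j ∈ Finset.range h, ∑ i, N j i :=
        Finset.single_le_sum (f := fun j => ∑ i, N j i) (fun _ _ => Nat.zero_le _)
          (Finset.mem_range.mpr hj)
      _ ≤ L := Nat.le_add_left _ _
    rw [mul_assoc]
    exact Ideal.mem_of_dvd _ (mul_dvd_mul_right (pow_dvd_pow c le) _) (hN j i hj)
  · rw [mul_one] at hN'
    exact Ideal.mem_of_dvd _ (pow_dvd_pow c (Nat.le_add_right _ _)) hN'

end ChainTransport

section Multiplier

variable {R : Type u} [CommRing R] {n : ℕ} {g : Fin n → R} {u : R}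

/-- The `R`-algebra obtained by adjoining generic coefficients `Z` with `u = ∑ l, Z l * g l`. -/
abbrev GenericForcingAlgebra (g : Fin n → R) (u : R) : Type u :=
  MvPolynomial (Fin n) R ⧸
    Ideal.span {MvPolynomial.C u - ∑ l : Fin n, MvPolynomial.X l * MvPolynomial.C (g l)}

lemma algebraMap_mem_powersIdeal_one : algebraMap R (GenericForcingAlgebra g u) u ∈
    powersIdeal (fun l => algebraMap R (GenericForcingAlgebra g u) (g l)) 1 := by
  have u_eq : algebraMap R (GenericForcingAlgebra g u) u =
      ∑ l, Ideal.Quotient.mk _ (MvPolynomial.X l) *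
        algebraMap R (GenericForcingAlgebra g u) (g l) := by
    have := Ideal.Quotient.eq.mpr (Ideal.mem_span_singleton_self
      (MvPolynomial.C u - ∑ l : Fin n, MvPolynomial.X l * MvPolynomial.C (g l)))
    rw [map_sum] at this
    simp only [map_mul] at this
    exact this
  rw [u_eq]
  exact Ideal.sum_mem _ fun l _ => Ideal.mul_mem_left _ _
    (by simpa only [pow_one] using pow_mem_powersIdeal _ l 1)

lemma apply_mem_of_mem_map {S : Type*} [CommRing S] [Algebra R S] (f : S →ₗ[R] R) {I : Ideal R}
    {s : S} (hs : s ∈ I.map (algebraMap R S)) : f s ∈ I := by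
  rw [← Submodule.restrictScalars_mem R, ← Ideal.smul_top_eq_map] at hs
  have := Submodule.mem_map_of_mem (f := f) hs
  rw [Submodule.map_smul''] at this
  exact Submodule.smul_le.mpr (fun a ha b _ => I.mul_mem_right b ha) this

lemma apply_one_mul_pow_mem {S : Type*} [CommRing S] [Algebra R S] (p : ℕ) [ExpChar S p]
    (f : S →ₗ[R] R) (hu : algebraMap R S u ∈ powersIdeal (fun l => algebraMap R S (g l)) 1)
    (e : ℕ) : f 1 * u ^ p ^ e ∈ powersIdeal g (p ^ e) := by
  have pow_mem := pow_expChar_pow_mem_powersIdeal p hu e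
  rw [one_mul, ← map_powersIdeal, ← map_pow] at pow_mem
  have := apply_mem_of_mem_map f pow_mem
  rwa [Algebra.algebraMap_eq_smul_one, map_smul, smul_eq_mul, mul_comm] at this

lemma exists_ringHom_of_mul_pow_mem {C : Type*} [CommRing C] (p : ℕ) [Fact p.Prime] [CharP R p]
    {c : R} [Algebra (ℕ → R) C] [IsLocalization.Away (fun _ : ℕ => c) C]
    (hc : ∀ e, c * u ^ p ^ e ∈ powersIdeal g (p ^ e)) :
    ∃ f : GenericForcingAlgebra g u →+* C,
      ∀ r, f (algebraMap R _ r) = algebraMap (ℕ → R) C fun e => r ^ p ^ e := by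
  let φ : R →+* C := (algebraMap (ℕ → R) C).comp (RingHom.pi fun e => iterateFrobenius R p e)
  have φ_apply (r : R) : φ r = algebraMap (ℕ → R) C fun e => r ^ p ^ e := by
    simp only [φ, RingHom.comp_apply]
    congr 1
  choose a ha using fun e => Ideal.mem_span_range_iff_exists_fun.mp (hc e)
  let z (l : Fin n) : C := IsLocalization.mk' C (fun e => a e l)
    (⟨fun _ => c, Submonoid.mem_powers _⟩ : Submonoid.powers fun _ : ℕ => c)
  have z_spec (l : Fin n) : algebraMap (ℕ → R) C (fun _ => c) * z l =
      algebraMap (ℕ → R) C fun e => a e l :=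
    IsLocalization.mk'_spec' C (fun e => a e l)
      (⟨fun _ => c, Submonoid.mem_powers _⟩ : Submonoid.powers fun _ : ℕ => c)
  have eval_eq : φ u = ∑ l, z l * φ (g l) := by
    apply (IsLocalization.Away.algebraMap_isUnit (S := C) fun _ : ℕ => c).mul_left_cancel
    simp only [Finset.mul_sum, ← mul_assoc, z_spec, φ_apply, ← map_mul, ← map_sum]
    congr 1
    ext e
    simp [ha e]
  have le_ker : Ideal.span {MvPolynomial.C u - ∑ l, MvPolynomial.X l * MvPolynomial.C (g l)} ≤
      RingHom.ker (MvPolynomial.eval₂Hom φ z) := by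
    rw [Ideal.span_singleton_le_iff_mem, RingHom.mem_ker]
    simp [eval_eq]
  exact ⟨Ideal.Quotient.lift _ (MvPolynomial.eval₂Hom φ z) fun s hs => le_ker hs,
    fun r => (MvPolynomial.eval₂Hom_C φ z r).trans (φ_apply r)⟩

lemma IsCyclicChain.exists_mem_partialSpan_of_ringHom {ι S C : Type*} [Finite ι] [CommRing S]
    [CommRing C] {c : R} [Algebra (ℕ → R) C] [IsLocalization.Away (fun _ : ℕ => c) C]
    {x : ι → R} {y : ι → S} {q : ℕ → ℕ} {f : S →+* C}
    (hf : ∀ i, f (y i) = algebraMap (ℕ → R) C fun e => x i ^ q e) {m : ℕ → S} {t h : ℕ}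
    (H : IsCyclicChain (Ideal.span (Set.range y)) (powersIdeal y t) m h) :
    ∃ N, ∀ e, ∃ m : ℕ → R,
      (∀ j < h, ∀ i, c ^ N * x i ^ q e * m j ∈ partialSpan (powersIdeal x (t * q e)) m j) ∧
      c ^ N ∈ partialSpan (powersIdeal x (t * q e)) m h := by
  have H' := H.map f
  rw [Ideal.map_span, ← Set.range_comp, map_powersIdeal] at H'
  simp only [Function.comp_def, hf] at H'
  rw [← map_powersIdeal] at H'
  obtain ⟨N, M, colon, mem⟩ := H'.exists_pow_mul_mem_partialSpan (c := fun _ : ℕ => c)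
  have map_eval (e : ℕ) : (powersIdeal (fun i e => x i ^ q e) t).map (Pi.evalRingHom _ e) =
      powersIdeal x (t * q e) := by
    rw [map_powersIdeal, powersIdeal, powersIdeal, mul_comm]
    simp only [Pi.evalRingHom_apply, pow_mul]
  refine ⟨N, fun e => ⟨fun j => M j e, fun j hj i => ?_, ?_⟩⟩
  · have := Ideal.mem_map_of_mem (Pi.evalRingHom _ e) (colon j hj i)
    rwa [map_partialSpan, map_eval] at this
  · have := Ideal.mem_map_of_mem (Pi.evalRingHom _ e) mem
    rwa [map_partialSpan, map_eval] at this

end Multiplier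

section QSequence

variable {R : Type u} [CommRing R] {n d : ℕ} {g : Fin n → R} {u : R}

lemma isQSequence_of_mul_pow_mem [IsNoetherianRing R] [IsLocalRing R] (p : ℕ) [Fact p.Prime]
    [CharP R p] (hd : ringKrullDim R = d) {x : Fin d → R}
    (hx : (Ideal.span (Set.range x)).radical = IsLocalRing.maximalIdeal R) {c : R}
    (hc : c ∈ nonZeroDivisors R) (hmul : ∀ e, c * u ^ p ^ e ∈ powersIdeal g (p ^ e))
    (hmon : MonomialProperty fun i => algebraMap R (GenericForcingAlgebra g u) (x i)) :
    IsQSequence fun i => algebraMap R (GenericForcingAlgebra g u) (x i) := by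
  refine ⟨hmon.span_ne_top, fun t ht => ?_⟩
  obtain ⟨f, hf⟩ := exists_ringHom_of_mul_pow_mem
    (C := Localization.Away fun _ : ℕ => c) p hmul
  rw [← Nat.cast_pow]
  refine le_quasilength_quotient_iff.mpr fun h m H => ?_
  obtain ⟨N, hN⟩ := IsCyclicChain.exists_mem_partialSpan_of_ringHom (c := c) (q := fun e => p ^ e)
    (fun i => hf (x i)) H
  have tendsto_pow : Filter.Tendsto (fun e => p ^ e) Filter.atTop Filter.atTop :=
    tendsto_pow_atTop_atTop_of_one_lt (Fact.out : p.Prime).one_lt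
  exact pow_le_of_frequently_mem_partialSpan hd hx hmon.of_map (pow_mem hc N) ht
    (tendsto_pow.frequently (Filter.Frequently.of_forall hN))

end QSequence

/-! ### Coefficient fields -/

section CoefficientField

open Polynomial

variable {K B : Type*} [Field K] [CommRing B] {p : ℕ} {I : Ideal B} {f : K →+* B ⧸ I}

/-- `G` is the graph of a lift of `f` to `B`, defined on a subfield of `K` containing `K ^ p`. It
is encoded as a subring of `K × B` so that Zorn's lemma can be applied to inclusions; on `K ^ p` the
lift sends `a ^ p` to the `p`-th power of an arbitrary preimage of `f a`. -/
structure IsPartialLift (p : ℕ) (f : K →+* B ⧸ I) (G : Subring (K × B)) : Prop where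
  pow_mem : ∀ z : K × B, f z.1 = Ideal.Quotient.mk I z.2 → z ^ p ∈ G
  map_fst : ∀ z ∈ G, f z.1 = Ideal.Quotient.mk I z.2
  eq_zero : ∀ b, ((0, b) : K × B) ∈ G → b = 0

variable {G : Subring (K × B)}

lemma IsPartialLift.ext (hG : IsPartialLift p f G) {z w : K × B} (hz : z ∈ G) (hw : w ∈ G)
    (h : z.1 = w.1) : z = w := by
  have sub_eq : z - w = (0, z.2 - w.2) := Prod.ext (sub_eq_zero.mpr h) rfl
  exact Prod.ext h (sub_eq_zero.mp (hG.eq_zero _ (sub_eq ▸ sub_mem hz hw)))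

lemma IsPartialLift.isField (hp : p ≠ 0) (hG : IsPartialLift p f G) : IsField G := by
  refine ⟨⟨0, 1, fun h => ?_⟩, mul_comm, fun {z} hne => ?_⟩
  · exact zero_ne_one (congrArg (fun z : G => (z : K × B).1) h)
  · have z_ne : z.1.1 ≠ 0 := fun h => hne (Subtype.ext (hG.ext z.2 (zero_mem _) h))
    obtain ⟨b, hb⟩ := Ideal.Quotient.mk_surjective (f z.1.1⁻¹)
    let y : G := z ^ (p - 1) * ⟨_, hG.pow_mem (z.1.1⁻¹, b) hb.symm⟩
    refine ⟨y, Subtype.ext (hG.ext (z * y).2 (one_mem _) ?_)⟩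
    change z.1.1 * (z.1.1 ^ (p - 1) * z.1.1⁻¹ ^ p) = 1
    rw [← mul_assoc, mul_pow_sub_one hp, ← mul_pow, mul_inv_cancel₀ z_ne, one_pow]

variable [Fact p.Prime]

lemma exists_isPartialLift [CharP (K × B) p] (hI : I ^ 2 = ⊥) (f : K →+* B ⧸ I) :
    ∃ G, IsPartialLift p f G := by
  let E : Subring (K × B) := RingHom.eqLocus (f.comp (RingHom.fst K B))
    ((Ideal.Quotient.mk I).comp (RingHom.snd K B))
  refine ⟨E.map (frobenius (K × B) p), fun z hz => ⟨z, hz, rfl⟩, ?_, ?_⟩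
  · rintro _ ⟨z, hz, rfl⟩
    change f z.1 = Ideal.Quotient.mk I z.2 at hz
    change f (z.1 ^ p) = Ideal.Quotient.mk I (z.2 ^ p)
    rw [map_pow, map_pow, hz]
  · rintro b ⟨z, hz, hzb⟩
    change f z.1 = Ideal.Quotient.mk I z.2 at hz
    have fst_eq : z.1 = 0 := eq_zero_of_pow_eq_zero (congrArg Prod.fst hzb)
    rw [fst_eq, map_zero, eq_comm, Ideal.Quotient.eq_zero_iff_mem] at hz
    have snd_sq : z.2 ^ 2 = 0 := by simpa only [hI, Ideal.mem_bot] using Ideal.pow_mem_pow hz 2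
    exact (congrArg Prod.snd hzb).symm.trans
      (pow_eq_zero_of_le (Fact.out : p.Prime).two_le snd_sq)

lemma IsPartialLift.exists_mem_of_maximal [CharP K p] (hG : IsPartialLift p f G)
    (hmax : ∀ G', IsPartialLift p f G' → G ≤ G' → G' ≤ G) (a : K) : ∃ b, (a, b) ∈ G := by
  by_contra! hcon
  obtain ⟨b, hb⟩ := Ideal.Quotient.mk_surjective (f a)
  let c : G := ⟨_, hG.pow_mem (a, b) hb.symm⟩
  let : Field G := (hG.isField (Fact.out : p.Prime).ne_zero).toField
  have irred : Irreducible (X ^ p - C c : G[X]) := by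
    refine X_pow_sub_C_irreducible_of_prime Fact.out fun z hz => hcon z.1.2 ?_
    have : z.1.1 = a := frobenius_inj K p (congrArg (fun z : G => z.1.1) hz)
    rw [← this]
    exact z.2
  have : Fact (Irreducible (X ^ p - C c : G[X])) := ⟨irred⟩
  let F : AdjoinRoot (X ^ p - C c : G[X]) →+* K × B := AdjoinRoot.lift G.subtype (a, b) <| by
    simp only [eval₂_sub, eval₂_pow, eval₂_X, eval₂_C]
    exact sub_self _
  have le_range : G ≤ F.range := fun z hz => ⟨AdjoinRoot.of _ ⟨z, hz⟩, AdjoinRoot.lift_of _⟩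
  refine hcon b (hmax F.range ⟨fun z hz => le_range (hG.pow_mem z hz), ?_, ?_⟩ le_range
    ⟨AdjoinRoot.root _, AdjoinRoot.lift_root _⟩)
  · rintro _ ⟨z, rfl⟩
    have : (f.comp (RingHom.fst K B)).comp F =
        ((Ideal.Quotient.mk I).comp (RingHom.snd K B)).comp F := by
      refine AdjoinRoot.ringHom_ext (RingHom.ext fun z => ?_) ?_
      · simpa [F] using hG.map_fst z z.2
      · simpa [F] using hb.symm
    exact RingHom.congr_fun this z
  · rintro b' ⟨z, hz⟩
    have : ((RingHom.fst K B).comp F) z = 0 := congrArg Prod.fst hz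
    rw [(map_eq_zero _).mp this, map_zero] at hz
    exact (congrArg Prod.snd hz).symm

lemma exists_maximal_isPartialLift [CharP (K × B) p] (hI : I ^ 2 = ⊥) (f : K →+* B ⧸ I) :
    ∃ G, Maximal (IsPartialLift p f) G := by
  have exists_upper_bound : ∀ c ⊆ {G | IsPartialLift p f G}, IsChain (· ≤ ·) c → ∀ G₀ ∈ c,
      ∃ G', IsPartialLift p f G' ∧ ∀ G ∈ c, G ≤ G' := by
    intro c hc hchain G₀ hG₀
    have mem_sSup {z} : z ∈ sSup c ↔ ∃ G ∈ c, z ∈ G :=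
      Subring.mem_sSup_of_directedOn ⟨G₀, hG₀⟩ hchain.directedOn
    refine ⟨sSup c, ⟨fun z hz => le_sSup hG₀ ((hc hG₀).pow_mem z hz), fun z hz => ?_,
      fun b hb => ?_⟩, fun G hG => le_sSup hG⟩
    · obtain ⟨G, hG, hzG⟩ := mem_sSup.mp hz
      exact (hc hG).map_fst z hzG
    · obtain ⟨G, hG, hbG⟩ := mem_sSup.mp hb
      exact (hc hG).eq_zero b hbG
  obtain ⟨G₀, hG₀⟩ := exists_isPartialLift (p := p) hI f
  obtain ⟨G, -, hG⟩ := zorn_le_nonempty₀ _ exists_upper_bound G₀ hG₀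
  exact ⟨G, hG⟩

lemma exists_ringHom_mk_comp_eq (p : ℕ) [Fact p.Prime] [CharP K p] [CharP (K × B) p]
    (hI : I ^ 2 = ⊥) (f : K →+* B ⧸ I) : ∃ g : K →+* B, (Ideal.Quotient.mk I).comp g = f := by
  obtain ⟨G, hG, hmax⟩ := exists_maximal_isPartialLift (p := p) hI f
  have bij : Function.Bijective ((RingHom.fst K B).comp G.subtype) := by
    refine ⟨fun z w h => Subtype.ext (hG.ext z.2 w.2 h), fun a => ?_⟩
    obtain ⟨b, hb⟩ := hG.exists_mem_of_maximal (fun G' hG' hle => hmax hG' hle) a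
    exact ⟨⟨_, hb⟩, rfl⟩
  let e : G ≃+* K := RingEquiv.ofBijective _ bij
  refine ⟨((RingHom.snd K B).comp G.subtype).comp e.symm, RingHom.ext fun a => ?_⟩
  exact (hG.map_fst _ (e.symm a).2).symm.trans (congrArg f (e.apply_symm_apply a))

lemma formallySmooth_zmod_field (K : Type u) [Field K] (p : ℕ) [Fact p.Prime]
    [Algebra (ZMod p) K] : Algebra.FormallySmooth (ZMod p) K := by
  refine Algebra.FormallySmooth.of_comp_surjective fun B _ _ I hI f => ?_
  have : CharP K p := charP_of_injective_algebraMap' (ZMod p) p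
  have : CharP (K × B) p :=
    charP_of_injective_algebraMap (algebraMap (ZMod p) (K × B)).injective p
  obtain ⟨g, hg⟩ := exists_ringHom_mk_comp_eq p hI f.toRingHom
  have comp_eq : g.comp (algebraMap (ZMod p) K) = algebraMap (ZMod p) B := Subsingleton.elim _ _
  exact ⟨{ g with commutes' := RingHom.congr_fun comp_eq }, AlgHom.ext (RingHom.congr_fun hg)⟩

lemma exists_ringHom_residue_comp_eq_id (R : Type u) [CommRing R] [IsLocalRing R]
    [IsAdicComplete (IsLocalRing.maximalIdeal R) R] (p : ℕ) [Fact p.Prime] [CharP R p] :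
    ∃ σ : IsLocalRing.ResidueField R →+* R, (IsLocalRing.residue R).comp σ = RingHom.id _ := by
  let : Algebra (ZMod p) R := ZMod.algebra R p
  have := formallySmooth_zmod_field (IsLocalRing.ResidueField R) p
  let f : IsLocalRing.ResidueField R →ₐ[ZMod p] R ⧸ IsLocalRing.maximalIdeal R :=
    { RingHom.id (IsLocalRing.ResidueField R) with commutes' := fun r => rfl }
  obtain ⟨g, hg⟩ := Algebra.FormallySmooth.exists_mkₐ_comp_eq_of_isAdicComplete f
  exact ⟨g.toRingHom, congrArg AlgHom.toRingHom hg⟩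

end CoefficientField

section Finiteness

open IsLocalRing

lemma isPrecomplete_of_finite {A M : Type*} [CommRing A] [AddCommGroup M] [Module A M]
    (I : Ideal A) [IsPrecomplete I A] [Module.Finite A M] : IsPrecomplete I M := by
  refine AdicCompletion.of_surjective_iff.mp fun y => ?_
  obtain ⟨t, rfl⟩ := AdicCompletion.ofTensorProduct_surjective_of_finite I M y
  induction t with
  | zero => exact ⟨0, by simp⟩
  | tmul a m =>
    obtain ⟨a, rfl⟩ := AdicCompletion.of_surjective I A a
    refine ⟨a • m, ?_⟩
    rw [AdicCompletion.ofTensorProduct_tmul, map_smul]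
    exact AdicCompletion.ext fun _ => rfl
  | add s t hs ht =>
    obtain ⟨a, ha⟩ := hs
    obtain ⟨b, hb⟩ := ht
    exact ⟨a + b, by rw [map_add, map_add, ha, hb]⟩

lemma finite_of_finite_quotient_smul_top {A M : Type*} [CommRing A] [AddCommGroup M] [Module A M]
    (I : Ideal A) [IsPrecomplete I A] [IsHausdorff I M]
    [Module.Finite A (M ⧸ (I • ⊤ : Submodule A M))] : Module.Finite A M := by
  obtain ⟨n, f, hf⟩ := Module.Finite.exists_fin' A (M ⧸ (I • ⊤ : Submodule A M))
  obtain ⟨g, hg⟩ := Module.projective_lifting_property _ f (Submodule.mkQ_surjective _)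
  have : IsPrecomplete I (Fin n → A) := isPrecomplete_of_finite I
  exact Module.Finite.of_surjective g (surjective_of_mkQ_comp_surjective (I := I) (hg ▸ hf))

lemma finite_of_isFiniteLength {A R M : Type*} [CommRing A] [CommRing R] [IsLocalRing R]
    [Algebra A R] (hA : Function.Surjective (algebraMap A (ResidueField R))) [AddCommGroup M]
    [Module R M] [modA : Module A M] [tower : IsScalarTower A R M] (hM : IsFiniteLength R M) :
    Module.Finite A M := by
  induction hM generalizing modA tower with
  | of_subsingleton => infer_instance
  | @of_simple_quotient M _ _ N simple _ ih =>
    obtain ⟨J, hJ, ⟨e⟩⟩ := isSimpleModule_iff_quot_maximal.mp simple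
    obtain rfl := eq_maximalIdeal hJ
    have : Module.Finite A (R ⧸ maximalIdeal R) :=
      .of_surjective (Algebra.linearMap A (ResidueField R)) hA
    have : Module.Finite A (M ⧸ N.restrictScalars A) := .equiv (e.restrictScalars A).symm
    have : Module.Finite A (N.restrictScalars A) := ih
    exact .of_submodule_quotient (N.restrictScalars A)

lemma exists_ringHom_mvPowerSeries {R K : Type*} [CommRing R] [IsLocalRing R]
    [IsAdicComplete (maximalIdeal R) R] [CommRing K] {ι : Type*} [Finite ι] (σ : K →+* R)
    (x : ι → R) (hx : ∀ i, x i ∈ maximalIdeal R) :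
    ∃ F : MvPowerSeries ι K →+* R,
      (∀ i, F (MvPowerSeries.X i) = x i) ∧ ∀ k, F (MvPowerSeries.C k) = σ k := by
  let : WithIdeal R := ⟨maximalIdeal R⟩
  have isAdic : IsAdic (maximalIdeal R) := rfl
  obtain ⟨_, _⟩ := (IsAdic.isAdicComplete_iff isAdic).mp ‹_›
  let : UniformSpace K := ⊥
  have : DiscreteUniformity K := ⟨rfl⟩
  have continuous : Continuous σ := continuous_of_discreteTopology
  have hasEval : MvPowerSeries.HasEval x := by
    refine ⟨fun i => WithIdeal.isTopologicallyNilpotent_of_mem (hx i), ?_⟩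
    rw [Filter.cofinite_eq_bot]
    exact Filter.tendsto_bot
  refine ⟨MvPowerSeries.eval₂Hom continuous hasEval, fun i => ?_, fun k => ?_⟩
  · rw [MvPowerSeries.coe_eval₂Hom, MvPowerSeries.eval₂_X]
  · rw [MvPowerSeries.coe_eval₂Hom, MvPowerSeries.eval₂_C]

lemma finite_of_radical_map_eq_maximalIdeal {A R : Type*} [CommRing A] [CommRing R]
    [IsLocalRing R] [IsNoetherianRing R] [Algebra A R]
    (hA : Function.Surjective (algebraMap A (ResidueField R))) (I : Ideal A) [IsPrecomplete I A]
    (hI : (I.map (algebraMap A R)).radical = maximalIdeal R) : Module.Finite A R := by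
  have isHausdorff : IsHausdorff (I.map (algebraMap A R)) R :=
    IsHausdorff.of_isLocalRing _ R fun h => by
      rw [h, Ideal.radical_top] at hI
      exact (maximalIdeal.isMaximal R).ne_top hI.symm
  have : IsHausdorff I R := IsHausdorff.map_algebraMap_iff.mp isHausdorff
  have : IsFiniteLength R (R ⧸ I.map (algebraMap A R)) :=
    Module.length_ne_top_iff.mp (colength_ne_top_of_radical_eq hI)
  have : Module.Finite A (R ⧸ I.map (algebraMap A R)) := finite_of_isFiniteLength hA this
  have : Module.Finite A (R ⧸ (I • ⊤ : Submodule A R)) := by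
    rw [Ideal.smul_top_eq_map]
    exact this
  exact finite_of_finite_quotient_smul_top I

end Finiteness

/-! ### Nonzero functionals -/

section PowerSeriesDual

open MvPowerSeries

variable {K : Type*} {ι : Type*}

lemma mem_span_range_X_of_constantCoeff_eq_zero [CommRing K] [Finite ι] {a : MvPowerSeries ι K}
    (ha : constantCoeff a = 0) : a ∈ Ideal.span (Set.range X) := by
  let e := (toAdicCompletionAlgEquiv ι K).toRingEquiv
  let I := MvPolynomial.idealOfVars ι K
  have map_eq : (Ideal.span (Set.range X)).map e = I.map (algebraMap _ (AdicCompletion I _)) := by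
    simp_rw [I, MvPolynomial.idealOfVars, Ideal.map_span, ← Set.range_comp]
    congr 2
    ext1
    simp [e, AdicCompletion.algebraMap_apply, ← MvPolynomial.coe_X, toAdicCompletion_coe]
  have trunc_mem : truncTotal 1 a ∈ I := by
    rw [← pow_one I, MvPolynomial.mem_pow_idealOfVars_iff']
    intro α hα
    obtain rfl : α = 0 := (Finsupp.degree_eq_zero_iff α).mp (by lia)
    rw [coeff_truncTotal _ hα, coeff_zero_eq_constantCoeff_apply, ha]
  have mem_map : e a ∈ (Ideal.span (Set.range X)).map e := by
    rw [map_eq, ← AdicCompletion.ker_evalOneₐ_eq_map I (MvPolynomial.idealOfVars_fg ι K)]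
    exact Ideal.Quotient.eq_zero_iff_mem.mpr trunc_mem
  exact (Ideal.mem_map_of_equiv e _).mp mem_map |>.elim fun b hb => e.injective hb.2 ▸ hb.1

lemma map_smul_of_map_X_smul [CommRing K] [Finite ι] {M N : Type*} [AddCommGroup M] [Module K M]
    [Module (MvPowerSeries ι K) M] [IsScalarTower K (MvPowerSeries ι K) M] [AddCommGroup N]
    [Module K N] [Module (MvPowerSeries ι K) N] [IsScalarTower K (MvPowerSeries ι K) N]
    [IsHausdorff (Ideal.span (Set.range (X : ι → MvPowerSeries ι K))) N] (φ : M →ₗ[K] N)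
    (hφ : ∀ i m, φ ((X i : MvPowerSeries ι K) • m) = (X i : MvPowerSeries ι K) • φ m)
    (a : MvPowerSeries ι K) (m : M) : φ (a • m) = a • φ m := by
  let A := MvPowerSeries ι K
  let I : Ideal A := Ideal.span (Set.range X)
  have defect_mem (n : ℕ) :
      ∀ (a : A) m, φ (a • m) - a • φ m ∈ I ^ n • (⊤ : Submodule A N) := by
    induction n with
    | zero => simp
    | succ n ih =>
      intro a m
      have := Fintype.ofFinite ι
      obtain ⟨c, hc⟩ := Ideal.mem_span_range_iff_exists_fun.mp
        (mem_span_range_X_of_constantCoeff_eq_zero (a := a - C (constantCoeff a)) (by simp))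
      have constant_smul : φ ((C (constantCoeff a) : A) • m) = (C (constantCoeff a) : A) • φ m := by
        simp only [c_eq_algebraMap, algebraMap_smul, map_smul]
      have defect_eq : φ (a • m) - a • φ m = ∑ i, (X i : A) • (φ (c i • m) - c i • φ m) := by
        conv_lhs => rw [← add_sub_cancel (C (constantCoeff a)) a, ← hc]
        simp only [add_smul, Finset.sum_smul, map_add, map_sum, constant_smul, mul_comm (c _),
          mul_smul, hφ, smul_sub, Finset.sum_sub_distrib, add_sub_add_left_eq_sub]
      rw [defect_eq, pow_succ', ← smul_eq_mul, Submodule.smul_assoc]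
      exact sum_mem fun i _ =>
        Submodule.smul_mem_smul (Ideal.subset_span (Set.mem_range_self i)) (ih (c i) m)
  rw [← sub_eq_zero]
  refine IsHausdorff.haus (I := I) ‹_› _ fun n => SModEq.zero.mpr (defect_mem n a m)

lemma MonomialProperty.exists_compatible_linearMap [Field K] {S : Type*} [CommRing S] [Algebra K S]
    [Fintype ι] {x : ι → S} (hx : MonomialProperty x) :
    ∃ ψ : ℕ → S →ₗ[K] K, (∀ k s, ψ (k + 1) ((∏ i, x i) * s) = ψ k s) ∧
      (∀ k, ∀ s ∈ powersIdeal x (k + 1), ψ k s = 0) ∧ ψ 0 1 ≠ 0 := by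
  let w := ∏ i, x i
  let W := Localization.Away w
  let y : W := IsLocalization.Away.invSelf w
  let δ (k : ℕ) : S →ₗ[K] W :=
    LinearMap.mulRight K (y ^ (k + 1)) ∘ₗ (IsScalarTower.toAlgHom K S W).toLinearMap
  have δ_apply (k : ℕ) (s : S) : δ k s = algebraMap S W s * y ^ (k + 1) := rfl
  have mul_y : algebraMap S W w * y = 1 := IsLocalization.Away.mul_invSelf w
  have δ_succ (k : ℕ) (s : S) : δ (k + 1) (w * s) = δ k s := by
    rw [δ_apply, δ_apply, map_mul, pow_succ y (k + 1)]
    linear_combination algebraMap S W s * y ^ (k + 1) * mul_y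
  let N (k : ℕ) : Submodule K W := ((powersIdeal x (k + 1)).restrictScalars K).map (δ k)
  have N_mono : Monotone N := monotone_nat_of_le_succ fun k => by
    rintro _ ⟨s, hs, rfl⟩
    refine ⟨w * s, ?_, δ_succ k s⟩
    change w * s ∈ powersIdeal x (k + 1 + 1)
    simpa only [pow_one] using prod_pow_mul_mem_powersIdeal hs 1
  have δ_one_notMem : δ 0 1 ∉ ⨆ k, N k := by
    intro h
    obtain ⟨k, s, hs, hsk⟩ := (Submodule.mem_iSup_of_directed N N_mono.directed_le).mp h
    rw [δ_apply, δ_apply, map_one, one_mul, zero_add, pow_one] at hsk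
    have map_s : algebraMap S W s = algebraMap S W (w ^ k) := calc
      _ = algebraMap S W s * (algebraMap S W w * y) ^ (k + 1) := by rw [mul_y, one_pow, mul_one]
      _ = algebraMap S W w ^ k * (algebraMap S W w * y) := by
        rw [mul_pow, mul_left_comm, hsk, pow_succ, mul_assoc]
      _ = _ := by rw [mul_y, mul_one, map_pow]
    obtain ⟨⟨_, l, rfl⟩, hl⟩ := (IsLocalization.eq_iff_exists (Submonoid.powers w) W).mp map_s
    change w ^ l * s = w ^ l * w ^ k at hl
    refine hx (l + k) ?_
    rw [pow_add, ← hl, show l + k + 1 = k + 1 + l by ring]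
    exact prod_pow_mul_mem_powersIdeal hs l
  obtain ⟨Ψ, hΨ, hN⟩ := Submodule.exists_le_ker_of_notMem δ_one_notMem
  exact ⟨fun k => Ψ ∘ₗ δ k, fun k s => congrArg Ψ (δ_succ k s),
    fun k s hs => hN (Submodule.mem_iSup_of_mem k ⟨s, hs, rfl⟩), hΨ⟩

lemma prod_pow_degree_succ_sub_mul {S : Type*} [CommMonoid S] [Fintype ι]
    (x : ι → S) (i : ι) (β : ι →₀ ℕ) :
    (∏ j, x j ^ (β.degree + 1 - (Finsupp.single i 1 + β : ι →₀ ℕ) j)) * x i =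
      (∏ j, x j) * ∏ j, x j ^ (β.degree - β j) := by
  classical
  have prod_single : ∏ j, x j ^ (Finsupp.single i 1 : ι →₀ ℕ) j = x i := by
    simp [Finsupp.single_apply]
  conv_lhs => rw [← prod_single]
  simp only [← Finset.prod_mul_distrib, ← pow_add, ← pow_succ']
  refine Finset.prod_congr rfl fun j _ => congrArg (x j ^ ·) ?_
  have := Finsupp.le_degree j β
  have := (Finsupp.le_degree j (Finsupp.single i 1)).trans_eq (Finsupp.degree_single i 1)
  rw [Finsupp.add_apply]
  lia

lemma MonomialProperty.exists_linearMap_mvPowerSeries [Field K] {S : Type*} [CommRing S]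
    [Algebra K S] [Fintype ι] {x : ι → S} (hx : MonomialProperty x) :
    ∃ φ : S →ₗ[K] MvPowerSeries ι K, (∀ i s, φ (x i * s) = X i * φ s) ∧ φ 1 ≠ 0 := by
  classical
  obtain ⟨ψ, ψ_succ, ψ_eq_zero, ψ_one⟩ := hx.exists_compatible_linearMap (K := K)
  let φ : S →ₗ[K] MvPowerSeries ι K := LinearMap.pi fun α =>
    ψ α.degree ∘ₗ LinearMap.mulLeft K (∏ i, x i ^ (α.degree - α i))
  have coeff_φ (α : ι →₀ ℕ) (s : S) :
      coeff α (φ s) = ψ α.degree ((∏ i, x i ^ (α.degree - α i)) * s) := rfl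
  refine ⟨φ, fun i s => ?_, fun h => ψ_one ?_⟩
  · ext α
    rw [coeff_φ]
    by_cases hi : α i = 0
    · rw [X, coeff_monomial_mul, if_neg (by simp [Finsupp.single_le_iff, hi])]
      refine ψ_eq_zero _ _ ?_
      rw [← Finset.mul_prod_erase _ _ (Finset.mem_univ i), hi, tsub_zero, mul_mul_mul_comm,
        ← pow_succ]
      exact Ideal.mul_mem_right _ _ (pow_mem_powersIdeal x i _)
    · obtain ⟨β, rfl⟩ : ∃ β, α = Finsupp.single i 1 + β :=
        exists_add_of_le (Finsupp.single_le_iff.mpr (by lia))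
      have degree_eq : (Finsupp.single i 1 + β).degree = β.degree + 1 := by
        rw [map_add, Finsupp.degree_single, add_comm]
      rw [X, coeff_add_monomial_mul, one_mul, coeff_φ, degree_eq, ← ψ_succ β.degree, ← mul_assoc,
        ← mul_assoc, prod_pow_degree_succ_sub_mul]
  · simpa [h] using (coeff_φ 0 1).symm

lemma MonomialProperty.exists_linearMap_one_ne_zero [Field K] [Fintype ι] {S : Type*} [CommRing S]
    [Algebra (MvPowerSeries ι K) S]
    (h : MonomialProperty fun i => algebraMap (MvPowerSeries ι K) S (X i)) :
    ∃ φ : S →ₗ[MvPowerSeries ι K] MvPowerSeries ι K, φ 1 ≠ 0 := by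
  let : Algebra K S := ((algebraMap (MvPowerSeries ι K) S).comp C).toAlgebra
  have : IsScalarTower K (MvPowerSeries ι K) S := .of_algebraMap_eq fun _ => rfl
  obtain ⟨φ, φ_X, φ_one⟩ := h.exists_linearMap_mvPowerSeries (K := K)
  have map_smul (a : MvPowerSeries ι K) (s : S) : φ (a • s) = a • φ s :=
    map_smul_of_map_X_smul φ (fun i s => by rw [Algebra.smul_def, φ_X, smul_eq_mul]) a s
  exact ⟨{ φ with map_smul' := map_smul }, φ_one⟩

end PowerSeriesDual

section Dual

lemma exists_linearMap_apply_ne_zero {R : Type*} [CommRing R] [IsDomain R] {D : Type*}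
    [AddCommGroup D] [Module R D] [Module.FinitePresentation R D] {v : D}
    (hv : ∀ r : R, r ≠ 0 → r • v ≠ 0) : ∃ f : D →ₗ[R] R, f v ≠ 0 := by
  let L := Localization (nonZeroDivisors R)
  let toLocalized := LocalizedModule.mkLinearMap (nonZeroDivisors R) D
  have notMem_bot : toLocalized v ∉ (⊥ : Submodule L (LocalizedModule (nonZeroDivisors R) D)) := by
    intro h
    obtain ⟨c, hc⟩ := (IsLocalizedModule.eq_zero_iff (nonZeroDivisors R) toLocalized).mp h
    exact hv c (nonZeroDivisors.ne_zero c.2) hc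
  let : Field L := inferInstanceAs (Field (FractionRing R))
  obtain ⟨g, hg, -⟩ := Submodule.exists_le_ker_of_notMem notMem_bot
  obtain ⟨f, s, hf⟩ := Module.FinitePresentation.exists_lift_of_isLocalizedModule
    (nonZeroDivisors R) (Algebra.linearMap R L) (g.restrictScalars R ∘ₗ toLocalized)
  refine ⟨f, fun h => hg ?_⟩
  have smul_eq_zero : s • g (toLocalized v) = 0 := by
    simpa [h] using (DFunLike.congr_fun hf v).symm
  exact (IsLocalization.map_units L s).smul_eq_zero.mp
    ((algebraMap_smul L (s : R) (g (toLocalized v))).trans smul_eq_zero)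

lemma exists_linearMap_apply_ne_zero_of_finite {A R M : Type*} [CommRing A] [IsDomain A]
    [IsNoetherianRing A] [CommRing R] [IsDomain R] [IsNoetherianRing R] [Algebra A R]
    [Module.Finite A R] [AddCommGroup M] [Module R M] [Module A M] [IsScalarTower A R M]
    {φ : M →ₗ[A] A} {v : M} (hφ : φ v ≠ 0) : ∃ f : M →ₗ[R] R, f v ≠ 0 := by
  let restrict : M →ₗ[A] R →ₗ[A] A := (Algebra.lsmul A A M).toLinearMap.flip.compr₂ φ
  let Q : Submodule R M :=
    { restrict.ker with
      smul_mem' := fun r s hs => LinearMap.ext fun r' => by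
        change φ (r' • r • s) = 0
        rw [smul_smul]
        exact DFunLike.congr_fun hs (r' * r) }
  have : Module.Finite A (M ⧸ Q) :=
    .equiv (LinearMap.quotKerEquivRange restrict).symm
  have : Module.Finite R (M ⧸ Q) := .of_restrictScalars_finite A R _
  have := Module.finitePresentation_of_finite R (M ⧸ Q)
  obtain ⟨f, hf⟩ := exists_linearMap_apply_ne_zero (R := R) (v := Q.mkQ v) fun r hr h => by
    obtain ⟨a, ha, r', hr'⟩ := (Algebra.IsIntegral.isIntegral (R := A) r).isAlgebraic
      |>.exists_nonzero_dvd (mem_nonZeroDivisors_of_ne_zero hr)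
    rw [← map_smul, Submodule.mkQ_apply, Submodule.Quotient.mk_eq_zero] at h
    have : φ (r' • r • v) = 0 := DFunLike.congr_fun h r'
    rw [smul_smul, mul_comm, ← hr', algebraMap_smul, map_smul, smul_eq_zero] at this
    exact this.elim ha hφ
  exact ⟨f ∘ₗ Q.mkQ, hf⟩

lemma exists_finite_ringHom_mvPowerSeries (R : Type u) [CommRing R] [IsNoetherianRing R]
    [IsLocalRing R] [IsAdicComplete (IsLocalRing.maximalIdeal R) R] (p : ℕ) [Fact p.Prime]
    [CharP R p] {ι : Type*} [Finite ι] {x : ι → R}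
    (hx : (Ideal.span (Set.range x)).radical = IsLocalRing.maximalIdeal R) :
    ∃ F : MvPowerSeries ι (IsLocalRing.ResidueField R) →+* R,
      F.Finite ∧ ∀ i, F (MvPowerSeries.X i) = x i := by
  obtain ⟨σ, hσ⟩ := exists_ringHom_residue_comp_eq_id R p
  obtain ⟨F, F_X, F_C⟩ := exists_ringHom_mvPowerSeries σ x fun i =>
    hx ▸ Ideal.le_radical (Ideal.subset_span (Set.mem_range_self i))
  let := F.toAlgebra
  have map_span : (Ideal.span (Set.range MvPowerSeries.X)).map F = Ideal.span (Set.range x) := by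
    rw [Ideal.map_span, ← Set.range_comp, ← funext F_X]
    rfl
  exact ⟨F, finite_of_radical_map_eq_maximalIdeal
    (fun k => ⟨MvPowerSeries.C k, (congrArg _ (F_C k)).trans (DFunLike.congr_fun hσ k)⟩)
    (Ideal.span (Set.range MvPowerSeries.X)) (map_span ▸ hx), F_X⟩

lemma exists_linearMap_one_ne_zero_of_monomialProperty {R : Type u} {S : Type*} [CommRing R]
    [IsNoetherianRing R] [IsLocalRing R] [IsDomain R]
    [IsAdicComplete (IsLocalRing.maximalIdeal R) R] (p : ℕ) [Fact p.Prime] [CharP R p] [CommRing S]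
    [Algebra R S] {ι : Type*} [Fintype ι] {x : ι → R}
    (hx : (Ideal.span (Set.range x)).radical = IsLocalRing.maximalIdeal R)
    (h : MonomialProperty fun i => algebraMap R S (x i)) : ∃ f : S →ₗ[R] R, f 1 ≠ 0 := by
  obtain ⟨F, finite, F_X⟩ := exists_finite_ringHom_mvPowerSeries R p hx
  algebraize [F, (algebraMap R S).comp F]
  have : MonomialProperty fun i => algebraMap (MvPowerSeries ι (IsLocalRing.ResidueField R)) S
      (MvPowerSeries.X i) := by
    convert h using 3 with i
    exact congrArg (algebraMap R S) (F_X i)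
  obtain ⟨φ, hφ⟩ := this.exists_linearMap_one_ne_zero
  have : IsDomain (MvPowerSeries ι (IsLocalRing.ResidueField R)) := NoZeroDivisors.to_isDomain _
  exact exists_linearMap_apply_ne_zero_of_finite hφ

end Dual

lemma isQSequence_of_nontrivial_localCohomology {R : Type u} [CommRing R] [IsNoetherianRing R]
    [IsLocalRing R] [IsDomain R] [IsAdicComplete (IsLocalRing.maximalIdeal R) R] (p : ℕ)
    [Fact p.Prime] [CharP R p] {d n : ℕ} (hd : ringKrullDim R = d) {g : Fin n → R} {u : R}
    (H : Nontrivial ((localCohomology (IsLocalRing.maximalIdeal R) d).obj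
      (ModuleCat.of R (GenericForcingAlgebra g u)))) {x : Fin d → R}
    (hx : (Ideal.span (Set.range x)).radical = IsLocalRing.maximalIdeal R) :
    IsQSequence fun i => algebraMap R (GenericForcingAlgebra g u) (x i) := by
  let S := GenericForcingAlgebra g u
  have : Nontrivial S := by
    by_contra trivial_S
    rw [not_nontrivial_iff_subsingleton] at trivial_S
    rw [← not_subsingleton_iff_nontrivial,
      subsingleton_localCohomology_iff_forall_prod_pow_smul_mem hx] at H
    refine H fun k m => ⟨0, ?_⟩
    rw [Subsingleton.elim (α := S) ((∏ i, x i) ^ 0 • m) 0]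
    exact zero_mem _
  have : CharP S p := (CharP.charP_iff_prime_eq_zero Fact.out).mpr <| by
    rw [← map_natCast (algebraMap R S), CharP.cast_eq_zero, map_zero]
  have monomial := monomialProperty_of_nontrivial_localCohomology (S := S) p hx H
  obtain ⟨f, hf⟩ := exists_linearMap_one_ne_zero_of_monomialProperty p hx monomial
  exact isQSequence_of_mul_pow_mem p hd hx (mem_nonZeroDivisors_of_ne_zero hf)
    (apply_one_mul_pow_mem p f algebraMap_mem_powersIdeal_one) monomial

end ForcingAlgebra

open ForcingAlgebra

/-- Let `(R,m)` be a `d`-dimensional Noetherian complete local domain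
of prime characteristic `p > 0`, `I = (g₁,…,g_n)` an ideal, `u ∈ R`, and
`S = R[Z₁,…,Z_n]/(u − Σ Z_l g_l)` the generic forcing algebra. Then `H^d_m(S) ≠ 0`
if and only if the image in `S` of every system of parameters of `R` is a Q-sequence. -/
theorem genericForcingAlgebra_localCohomology_ne_zero_iff
    (R : Type u) [CommRing R] [IsNoetherianRing R] [IsLocalRing R] [IsDomain R]
    [IsAdicComplete (IsLocalRing.maximalIdeal R) R]
    (p : ℕ) (hp : p.Prime) [CharP R p]
    (d : ℕ) (hd : ringKrullDim R = d)
    (n : ℕ) (g : Fin n → R) (u : R) :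
    (Nontrivial ((localCohomology (IsLocalRing.maximalIdeal R) d).obj
        (ModuleCat.of R (MvPolynomial (Fin n) R ⧸
          Ideal.span {MvPolynomial.C u -
            ∑ l : Fin n, MvPolynomial.X l * MvPolynomial.C (g l)})))) ↔
    (∀ x : Fin d → R,
      (Ideal.span (Set.range x)).radical = IsLocalRing.maximalIdeal R →
      IsQSequence (fun i => algebraMap R (MvPolynomial (Fin n) R ⧸
        Ideal.span {MvPolynomial.C u -
          ∑ l : Fin n, MvPolynomial.X l * MvPolynomial.C (g l)}) (x i))) := by
  have : Fact p.Prime := ⟨hp⟩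
  refine ⟨fun H x hx => ?_, fun H => ?_⟩
  · exact isQSequence_of_nontrivial_localCohomology p hd H hx
  · obtain ⟨x, hx⟩ := exists_radical_span_eq_maximalIdeal hd
    exact nontrivial_localCohomology_of_monomialProperty hx (H x hx).monomialProperty
end
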